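/- arXiv:1311.2863 — 2 statements merged into one kernel-verified Lean document; each statement's English description precedes it below -/
import Mathlib

section
/- Let D be an unbounded c-John domain in ℝⁿ, n ≥ 2, and let τ, δ ∈ (0,1) and 1 ≤ p < n/δ be given. Then there is a constant C = C(δ, τ, p, n, c) > 0 such that the fractional Sobolev inequality ∫_D |u(x)|^{np/(n−δp)} dx ≤ C |u|_{W^{δ,p}_τ(D)}^{np/(n−δp)} holds for each u ∈ Ẇ^{δ,p}_τ(D) having compact support in D. -/
open MeasureTheory Metric Set
open scoped ENNReal NNReal BigOperators

noncomputable section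

/-- Euclidean `n`-space. -/
abbrev Eucl (n : ℕ) : Type := EuclideanSpace ℝ (Fin n)

/-- `D` is a `c`-John domain (bounded or unbounded): an open connected set such that each
pair of points can be joined by a rectifiable curve, parametrized by arc length
(formalized as a `1`-Lipschitz parametrization on `[0, ℓ]`), along which
`dist(γ t, ∂D) ≥ min{t, ℓ - t}/c`. -/
def IsJohnDomain (n : ℕ) (c : ℝ) (D : Set (Eucl n)) : Prop :=
  IsOpen D ∧ IsConnected D ∧
    ∀ x₁ ∈ D, ∀ x₂ ∈ D, ∃ ℓ : ℝ, 0 ≤ ℓ ∧ ∃ γ : ℝ → Eucl n,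
      γ 0 = x₁ ∧ γ ℓ = x₂ ∧ (∀ t ∈ Icc (0:ℝ) ℓ, γ t ∈ D) ∧
      LipschitzOnWith 1 γ (Icc 0 ℓ) ∧
      ∀ t ∈ Icc (0:ℝ) ℓ, min t (ℓ - t) / c ≤ infDist (γ t) (frontier D)

/-- The ball `B(x, τ·dist(x, ∂G))`; by convention, if `∂G = ∅` (i.e. `G = ℝⁿ`)
it is all of `ℝⁿ`. -/
def tauBall (n : ℕ) (τ : ℝ) (G : Set (Eucl n)) (x : Eucl n) : Set (Eucl n) :=
  {y : Eucl n | edist x y < ENNReal.ofReal τ * EMetric.infEdist x (frontier G)}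

/-- The fractional kernel `|u x - u y|^p / |x - y|^(n + δp)` as an extended real. -/
def fracKernel (n : ℕ) (δ p : ℝ) (u : Eucl n → ℝ) (x y : Eucl n) : ℝ≥0∞ :=
  ENNReal.ofReal (|u x - u y| ^ p / dist x y ^ ((n : ℝ) + δ * p))

/-- The `p`-th power of the seminorm `|u|_{W^{δ,p}_τ(G)}`. -/
def fracEnergyTau (n : ℕ) (δ τ p : ℝ) (G : Set (Eucl n)) (u : Eucl n → ℝ) : ℝ≥0∞ :=
  ∫⁻ x in G, ∫⁻ y in tauBall n τ G x, fracKernel n δ p u x y ∂volume ∂volume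

/-- The `p`-th power of the seminorm `|u|_{W^{δ,p}(G)}`. -/
def fracEnergy (n : ℕ) (δ p : ℝ) (G : Set (Eucl n)) (u : Eucl n → ℝ) : ℝ≥0∞ :=
  ∫⁻ x in G, ∫⁻ y in G, fracKernel n δ p u x y ∂volume ∂volume

/-- The fractional `(δ,p)`-capacity of a compact set `K ⊆ G`:
`inf |u|_{W^{δ,p}(G)}^p` over `u ∈ C₀(G)` with `u ≥ 1` on `K`. -/
def fracCap (n : ℕ) (δ p : ℝ) (K G : Set (Eucl n)) : ℝ≥0∞ :=
  ⨅ (u : Eucl n → ℝ) (_ : Continuous u) (_ : HasCompactSupport u) (_ : tsupport u ⊆ G)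
    (_ : ∀ x ∈ K, 1 ≤ u x), fracEnergy n δ p G u

/-- The fractional `(δ,q,p)`-Hardy inequality holds in `G` with constant `C`. -/
def HasFracHardy (n : ℕ) (δ p q C : ℝ) (G : Set (Eucl n)) : Prop :=
  ∀ u : Eucl n → ℝ, Continuous u → HasCompactSupport u → tsupport u ⊆ G →
    (∫⁻ x in G, ENNReal.ofReal
        (|u x| ^ q / infDist x (frontier G) ^ (q * (δ + n * (1/q - 1/p)))) ∂volume)
      ≤ ENNReal.ofReal C * fracEnergy n δ p G u ^ (q / p)

/-- The closed axis-parallel cube with center `z` and half side length `r`. -/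
def cube (n : ℕ) (z : Eucl n) (r : ℝ) : Set (Eucl n) :=
  {x : Eucl n | ∀ i, |x i - z i| ≤ r}

/-- The quantity `|Q|^(-1-δ/n) ∫_Q |u - u_Q|` for the cube `Q = cube n z r`. -/
def aTerm (n : ℕ) (δ : ℝ) (u : Eucl n → ℝ) (z : Eucl n) (r : ℝ) : ℝ :=
  ((volume (cube n z r)).toReal) ^ (-(1:ℝ) - δ / n) *
    ∫ x in cube n z r, |u x - ⨍ y in cube n z r, u y ∂volume| ∂volume

/-- The seminorm `|u|_{A^{δ,p}_κ(G)}`: the supremum, over families `𝒬` of pairwise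
disjoint cubes `Q` (given by center-halfside pairs) with `κQ ⊆ G`, of the `L^p(G)`
norm of `∑_{Q ∈ 𝒬} (|Q|^(-1-δ/n) ∫_Q |u - u_Q|) χ_Q`. -/
def ASeminorm (n : ℕ) (κ δ p : ℝ) (G : Set (Eucl n)) (u : Eucl n → ℝ) : ℝ≥0∞ :=
  ⨆ (𝒬 : Set (Eucl n × ℝ)) (_ : ∀ c ∈ 𝒬, 0 < c.2 ∧ cube n c.1 (κ * c.2) ⊆ G)
    (_ : ∀ c ∈ 𝒬, ∀ c' ∈ 𝒬, c ≠ c' → cube n c.1 c.2 ∩ cube n c'.1 c'.2 = ∅),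
    (∫⁻ x in G,
        (∑' c : 𝒬, (cube n (c : Eucl n × ℝ).1 (c : Eucl n × ℝ).2).indicator
          (fun _ => ENNReal.ofReal (aTerm n δ u (c : Eucl n × ℝ).1 (c : Eucl n × ℝ).2)) x) ^ p
      ∂volume) ^ (1 / p)

/-- `Q` is a closed dyadic cube in `ℝⁿ`. -/
def IsDyadicCube (n : ℕ) (Q : Set (Eucl n)) : Prop :=
  ∃ (k : ℤ) (z : Fin n → ℤ),
    Q = {x : Eucl n | ∀ i, (z i : ℝ) * (2:ℝ) ^ k ≤ x i ∧ x i ≤ ((z i : ℝ) + 1) * (2:ℝ) ^ k}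

/-- `W` is a Whitney decomposition of the proper open set `G`: a countable family of
closed dyadic cubes with pairwise disjoint interiors whose union is `G`, with
`diam Q ≤ dist(Q, ∂G) ≤ 4 diam Q` for each cube `Q ∈ W`. -/
def IsWhitneyDecomposition (n : ℕ) (G : Set (Eucl n)) (W : Set (Set (Eucl n))) : Prop :=
  W.Countable ∧ (∀ Q ∈ W, IsDyadicCube n Q) ∧ ⋃₀ W = G ∧
    (W.Pairwise fun Q R => interior Q ∩ interior R = ∅) ∧
    ∀ Q ∈ W, (∀ x ∈ Q, Metric.diam Q ≤ infDist x (frontier G)) ∧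
      ∃ x ∈ Q, infDist x (frontier G) ≤ 4 * Metric.diam Q

/-- `lam` is an upper Assouad-type covering exponent for `E`: there is `C > 0` such
that for every `x ∈ E` and all `0 < r < R < 2 diam E`, the set `E ∩ B(x,R)` can be
covered by at most `C (R/r)^lam` balls centered in `E` of radius `r`. -/
def UpperAssouadBound (n : ℕ) (E : Set (Eucl n)) (lam : ℝ) : Prop :=
  ∃ C : ℝ, 0 < C ∧ ∀ x ∈ E, ∀ r R : ℝ, 0 < r → r < R →
    ENNReal.ofReal R < 2 * EMetric.diam E →
    ∃ F : Finset (Eucl n), ↑F ⊆ E ∧ (F.card : ℝ) ≤ C * (R / r) ^ lam ∧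
      E ∩ ball x R ⊆ ⋃ y ∈ F, ball y r

/-- The upper Assouad dimension of `E`. -/
def upperAssouadDim (n : ℕ) (E : Set (Eucl n)) : ℝ :=
  sInf {lam : ℝ | 0 ≤ lam ∧ UpperAssouadBound n E lam}

/-- `lam` is a lower Assouad-type exponent for `E`: there is `C > 0` such that for
every `x ∈ E` and all `0 < r < R < 2 diam E`, at least `C (R/r)^lam` balls centered
in `E` of radius `r` are needed to cover `E ∩ B(x,R)`. -/
def LowerAssouadBound (n : ℕ) (E : Set (Eucl n)) (lam : ℝ) : Prop :=
  ∃ C : ℝ, 0 < C ∧ ∀ x ∈ E, ∀ r R : ℝ, 0 < r → r < R →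
    ENNReal.ofReal R < 2 * EMetric.diam E →
    ∀ F : Finset (Eucl n), ↑F ⊆ E → (E ∩ ball x R ⊆ ⋃ y ∈ F, ball y r) →
      C * (R / r) ^ lam ≤ (F.card : ℝ)

/-- The lower Assouad dimension of `E`. -/
def lowerAssouadDim (n : ℕ) (E : Set (Eucl n)) : ℝ :=
  sSup {lam : ℝ | 0 ≤ lam ∧ LowerAssouadBound n E lam}

end

/-! ### Geometry of John domains -/

lemma john_frontier_nonempty {n : ℕ} (hn : 2 ≤ n) {c : ℝ} (hc : 1 ≤ c) {D : Set (Eucl n)}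
    (hD : IsJohnDomain n c D) : (frontier D).Nonempty := by
  obtain ⟨ho, hcon, hJ⟩ := hD
  by_contra hne
  rw [Set.not_nonempty_iff_eq_empty] at hne
  have huniv : D = univ := by
    rcases frontier_eq_empty_iff.1 hne with h | h
    · exact absurd h hcon.nonempty.ne_empty
    · exact h
  haveI : Nonempty (Fin n) := ⟨⟨0, by omega⟩⟩
  obtain ⟨x, y, hxy⟩ := exists_pair_ne (Eucl n)
  obtain ⟨ℓ, hℓ, γ, h0, h1, -, -, h⟩ := hJ x (by simp [huniv]) y (by simp [huniv])
  have h2 := h (ℓ / 2) ⟨by linarith, by linarith⟩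
  rw [hne, infDist_empty, show ℓ - ℓ / 2 = ℓ / 2 by ring, min_self] at h2
  have : ℓ ≤ 0 := by
    by_contra hl
    push Not at hl
    have : 0 < ℓ / 2 / c := by positivity
    linarith
  have : ℓ = 0 := le_antisymm this hℓ
  subst this
  exact hxy (h0.symm.trans h1)

lemma infDist_frontier_pos {n : ℕ} {D : Set (Eucl n)} (ho : IsOpen D)
    (hne : (frontier D).Nonempty) {x : Eucl n} (hx : x ∈ D) : 0 < infDist x (frontier D) := by
  rw [← isClosed_frontier.notMem_iff_infDist_pos hne]
  intro h
  rw [ho.frontier_eq] at h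
  exact h.2 hx

lemma ball_subset_of_frontier {n : ℕ} {D : Set (Eucl n)}
    (hne : (frontier D).Nonempty) {x : Eucl n} (hx : x ∈ D) :
    ball x (infDist x (frontier D)) ⊆ D := by
  have hu : D ≠ univ := by
    rintro rfl
    simp at hne
  obtain ⟨y, hy, hxy⟩ := exists_mem_frontier_infDist_compl_eq_dist hx hu
  refine (ball_subset_ball ?_).trans (ball_infDist_compl_subset)
  rw [hxy]
  exact infDist_le_dist_of_mem hy

lemma mem_tauBall_of_dist {n : ℕ} {τ : ℝ} (hτ : 0 ≤ τ) {D : Set (Eucl n)}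
    (hne : (frontier D).Nonempty) {x y : Eucl n} :
    y ∈ tauBall n τ D x ↔ dist x y < τ * infDist x (frontier D) := by
  unfold tauBall
  have hfin : infEDist x (frontier D) ≠ ⊤ := infEDist_ne_top hne
  have : EMetric.infEdist x (frontier D) = ENNReal.ofReal (infDist x (frontier D)) := by
    rw [infDist, ENNReal.ofReal_toReal hfin]; rfl
  rw [mem_setOf_eq, this, edist_dist, ← ENNReal.ofReal_mul hτ]
  rw [ENNReal.ofReal_lt_ofReal_iff_of_nonneg dist_nonneg]

lemma john_chain {n : ℕ} {c : ℝ} (hc : 1 ≤ c) {D : Set (Eucl n)}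
    (hD : IsJohnDomain n c D) (hub : ¬ Bornology.IsBounded D) {x : Eucl n} (hx : x ∈ D)
    {ρ : ℝ} (hρ : 0 < ρ) (hρd : ρ ≤ infDist x (frontier D)) {a : ℝ} (ha : 0 < a) (J : ℕ) :
    ∃ w : ℕ → Eucl n, w 0 = x ∧ ∀ j ≤ J, w j ∈ D ∧
      ρ * (1 + a) ^ j / (3 * c) ≤ infDist (w j) (frontier D) ∧
      dist x (w j) ≤ ρ * (1 + a) ^ j - ρ ∧
      (j < J → dist (w j) (w (j + 1)) ≤ a * (ρ * (1 + a) ^ j)) := by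
  obtain ⟨ho, hcon, hJ⟩ := hD
  set T := ρ * (1 + a) ^ J with hT
  obtain ⟨y, hy, hxy⟩ : ∃ y ∈ D, 2 * T < dist x y := by
    by_contra! h
    exact hub ((isBounded_closedBall (x := x) (r := 2 * T)).subset
      (fun y hy => by rw [mem_closedBall, dist_comm]; exact h y hy))
  obtain ⟨ℓ, hℓ, γ, h0, h1, hmem, hlip, h⟩ := hJ x hx y hy
  have hdist : ∀ s ∈ Icc 0 ℓ, ∀ t ∈ Icc 0 ℓ, dist (γ s) (γ t) ≤ |s - t| := by
    intro s hs t ht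
    have := hlip.dist_le_mul s hs t ht
    simpa [Real.dist_eq] using this
  have hℓT : 2 * T < ℓ := by
    have := hdist 0 ⟨le_refl _, hℓ⟩ ℓ ⟨hℓ, le_refl _⟩
    rw [h0, h1, zero_sub, abs_neg, abs_of_nonneg hℓ] at this
    linarith
  have hmono : ∀ i j : ℕ, i ≤ j → ρ * (1 + a) ^ i ≤ ρ * (1 + a) ^ j := fun i j hij => by
    have : (1 + a) ^ i ≤ (1 + a) ^ j := pow_le_pow_right₀ (by linarith) hij
    nlinarith
  have ht : ∀ j ≤ J, ρ * (1 + a) ^ j - ρ ∈ Icc 0 ℓ ∧ 2 * (ρ * (1 + a) ^ j - ρ) ≤ ℓ := by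
    intro j hj
    have h1 := hmono 0 j (by omega)
    have h2 := hmono j J hj
    simp only [pow_zero, mul_one] at h1
    refine ⟨⟨by linarith, by linarith⟩, by linarith⟩
  refine ⟨fun j => γ (ρ * (1 + a) ^ j - ρ), by simp [h0], fun j hj => ?_⟩
  obtain ⟨htj, htj2⟩ := ht j hj
  have hz := hdist 0 ⟨le_refl _, hℓ⟩ _ htj
  rw [h0, zero_sub, abs_neg, abs_of_nonneg htj.1] at hz
  refine ⟨hmem _ htj, ?_, hz, fun hj' => ?_⟩
  · have e1 := h _ htj
    rw [min_eq_left (by linarith)] at e1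
    have e2 := infDist_le_infDist_add_dist (x := x) (y := γ (ρ * (1 + a) ^ j - ρ)) (s := frontier D)
    set s := ρ * (1 + a) ^ j
    set d := infDist (γ (s - ρ)) (frontier D)
    rw [div_le_iff₀ (by positivity)] at e1 ⊢
    have : 0 ≤ d := infDist_nonneg
    nlinarith
  · have := hdist _ htj _ (ht (j + 1) hj').1
    refine this.trans (le_of_eq ?_)
    have h3 := hmono j (j + 1) (by omega)
    rw [abs_sub_comm, abs_of_nonneg (by linarith)]
    ring

/-! ### Averages -/

lemma lintegral_rpow_jensen {α : Type*} [MeasurableSpace α] {μ : Measure α}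
    [IsProbabilityMeasure μ] {f : α → ℝ≥0∞} (hf : AEMeasurable f μ) {p : ℝ} (hp : 1 ≤ p) :
    (∫⁻ x, f x ∂μ) ^ p ≤ ∫⁻ x, f x ^ p ∂μ := by
  have h := eLpNorm'_le_eLpNorm'_of_exponent_le (μ := μ) (f := f) (p := 1) (q := p) one_pos hp
    hf.aestronglyMeasurable
  simp only [eLpNorm', enorm_eq_self, ENNReal.rpow_one, div_one] at h
  calc (∫⁻ x, f x ∂μ) ^ p ≤ ((∫⁻ x, f x ^ p ∂μ) ^ (1 / p)) ^ p := by gcongr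
    _ = _ := by rw [← ENNReal.rpow_mul, one_div_mul_cancel (by linarith), ENNReal.rpow_one]

lemma ofReal_abs_triangle (a b c : ℝ) : ENNReal.ofReal |a - c| ≤
    ENNReal.ofReal |a - b| + ENNReal.ofReal |b - c| := by
  rw [← ENNReal.ofReal_add (abs_nonneg _) (abs_nonneg _)]
  exact ENNReal.ofReal_le_ofReal (abs_sub_le a b c)

lemma average_step {α : Type*} [MeasurableSpace α] {μ ν : Measure α}
    [IsProbabilityMeasure μ] [IsProbabilityMeasure ν] {u : α → ℝ} (hu : Measurable u) (a : ℝ) :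
    ∫⁻ z, ENNReal.ofReal |a - u z| ∂ν ≤ ∫⁻ y, ENNReal.ofReal |a - u y| ∂μ +
      ∫⁻ y, ∫⁻ z, ENNReal.ofReal |u y - u z| ∂ν ∂μ := by
  have hm : Measurable (fun y => ENNReal.ofReal |a - u y|) := by fun_prop
  rw [← lintegral_add_left hm]
  calc ∫⁻ z, ENNReal.ofReal |a - u z| ∂ν
      = ∫⁻ y, ∫⁻ z, ENNReal.ofReal |a - u z| ∂ν ∂μ := by simp
    _ ≤ ∫⁻ y, (ENNReal.ofReal |a - u y| + ∫⁻ z, ENNReal.ofReal |u y - u z| ∂ν) ∂μ := by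
        refine lintegral_mono fun y => ?_
        have : ENNReal.ofReal |a - u y| = ∫⁻ z, ENNReal.ofReal |a - u y| ∂ν := by simp
        simp only
        rw [this, ← lintegral_add_left measurable_const]
        exact lintegral_mono fun z => ofReal_abs_triangle _ _ _

lemma average_chain {α : Type*} [MeasurableSpace α] {ν : ℕ → Measure α}
    (hν : ∀ j, IsProbabilityMeasure (ν j)) {u : α → ℝ} (hu : Measurable u) (a : ℝ) (J : ℕ) :
    ENNReal.ofReal |a| ≤ ∫⁻ y, ENNReal.ofReal |a - u y| ∂(ν 0) +
      ∑ j ∈ Finset.range J, ∫⁻ y, ∫⁻ z, ENNReal.ofReal |u y - u z| ∂(ν (j + 1)) ∂(ν j) +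
      ∫⁻ z, ENNReal.ofReal |u z| ∂(ν J) := by
  have key : ∀ J, ∫⁻ z, ENNReal.ofReal |a - u z| ∂(ν J) ≤ ∫⁻ y, ENNReal.ofReal |a - u y| ∂(ν 0) +
      ∑ j ∈ Finset.range J, ∫⁻ y, ∫⁻ z, ENNReal.ofReal |u y - u z| ∂(ν (j + 1)) ∂(ν j) := by
    intro J
    induction J with
    | zero => simp
    | succ J ih =>
      rw [Finset.sum_range_succ, ← add_assoc]
      have := hν J
      have := hν (J + 1)
      refine (average_step (μ := ν J) hu a).trans ?_
      gcongr
  refine le_trans ?_ (add_le_add_left (key J) _)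
  have := hν J
  have hm : Measurable (fun y => ENNReal.ofReal |a - u y|) := by fun_prop
  rw [← lintegral_add_left hm]
  calc ENNReal.ofReal |a| = ∫⁻ z, ENNReal.ofReal |a| ∂(ν J) := by simp
    _ ≤ _ := by
      refine lintegral_mono fun z => ?_
      simpa using ofReal_abs_triangle a (u z) 0

/-- The normalized Lebesgue measure of a ball. -/
noncomputable def ballMeas (n : ℕ) (x : Eucl n) (r : ℝ) : Measure (Eucl n) :=
  (volume (ball x r))⁻¹ • volume.restrict (ball x r)

lemma ballMeas_prob {n : ℕ} (x : Eucl n) {r : ℝ} (hr : 0 < r) :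
    IsProbabilityMeasure (ballMeas n x r) := by
  constructor
  simp only [ballMeas, Measure.smul_apply, Measure.restrict_apply_univ, smul_eq_mul]
  exact ENNReal.inv_mul_cancel (measure_ball_pos _ _ hr).ne' measure_ball_lt_top.ne

lemma lintegral_ballMeas {n : ℕ} (x : Eucl n) (r : ℝ) (f : Eucl n → ℝ≥0∞) :
    ∫⁻ y, f y ∂(ballMeas n x r) = (volume (ball x r))⁻¹ * ∫⁻ y in ball x r, f y := by
  simp [ballMeas, lintegral_smul_measure]

/-- Volume of the unit ball. -/
noncomputable def omg (n : ℕ) : ℝ := (volume (ball (0 : Eucl n) 1)).toReal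

lemma omg_pos (n : ℕ) : 0 < omg n :=
  ENNReal.toReal_pos (measure_ball_pos _ _ one_pos).ne' measure_ball_lt_top.ne

lemma vol_ball {n : ℕ} (x : Eucl n) {r : ℝ} (hr : 0 < r) :
    volume (ball x r) = ENNReal.ofReal (r ^ n * omg n) := by
  rw [Measure.addHaar_ball_of_pos _ _ hr, ENNReal.ofReal_mul (by positivity), omg,
    ENNReal.ofReal_toReal measure_ball_lt_top.ne]
  simp

/-! ### The kernel -/

lemma kernel_bound {n : ℕ} {δ p : ℝ} (hp : 1 ≤ p) (hδ : 0 < δ) (u : Eucl n → ℝ) {y z : Eucl n}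
    {L : ℝ} (hL : dist y z ≤ L) :
    (ENNReal.ofReal |u y - u z|) ^ p ≤
      ENNReal.ofReal (L ^ ((n : ℝ) + δ * p)) * fracKernel n δ p u y z := by
  have hp0 : 0 < p := by linarith
  have hL0 : 0 ≤ L := dist_nonneg.trans hL
  rw [ENNReal.ofReal_rpow_of_nonneg (abs_nonneg _) hp0.le, fracKernel,
    ← ENNReal.ofReal_mul (by positivity)]
  apply ENNReal.ofReal_le_ofReal
  by_cases hyz : y = z
  · subst hyz
    simp [Real.zero_rpow hp0.ne']
  have hd : 0 < dist y z := dist_pos.2 hyz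
  rw [mul_div_assoc', le_div_iff₀ (by positivity), mul_comm]
  gcongr

/-- The inner integral of the energy. -/
noncomputable def GG (n : ℕ) (δ τ p : ℝ) (D : Set (Eucl n)) (u : Eucl n → ℝ) (y : Eucl n) : ℝ≥0∞ :=
  ∫⁻ z in tauBall n τ D y, fracKernel n δ p u y z

lemma osc_bound {n : ℕ} {δ τ p : ℝ} (hp : 1 ≤ p) (hδ : 0 < δ) {D : Set (Eucl n)}
    {u : Eucl n → ℝ} (hu : Measurable u) {w w' : Eucl n} {r r' : ℝ} (hr : 0 < r) (hrr : r ≤ r')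
    (h1 : ∀ y ∈ ball w r, ball w' r' ⊆ tauBall n τ D y)
    (h2 : ∀ y ∈ ball w r, ∀ z ∈ ball w' r', dist y z ≤ 4 * r) :
    (∫⁻ y, ∫⁻ z, ENNReal.ofReal |u y - u z| ∂(ballMeas n w' r') ∂(ballMeas n w r)) ^ p ≤
      ENNReal.ofReal (4 ^ ((n : ℝ) + δ * p) / omg n ^ 2 * r ^ (δ * p - n)) *
        ∫⁻ y in ball w r, GG n δ τ p D u y := by
  have := ballMeas_prob w hr
  have := ballMeas_prob w' (hr.trans_le hrr)
  have hω := omg_pos n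
  have hm : Measurable (fun q : Eucl n × Eucl n => ENNReal.ofReal |u q.1 - u q.2|) := by
    fun_prop
  calc (∫⁻ y, ∫⁻ z, ENNReal.ofReal |u y - u z| ∂(ballMeas n w' r') ∂(ballMeas n w r)) ^ p
      ≤ ∫⁻ y, (∫⁻ z, ENNReal.ofReal |u y - u z| ∂(ballMeas n w' r')) ^ p ∂(ballMeas n w r) :=
        lintegral_rpow_jensen (hm.lintegral_prod_right').aemeasurable hp
    _ ≤ ∫⁻ y, (∫⁻ z, ENNReal.ofReal |u y - u z| ^ p ∂(ballMeas n w' r')) ∂(ballMeas n w r) := by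
        refine lintegral_mono fun y => lintegral_rpow_jensen ?_ hp
        exact Measurable.aemeasurable (by fun_prop)
    _ = (volume (ball w r))⁻¹ * ∫⁻ y in ball w r, ((volume (ball w' r'))⁻¹ *
          ∫⁻ z in ball w' r', ENNReal.ofReal |u y - u z| ^ p) := by
        rw [lintegral_ballMeas]
        simp only [lintegral_ballMeas]
    _ ≤ (volume (ball w r))⁻¹ * ∫⁻ y in ball w r, ((volume (ball w r))⁻¹ *
          (ENNReal.ofReal ((4 * r) ^ ((n : ℝ) + δ * p)) * GG n δ τ p D u y)) := by
        refine mul_le_mul' le_rfl ?_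
        refine setLIntegral_mono' measurableSet_ball fun y hy => ?_
        gcongr ?_ * ?_
        · rw [ENNReal.inv_le_inv, vol_ball _ hr, vol_ball _ (hr.trans_le hrr)]
          apply ENNReal.ofReal_le_ofReal
          gcongr
        · calc ∫⁻ z in ball w' r', ENNReal.ofReal |u y - u z| ^ p
              ≤ ∫⁻ z in ball w' r', ENNReal.ofReal ((4 * r) ^ ((n : ℝ) + δ * p)) *
                fracKernel n δ p u y z :=
                setLIntegral_mono' measurableSet_ball fun z hz => kernel_bound hp hδ u (h2 y hy z hz)
            _ = ENNReal.ofReal ((4 * r) ^ ((n : ℝ) + δ * p)) *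
                ∫⁻ z in ball w' r', fracKernel n δ p u y z :=
                lintegral_const_mul' _ _ ENNReal.ofReal_ne_top
            _ ≤ _ := by
                unfold GG
                gcongr
                exact h1 y hy
    _ = _ := by
        have hV : volume (ball w r) ≠ 0 := (measure_ball_pos _ _ hr).ne'
        rw [lintegral_const_mul' _ _ (ENNReal.inv_ne_top.2 hV),
          lintegral_const_mul' _ _ ENNReal.ofReal_ne_top, ← mul_assoc, ← mul_assoc, vol_ball _ hr,
          ← ENNReal.ofReal_inv_of_pos (by positivity), ← ENNReal.ofReal_mul (by positivity),
          ← ENNReal.ofReal_mul (by positivity)]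
        congr 2
        rw [Real.mul_rpow (by norm_num) hr.le, Real.rpow_add hr, Real.rpow_sub hr, Real.rpow_natCast]
        field_simp

lemma osc_bound_pt {n : ℕ} {δ τ p : ℝ} (hp : 1 ≤ p) (hδ : 0 < δ) {D : Set (Eucl n)}
    {u : Eucl n → ℝ} (hu : Measurable u) {x : Eucl n} {r : ℝ} (hr : 0 < r)
    (h1 : ball x r ⊆ tauBall n τ D x) :
    (∫⁻ z, ENNReal.ofReal |u x - u z| ∂(ballMeas n x r)) ^ p ≤
      ENNReal.ofReal (1 / omg n * r ^ (δ * p)) * GG n δ τ p D u x := by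
  have := ballMeas_prob x hr
  have hω := omg_pos n
  calc (∫⁻ z, ENNReal.ofReal |u x - u z| ∂(ballMeas n x r)) ^ p
      ≤ ∫⁻ z, ENNReal.ofReal |u x - u z| ^ p ∂(ballMeas n x r) :=
        lintegral_rpow_jensen (Measurable.aemeasurable (by fun_prop)) hp
    _ = (volume (ball x r))⁻¹ * ∫⁻ z in ball x r, ENNReal.ofReal |u x - u z| ^ p := by
        rw [lintegral_ballMeas]
    _ ≤ (volume (ball x r))⁻¹ * ∫⁻ z in ball x r, ENNReal.ofReal (r ^ ((n : ℝ) + δ * p)) *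
                fracKernel n δ p u x z := by
        refine mul_le_mul' le_rfl ?_
        refine setLIntegral_mono' measurableSet_ball fun z hz => kernel_bound hp hδ u ?_
        rw [mem_ball, dist_comm] at hz
        exact hz.le
    _ ≤ (volume (ball x r))⁻¹ * (ENNReal.ofReal (r ^ ((n : ℝ) + δ * p)) * GG n δ τ p D u x) := by
        rw [lintegral_const_mul' _ _ ENNReal.ofReal_ne_top]
        unfold GG
        gcongr
    _ = _ := by
        rw [← mul_assoc, vol_ball _ hr,
          ← ENNReal.ofReal_inv_of_pos (by positivity), ← ENNReal.ofReal_mul (by positivity)]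
        congr 2
        rw [Real.rpow_add hr, Real.rpow_natCast]
        field_simp

/-! ### Weights -/

/-- A bounded increasing function whose increments serve as weights. -/
noncomputable def wf (ε s : ℝ) : ℝ := s ^ ε / (1 + s ^ ε)

lemma wf_le_one {ε s : ℝ} (hs : 0 < s) : wf ε s ≤ 1 := by
  have : 0 < s ^ ε := by positivity
  rw [wf, div_le_one (by positivity)]
  linarith

lemma wf_nonneg {ε s : ℝ} (hs : 0 < s) : 0 ≤ wf ε s := by
  unfold wf; positivity

lemma wf_incr_small {ε s l : ℝ} (hε : 0 < ε) (hl : 1 < l) (hs : 0 < s) (hs1 : s ≤ 1) :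
    (l ^ ε - 1) / (4 * l ^ ε) * s ^ ε ≤ wf ε (l * s) - wf ε s := by
  unfold wf
  rw [Real.mul_rpow (by linarith) hs.le]
  have hL : 1 < l ^ ε := Real.one_lt_rpow hl hε
  have hX : 0 < s ^ ε := by positivity
  have hX1 : s ^ ε ≤ 1 := Real.rpow_le_one hs.le hs1 hε.le
  generalize l ^ ε = L at *
  generalize s ^ ε = X at *
  have hLX : 0 < L * X := by positivity
  have e : L * X / (1 + L * X) - X / (1 + X) = (L - 1) * X / ((1 + L * X) * (1 + X)) := by
    field_simp; ring
  rw [e, div_mul_eq_mul_div]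
  have : 0 ≤ (L - 1) * X := mul_nonneg (by linarith) hX.le
  refine div_le_div_of_nonneg_left this (by positivity) ?_
  have h1 : L * X ≤ L := by nlinarith
  calc (1 + L * X) * (1 + X) ≤ (2 * L) * 2 := by gcongr <;> linarith
    _ = _ := by ring

lemma wf_incr_large {ε s l : ℝ} (hε : 0 < ε) (hl : 1 < l) (hs : 1 ≤ s) :
    (l ^ ε - 1) / (4 * l ^ ε) * s ^ (-ε) ≤ wf ε (l * s) - wf ε s := by
  unfold wf
  rw [Real.mul_rpow (by linarith) (by linarith), Real.rpow_neg (by linarith)]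
  have hL : 1 < l ^ ε := Real.one_lt_rpow hl hε
  have hX1 : 1 ≤ s ^ ε := Real.one_le_rpow hs hε.le
  generalize l ^ ε = L at *
  generalize s ^ ε = X at *
  have hX : 0 < X := by linarith
  have hLX : 0 < L * X := by positivity
  have e : L * X / (1 + L * X) - X / (1 + X) = (L - 1) * X / ((1 + L * X) * (1 + X)) := by
    field_simp; ring
  have e2 : (L - 1) / (4 * L) * X⁻¹ = (L - 1) * X / (4 * L * X ^ 2) := by
    field_simp
  rw [e, e2]
  have : 0 ≤ (L - 1) * X := mul_nonneg (by linarith) hX.le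
  refine div_le_div_of_nonneg_left this (by positivity) ?_
  have : 1 * 1 ≤ L * X := by gcongr
  calc (1 + L * X) * (1 + X) ≤ (2 * (L * X)) * (2 * X) := by gcongr <;> linarith
    _ = _ := by ring

lemma four_div_rpow {w p v κ : ℝ} (hp : 0 < p) (hκ : 0 < κ) (hv : 0 < v) (hw : κ * v ≤ w) :
    (4 / w) ^ p ≤ 4 ^ p * κ ^ (-p) * v ^ (-p) := by
  have hw0 : 0 < κ * v := by positivity
  calc (4 / w) ^ p ≤ (4 / (κ * v)) ^ p := by
        have : 0 < w := by linarith
        gcongr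
    _ = _ := by
        rw [Real.div_rpow (by norm_num) hw0.le, Real.mul_rpow hκ.le hv.le, Real.rpow_neg hκ.le,
          Real.rpow_neg hv.le]
        field_simp

lemma real_large {s R κ ε δ p N w : ℝ} (hR : 0 < R) (hs : R ≤ s) (hκ : 0 < κ) (hp : 0 < p)
    (hε : ε * p + δ * p - N ≤ 0) (hw : κ * (s / R) ^ (-ε) ≤ w) :
    (4 / w) ^ p * s ^ (δ * p - N) ≤ 4 ^ p * κ ^ (-p) * R ^ (δ * p - N) := by
  have hs0 : 0 < s := by linarith
  calc (4 / w) ^ p * s ^ (δ * p - N)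
      ≤ (4 ^ p * κ ^ (-p) * ((s / R) ^ (-ε)) ^ (-p)) * s ^ (δ * p - N) := by
        gcongr
        exact four_div_rpow hp hκ (by positivity) hw
    _ = 4 ^ p * κ ^ (-p) * (s ^ (ε * p + δ * p - N) * R ^ (-(ε * p))) := by
        rw [← Real.rpow_mul (by positivity), Real.div_rpow hs0.le hR.le, Real.rpow_neg hR.le,
          show ε * p + δ * p - N = ε * p + (δ * p - N) by ring, Real.rpow_add hs0,
          show -ε * -p = ε * p by ring]
        field_simp
    _ ≤ 4 ^ p * κ ^ (-p) * (R ^ (ε * p + δ * p - N) * R ^ (-(ε * p))) := by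
        gcongr 4 ^ p * κ ^ (-p) * (?_ * _)
        exact Real.rpow_le_rpow_of_nonpos hR hs hε
    _ = _ := by
        rw [← Real.rpow_add hR]
        congr 2
        ring

lemma real_small {s R κ ε δ p N w : ℝ} (hs0 : 0 < s) (hs : s ≤ R) (hκ : 0 < κ) (hp : 0 < p)
    (hε : ε ≤ δ) (hw : κ * (s / R) ^ ε ≤ w) :
    (4 / w) ^ p * s ^ (δ * p - N) ≤ 4 ^ p * κ ^ (-p) * R ^ (δ * p) * s ^ (-N) := by
  have hR : 0 < R := by linarith
  calc (4 / w) ^ p * s ^ (δ * p - N)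
      ≤ (4 ^ p * κ ^ (-p) * ((s / R) ^ ε) ^ (-p)) * s ^ (δ * p - N) := by
        gcongr
        exact four_div_rpow hp hκ (by positivity) hw
    _ = 4 ^ p * κ ^ (-p) * (s ^ (δ * p - ε * p) * R ^ (ε * p)) * s ^ (-N) := by
        rw [← Real.rpow_mul (by positivity), Real.div_rpow hs0.le hR.le,
          show δ * p - N = (δ * p - ε * p) + (ε * p) + (-N) by ring, Real.rpow_add hs0,
          Real.rpow_add hs0, show ε * -p = -(ε * p) by ring, Real.rpow_neg hs0.le,
          Real.rpow_neg hR.le]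
        field_simp
    _ ≤ 4 ^ p * κ ^ (-p) * (R ^ (δ * p - ε * p) * R ^ (ε * p)) * s ^ (-N) := by
        gcongr 4 ^ p * κ ^ (-p) * (?_ * _) * _
        exact Real.rpow_le_rpow hs0.le hs (by nlinarith)
    _ = _ := by
        rw [← Real.rpow_add hR]
        congr 3
        ring

lemma ennreal_transfer {t w p Y Z : ℝ} {I : ℝ≥0∞} (ht : 0 < t) (hw : 0 < w)
    (h : (ENNReal.ofReal (t / 4 * w)) ^ p ≤ ENNReal.ofReal Y * I)
    (hp : 0 < p) (hYZ : (4 / w) ^ p * Y ≤ Z) :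
    ENNReal.ofReal (t ^ p) ≤ ENNReal.ofReal Z * I := by
  rw [ENNReal.ofReal_rpow_of_nonneg (by positivity) hp.le] at h
  have e : t ^ p = (4 / w) ^ p * (t / 4 * w) ^ p := by
    rw [← Real.mul_rpow (by positivity) (by positivity)]
    congr 1
    field_simp
  rw [e, ENNReal.ofReal_mul (by positivity)]
  calc _ ≤ ENNReal.ofReal ((4 / w) ^ p) * (ENNReal.ofReal Y * I) := by gcongr
    _ = ENNReal.ofReal ((4 / w) ^ p * Y) * I := by
        rw [← mul_assoc, ← ENNReal.ofReal_mul (by positivity)]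
    _ ≤ _ := by gcongr

/-! ### The pointwise estimate -/

/-- An auxiliary potential. -/
noncomputable def HH (n : ℕ) (c δ τ p : ℝ) (D : Set (Eucl n)) (u : Eucl n → ℝ) (x : Eucl n) :
    ℝ≥0∞ :=
  ∫⁻ y in D, {y | dist x y ≤ 12 * c * infDist y (frontier D)}.indicator
    (fun y => ENNReal.ofReal (infDist y (frontier D) ^ (-(n : ℝ))) * GG n δ τ p D u y) y

lemma exists_large_scale {n : ℕ} (hn : 2 ≤ n) {u : Eucl n → ℝ}
    (hfin : ∫⁻ y, ENNReal.ofReal |u y| ≠ ⊤) {t b l : ℝ} (ht : 0 < t) (hb : 0 < b) (hl : 1 < l) :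
    ∃ J : ℕ, ∀ w : Eucl n,
      ∫⁻ y, ENNReal.ofReal |u y| ∂(ballMeas n w (b * l ^ J)) ≤ ENNReal.ofReal t := by
  have hω := omg_pos n
  set I := ∫⁻ y, ENNReal.ofReal |u y| with hI
  obtain ⟨J, hJ⟩ := pow_unbounded_of_one_lt ((1 + I.toReal / (t * omg n)) / b) hl
  refine ⟨J, fun w => ?_⟩
  rw [div_lt_iff₀ hb, mul_comm (l ^ J)] at hJ
  set r := b * l ^ J
  have hI0 : 0 ≤ I.toReal := ENNReal.toReal_nonneg
  have hI1 : 0 ≤ I.toReal / (t * omg n) := by positivity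
  have hr1 : 1 ≤ r := by linarith
  have hr : 0 < r := by linarith
  have hrn : r ≤ r ^ n := le_self_pow₀ hr1 (by omega)
  rw [lintegral_ballMeas, vol_ball _ hr]
  calc _ ≤ (ENNReal.ofReal (r ^ n * omg n))⁻¹ * I := by
        gcongr
        exact setLIntegral_le_lintegral _ _
    _ = ENNReal.ofReal ((r ^ n * omg n)⁻¹ * I.toReal) := by
        rw [ENNReal.ofReal_mul (p := (r ^ n * omg n)⁻¹) (by positivity),
          ENNReal.ofReal_inv_of_pos (by positivity), ENNReal.ofReal_toReal hfin]
    _ ≤ _ := by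
        apply ENNReal.ofReal_le_ofReal
        rw [inv_mul_le_iff₀ (by positivity)]
        have : I.toReal / (t * omg n) ≤ r ^ n := by linarith
        rw [div_le_iff₀ (by positivity)] at this
        linarith

set_option maxHeartbeats 2000000 in
lemma pointwise_estimate {n : ℕ} (hn : 2 ≤ n) {c : ℝ} (hc : 1 ≤ c) {τ δ p : ℝ}
    (hτ : τ ∈ Ioo (0:ℝ) 1) (hδ : δ ∈ Ioo (0:ℝ) 1) (hp : 1 ≤ p) (hpn : δ * p < n) :
    ∃ K : ℝ, 0 < K ∧ ∀ D : Set (Eucl n), IsJohnDomain n c D → ¬ Bornology.IsBounded D →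
      ∀ u : Eucl n → ℝ, Measurable u → ∫⁻ y, ENNReal.ofReal |u y| ≠ ⊤ →
      ∀ x ∈ D, ∀ t > 0, ∀ R > 0, t ≤ |u x| →
        ENNReal.ofReal (t ^ p) ≤ ENNReal.ofReal (K * R ^ (δ * p)) * GG n δ τ p D u x ∨
        ENNReal.ofReal (t ^ p) ≤ ENNReal.ofReal (K * R ^ (δ * p - n)) * fracEnergyTau n δ τ p D u ∨
        ENNReal.ofReal (t ^ p) ≤ ENNReal.ofReal (K * R ^ (δ * p)) * HH n c δ τ p D u x := by
  obtain ⟨hτ0, hτ1⟩ := hτ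
  obtain ⟨hδ0, hδ1⟩ := hδ
  have hp0 : 0 < p := by linarith
  have hω := omg_pos n
  set a : ℝ := τ / (24 * c) with ha
  have hac : a * c * 24 = τ := by rw [ha]; field_simp
  have ha0 : 0 < a := by positivity
  have ha1 : a ≤ 1 / 24 := by nlinarith
  set ε : ℝ := min δ ((n - δ * p) / p) with hε
  have hε0 : 0 < ε := lt_min hδ0 (div_pos (by linarith) hp0)
  have hεδ : ε ≤ δ := min_le_left _ _
  have hεp : ε * p + δ * p - n ≤ 0 := by
    have : ε ≤ (n - δ * p) / p := min_le_right _ _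
    rw [le_div_iff₀ hp0] at this
    linarith
  set κ : ℝ := ((1 + a) ^ ε - 1) / (4 * (1 + a) ^ ε) with hκ
  have hκ0 : 0 < κ := by
    have : 1 < (1 + a) ^ ε := Real.one_lt_rpow (by linarith) hε0
    rw [hκ]
    apply div_pos <;> linarith
  set K1 : ℝ := 4 ^ p * κ ^ (-p) * (4 ^ ((n : ℝ) + δ * p) / omg n ^ 2 * a ^ (δ * p - n)) with hK1
  have hK10 : 0 < K1 := by positivity
  have hK2 : (1 : ℝ) ≤ 2 ^ (n : ℝ) := Real.one_le_rpow (by norm_num) (by positivity)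
  have hK0 : 0 < 4 ^ p / omg n := by positivity
  set K : ℝ := 4 ^ p / omg n + K1 * 2 ^ (n : ℝ) with hK
  have hKa : 4 ^ p / omg n ≤ K := by
    have : 0 < K1 * 2 ^ (n : ℝ) := by positivity
    linarith
  have hKc : K1 * 2 ^ (n : ℝ) ≤ K := by linarith
  have hKb : K1 ≤ K := by nlinarith
  refine ⟨K, by linarith, ?_⟩
  intro D hD hub u hu hfin x hx t ht R hR htu
  have hne := john_frontier_nonempty hn hc hD
  have hdx := infDist_frontier_pos hD.1 hne hx
  set ρ := min (infDist x (frontier D)) R with hρ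
  have hρ0 : 0 < ρ := lt_min hdx hR
  have hρd : ρ ≤ infDist x (frontier D) := min_le_left _ _
  have hρR : ρ ≤ R := min_le_right _ _
  obtain ⟨J, hJ⟩ := exists_large_scale hn hfin (t := t / 4) (b := a * ρ) (l := 1 + a)
    (by positivity) (by positivity) (by linarith)
  obtain ⟨w, hw0, hw⟩ := john_chain hc hD hub hx hρ0 hρd ha0 J
  set s : ℕ → ℝ := fun j => ρ * (1 + a) ^ j with hs
  have hs0 : ∀ j, 0 < s j := fun j => by simp only [hs]; positivity
  have hss : ∀ j, s (j + 1) = (1 + a) * s j := fun j => by simp only [hs]; ring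
  have hsρ : ∀ j, ρ ≤ s j := fun j => by
    have : 1 ≤ (1 + a) ^ j := one_le_pow₀ (by linarith)
    simp only [hs]; nlinarith
  set ν : ℕ → Measure (Eucl n) := fun j => ballMeas n (w j) (a * s j) with hν
  have hνp : ∀ j, IsProbabilityMeasure (ν j) := fun j =>
    ballMeas_prob _ (mul_pos ha0 (hs0 j))
  have hchain := average_chain hνp hu (u x) J
  -- pigeonhole
  have hlast : ∫⁻ z, ENNReal.ofReal |u z| ∂(ν J) ≤ ENNReal.ofReal (t / 4) := by
    have := hJ (w J)
    simp only [hν, hs]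
    rwa [← mul_assoc]
  have hs00 : s 0 = ρ := by simp [hs]
  replace hw : ∀ j ≤ J, w j ∈ D ∧
      s j / (3 * c) ≤ infDist (w j) (frontier D) ∧
      dist x (w j) ≤ s j - ρ ∧
      (j < J → dist (w j) (w (j + 1)) ≤ a * s j) := hw
  clear_value s ρ
  set W : ℕ → ℝ := fun j => wf ε (s (j + 1) / R) - wf ε (s j / R) with hW
  have hWsmall : ∀ j, s j ≤ R → κ * (s j / R) ^ ε ≤ W j := fun j hj => by
    have := wf_incr_small (s := s j / R) (l := 1 + a) hε0 (by linarith) (div_pos (hs0 j) hR)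
      ((div_le_one hR).2 hj)
    simp only [hW, hss]
    rwa [mul_div_assoc (1 + a)]
  have hWlarge : ∀ j, R ≤ s j → κ * (s j / R) ^ (-ε) ≤ W j := fun j hj => by
    have := wf_incr_large (s := s j / R) (l := 1 + a) hε0 (by linarith)
      ((one_le_div hR).2 hj)
    simp only [hW, hss]
    rwa [mul_div_assoc (1 + a)]
  have hW0 : ∀ j, 0 < W j := fun j => by
    have h0 := hs0 j
    rcases le_total (s j) R with h | h
    · exact lt_of_lt_of_le (by positivity) (hWsmall j h)
    · exact lt_of_lt_of_le (by positivity) (hWlarge j h)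
  have hWsum : ∑ j ∈ Finset.range J, W j ≤ 1 := by
    simp only [hW]
    rw [Finset.sum_range_sub (fun j => wf ε (s j / R))]
    have h1 := wf_le_one (ε := ε) (div_pos (hs0 J) hR)
    have h2 := wf_nonneg (ε := ε) (div_pos (hs0 0) hR)
    linarith
  clear_value W κ
  have hcases : ENNReal.ofReal (t / 4) ≤ ∫⁻ y, ENNReal.ofReal |u x - u y| ∂(ν 0) ∨
      ∃ j < J, ENNReal.ofReal (t / 4 * W j) ≤
        ∫⁻ y, ∫⁻ z, ENNReal.ofReal |u y - u z| ∂(ν (j + 1)) ∂(ν j) := by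
    by_contra! hcon
    obtain ⟨hc1, hc2⟩ := hcon
    have : ENNReal.ofReal t ≤ ENNReal.ofReal (t / 4 + t / 4 + t / 4) := by
      rw [ENNReal.ofReal_add (by positivity) (by positivity),
        ENNReal.ofReal_add (by positivity) (by positivity)]
      refine (ENNReal.ofReal_le_ofReal htu).trans (hchain.trans ?_)
      refine add_le_add (add_le_add hc1.le ?_) hlast
      calc _ ≤ ∑ j ∈ Finset.range J, ENNReal.ofReal (t / 4 * W j) :=
            Finset.sum_le_sum fun j hj => (hc2 j (Finset.mem_range.1 hj)).le
        _ = ENNReal.ofReal (∑ j ∈ Finset.range J, t / 4 * W j) :=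
            (ENNReal.ofReal_sum_of_nonneg fun j _ => by have := hW0 j; positivity).symm
        _ ≤ _ := by
            apply ENNReal.ofReal_le_ofReal
            rw [← Finset.mul_sum]
            nlinarith
    rw [ENNReal.ofReal_le_ofReal_iff (by positivity)] at this
    linarith
  rcases hcases with h | ⟨j, hjJ, h⟩
  · left
    have hsub : ball x (a * s 0) ⊆ tauBall n τ D x := by
      intro y hy
      rw [mem_tauBall_of_dist hτ0.le hne, dist_comm]
      rw [mem_ball] at hy
      refine hy.trans_le ?_
      rw [hs00]
      have : a ≤ τ := by nlinarith
      gcongr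
    have hb := osc_bound_pt hp hδ0 hu (mul_pos ha0 (hs0 0)) hsub
    have h' : ENNReal.ofReal (t / 4 * 1) ^ p ≤
        ENNReal.ofReal (1 / omg n * (a * s 0) ^ (δ * p)) * GG n δ τ p D u x := by
      refine le_trans ?_ hb
      rw [mul_one]
      simp only [hν, hw0] at h
      gcongr
    refine ennreal_transfer ht one_pos h' hp0 ?_
    rw [div_one]
    calc (4:ℝ) ^ p * (1 / omg n * (a * s 0) ^ (δ * p))
        ≤ (4:ℝ) ^ p * (1 / omg n * R ^ (δ * p)) := by
          have : a * s 0 ≤ R := by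
            rw [hs00]
            calc a * ρ ≤ 1 * ρ := by gcongr; linarith
              _ ≤ R := by linarith
          have := hs0 0
          gcongr
      _ = 4 ^ p / omg n * R ^ (δ * p) := by ring
      _ ≤ _ := by gcongr
  · right
    obtain ⟨hwD, hwd, hwx, hww⟩ := hw j hjJ.le
    have hww := hww hjJ
    have hsj := hs0 j
    have hr0 : 0 < a * s j := by positivity
    have h8 : 8 * (a * s j) ≤ τ * infDist (w j) (frontier D) := by
      rw [div_le_iff₀ (by positivity)] at hwd
      have : 0 ≤ infDist (w j) (frontier D) := infDist_nonneg
      have e : τ * infDist (w j) (frontier D) = 8 * a * (infDist (w j) (frontier D) * (3 * c)) := by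
        rw [← hac]; ring
      rw [e]
      nlinarith
    have hdy : ∀ y ∈ ball (w j) (a * s j),
        infDist (w j) (frontier D) ≤ infDist y (frontier D) + a * s j := fun y hy => by
      have := infDist_le_infDist_add_dist (x := w j) (y := y) (s := frontier D)
      rw [mem_ball, dist_comm] at hy
      linarith
    have hyz : ∀ y ∈ ball (w j) (a * s j), ∀ z ∈ ball (w (j + 1)) (a * s (j + 1)),
        dist y z ≤ 4 * (a * s j) := by
      intro y hy z hz
      rw [mem_ball] at hy hz
      rw [hss] at hz
      have h1 := dist_triangle4 y (w j) (w (j + 1)) z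
      rw [dist_comm (w (j + 1)) z] at h1
      nlinarith
    have hyz2 : ∀ y ∈ ball (w j) (a * s j), ball (w (j + 1)) (a * s (j + 1)) ⊆ tauBall n τ D y := by
      intro y hy z hz
      rw [mem_tauBall_of_dist hτ0.le hne]
      have h1 := hyz y hy z hz
      have h2 := hdy y hy
      nlinarith
    have hb := osc_bound hp hδ0 hu (δ := δ) (p := p) (τ := τ) (D := D) hr0 (r' := a * s (j + 1))
      (by rw [hss]; nlinarith) hyz2 hyz
    have hb2 : ENNReal.ofReal (t / 4 * W j) ^ p ≤ _ := le_trans (by gcongr) hb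
    have hY : ∀ Z, (4 / W j) ^ p * s j ^ (δ * p - n) ≤ 4 ^ p * κ ^ (-p) * Z →
        (4 / W j) ^ p * (4 ^ ((n : ℝ) + δ * p) / omg n ^ 2 * (a * s j) ^ (δ * p - n)) ≤ K1 * Z := by
      intro Z hZ
      rw [Real.mul_rpow ha0.le hsj.le]
      calc _ = ((4 / W j) ^ p * s j ^ (δ * p - n)) *
            (4 ^ ((n : ℝ) + δ * p) / omg n ^ 2 * a ^ (δ * p - n)) := by ring
        _ ≤ (4 ^ p * κ ^ (-p) * Z) * (4 ^ ((n : ℝ) + δ * p) / omg n ^ 2 * a ^ (δ * p - n)) := by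
            gcongr
        _ = _ := by rw [hK1]; ring
    have hballD : ball (w j) (a * s j) ⊆ D := by
      refine (ball_subset_ball ?_).trans (ball_subset_of_frontier hne hwD)
      have : 0 ≤ infDist (w j) (frontier D) := infDist_nonneg
      nlinarith
    rcases le_or_gt R (s j) with hRs | hRs
    · left
      have := ennreal_transfer ht (hW0 j) hb2 hp0
        (hY _ (real_large hR hRs hκ0 hp0 hεp (hWlarge j hRs)))
      refine this.trans ?_
      gcongr
      exact lintegral_mono_set hballD
    · right
      have hρd' : ρ = infDist x (frontier D) := by
        rw [hρ]
        apply min_eq_left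
        by_contra! hlt
        have : ρ = R := by rw [hρ]; exact min_eq_right hlt.le
        have := hsρ j
        linarith
      have := ennreal_transfer ht (hW0 j) hb2 hp0
        (hY (R ^ (δ * p) * s j ^ (-(n:ℝ))) (by
          have := real_small (N := n) hsj hRs.le hκ0 hp0 hεδ (hWsmall j hRs.le)
          linarith))
      refine this.trans ?_
      calc ENNReal.ofReal (K1 * (R ^ (δ * p) * s j ^ (-(n:ℝ)))) *
              ∫⁻ y in ball (w j) (a * s j), GG n δ τ p D u y
          = ENNReal.ofReal (K1 * R ^ (δ * p)) * ∫⁻ y in ball (w j) (a * s j),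
              ENNReal.ofReal (s j ^ (-(n:ℝ))) * GG n δ τ p D u y := by
            rw [lintegral_const_mul' _ _ ENNReal.ofReal_ne_top, ← mul_assoc, ← mul_assoc,
              ENNReal.ofReal_mul (by positivity)]
        _ ≤ ENNReal.ofReal (K1 * R ^ (δ * p)) * (ENNReal.ofReal (2 ^ (n:ℝ)) * HH n c δ τ p D u x) := by
            refine mul_le_mul' le_rfl ?_
            unfold HH
            rw [← lintegral_const_mul' _ _ ENNReal.ofReal_ne_top]
            refine le_trans ?_ (lintegral_mono_set hballD)
            refine setLIntegral_mono' measurableSet_ball fun y hy => ?_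
            have h2 := hdy y hy
            have hy' := hy
            rw [mem_ball, dist_comm] at hy'
            have hyx : dist x y ≤ s j - ρ + a * s j := by
              have := dist_triangle x (w j) y
              linarith
            have hyd : infDist y (frontier D) ≤ 2 * s j := by
              have := infDist_le_infDist_add_dist (x := y) (y := x) (s := frontier D)
              rw [dist_comm] at this
              nlinarith
            have hyd2 : s j ≤ 6 * c * infDist y (frontier D) := by
              rw [div_le_iff₀ (by positivity)] at hwd
              nlinarith
            have hy0 : 0 < infDist y (frontier D) := by
              by_contra! hneg
              nlinarith
            rw [indicator_of_mem (by simp only [mem_setOf_eq]; nlinarith), ← mul_assoc,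
              ← ENNReal.ofReal_mul (by positivity)]
            gcongr
            have : s j ^ (-(n:ℝ)) ≤ (infDist y (frontier D) / 2) ^ (-(n:ℝ)) :=
              Real.rpow_le_rpow_of_nonpos (by positivity) (by linarith) (by simp)
            refine this.trans (le_of_eq ?_)
            rw [Real.div_rpow hy0.le (by norm_num), Real.rpow_neg (by norm_num : (0:ℝ) ≤ 2)]
            field_simp
        _ = ENNReal.ofReal (K1 * 2 ^ (n:ℝ) * R ^ (δ * p)) * HH n c δ τ p D u x := by
            rw [← mul_assoc, ← ENNReal.ofReal_mul (by positivity)]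
            congr 2
            ring
        _ ≤ _ := by gcongr

/-! ### Weak type estimate -/

lemma measurable_kernel {n : ℕ} {δ p : ℝ} {u : Eucl n → ℝ} (hu : Measurable u) :
    Measurable (fun q : Eucl n × Eucl n => fracKernel n δ p u q.1 q.2) := by
  unfold fracKernel
  have h1 : Measurable (fun q : Eucl n × Eucl n => |u q.1 - u q.2|) := by fun_prop
  have h2 : Measurable (fun q : Eucl n × Eucl n => dist q.1 q.2) := by fun_prop
  exact ((h1.pow_const p).div (h2.pow_const _)).ennreal_ofReal

lemma measurableSet_tauBall {n : ℕ} (τ : ℝ) (D : Set (Eucl n)) :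
    MeasurableSet {q : Eucl n × Eucl n | q.2 ∈ tauBall n τ D q.1} := by
  have h1 : Measurable (fun q : Eucl n × Eucl n => edist q.1 q.2) := by fun_prop
  have h2 : Measurable (fun q : Eucl n × Eucl n =>
      ENNReal.ofReal τ * infEDist q.1 (frontier D)) :=
    (measurable_infEDist.comp measurable_fst).const_mul _
  exact measurableSet_lt h1 h2

lemma measurable_GG {n : ℕ} {δ τ p : ℝ} {D : Set (Eucl n)} {u : Eucl n → ℝ} (hu : Measurable u) :
    Measurable (GG n δ τ p D u) := by
  have hS := measurableSet_tauBall τ D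
  have h : Measurable (fun y => ∫⁻ z, {q : Eucl n × Eucl n | q.2 ∈ tauBall n τ D q.1}.indicator
      (fun q => fracKernel n δ p u q.1 q.2) (y, z)) :=
    ((measurable_kernel hu).indicator hS).lintegral_prod_right'
  convert h using 1
  ext y
  unfold GG
  have hm : MeasurableSet (tauBall n τ D y) := measurable_prodMk_left hS
  rw [← lintegral_indicator hm]
  rfl

lemma measurable_HH_aux {n : ℕ} {c δ τ p : ℝ} {D : Set (Eucl n)} {u : Eucl n → ℝ}
    (hu : Measurable u) : Measurable (fun q : Eucl n × Eucl n =>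
      {y | dist q.1 y ≤ 12 * c * infDist y (frontier D)}.indicator
    (fun y => ENNReal.ofReal (infDist y (frontier D) ^ (-(n : ℝ))) * GG n δ τ p D u y) q.2) := by
  have h1 : Measurable (fun q : Eucl n × Eucl n => dist q.1 q.2) := by fun_prop
  have h2 : Measurable (fun q : Eucl n × Eucl n => 12 * c * infDist q.2 (frontier D)) :=
    (measurable_infDist.comp measurable_snd).const_mul _
  have hS := measurableSet_le h1 h2
  have h3 : Measurable (fun y => ENNReal.ofReal (infDist y (frontier D) ^ (-(n : ℝ))) *
      GG n δ τ p D u y) :=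
    (measurable_infDist.pow_const _).ennreal_ofReal.mul (measurable_GG hu)
  exact (h3.comp measurable_snd).indicator hS

lemma measurable_HH {n : ℕ} {c δ τ p : ℝ} {D : Set (Eucl n)} {u : Eucl n → ℝ} (hu : Measurable u) :
    Measurable (HH n c δ τ p D u) :=
  (measurable_HH_aux hu).lintegral_prod_right'

lemma lintegral_HH {n : ℕ} (hn : 2 ≤ n) {c : ℝ} (hc : 1 ≤ c) {δ τ p : ℝ} {D : Set (Eucl n)}
    (hD : IsOpen D) (hne : (frontier D).Nonempty) {u : Eucl n → ℝ} (hu : Measurable u) :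
    ∫⁻ x, HH n c δ τ p D u x =
      ENNReal.ofReal ((12 * c) ^ n * omg n) * fracEnergyTau n δ τ p D u := by
  have hω := omg_pos n
  unfold HH
  rw [lintegral_lintegral_swap (measurable_HH_aux hu).aemeasurable]
  have : fracEnergyTau n δ τ p D u = ∫⁻ y in D, GG n δ τ p D u y := rfl
  rw [this, ← lintegral_const_mul' _ _ ENNReal.ofReal_ne_top]
  refine setLIntegral_congr_fun hD.measurableSet fun y hy => ?_
  have hd := infDist_frontier_pos hD hne hy
  set d := infDist y (frontier D) with hd'
  have hr : 0 < 12 * c * d := by positivity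
  have e : ∀ x : Eucl n, {y | dist x y ≤ 12 * c * infDist y (frontier D)}.indicator
      (fun y => ENNReal.ofReal (infDist y (frontier D) ^ (-(n : ℝ))) * GG n δ τ p D u y) y =
      (closedBall y (12 * c * d)).indicator
        (fun _ => ENNReal.ofReal (d ^ (-(n : ℝ))) * GG n δ τ p D u y) x := fun x => by
    by_cases h : dist x y ≤ 12 * c * d
    · rw [indicator_of_mem (by exact h), indicator_of_mem (by exact h)]
    · rw [indicator_of_notMem (by exact h), indicator_of_notMem (by exact h)]
  simp only [e]
  have : Nonempty (Fin n) := ⟨⟨0, by omega⟩⟩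
  rw [lintegral_indicator measurableSet_closedBall, setLIntegral_const,
    Measure.addHaar_closedBall_eq_addHaar_ball, vol_ball _ hr]
  rw [mul_right_comm, ← ENNReal.ofReal_mul (by positivity)]
  congr 2
  rw [Real.rpow_neg hd.le, Real.rpow_natCast]
  field_simp
  rw [mul_pow (12 * c) d, mul_comm]

lemma weak_type {n : ℕ} (hn : 2 ≤ n) {c : ℝ} (hc : 1 ≤ c) {τ δ p : ℝ}
    (hτ : τ ∈ Ioo (0:ℝ) 1) (hδ : δ ∈ Ioo (0:ℝ) 1) (hp : 1 ≤ p) (hpn : δ * p < n) :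
    ∃ C : ℝ, 0 < C ∧ ∀ D : Set (Eucl n), IsJohnDomain n c D → ¬ Bornology.IsBounded D →
      ∀ u : Eucl n → ℝ, Measurable u → ∫⁻ y, ENNReal.ofReal |u y| ≠ ⊤ →
      fracEnergyTau n δ τ p D u ≠ ⊤ → ∀ t > 0,
        volume {x ∈ D | t ≤ |u x|} ≤ ENNReal.ofReal
          (C * ((fracEnergyTau n δ τ p D u).toReal / t ^ p) ^ ((n:ℝ) / ((n:ℝ) - δ * p))) := by
  obtain ⟨K, hK, hpt⟩ := pointwise_estimate hn hc hτ hδ hp hpn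
  have hω := omg_pos n
  have hm : 0 < (n:ℝ) - δ * p := by linarith
  have hn0 : (0:ℝ) < n := by exact_mod_cast (by omega : 0 < n)
  set m := (n:ℝ) - δ * p with hmdef
  set B : ℝ := (12 * c) ^ n * omg n with hB
  have hB0 : 0 < B := by positivity
  refine ⟨K * (1 + B) * (2 * K) ^ (δ * p / m), by positivity, ?_⟩
  intro D hD hub u hu hfin hE t ht
  set E := fracEnergyTau n δ τ p D u with hEdef
  have hne := john_frontier_nonempty hn hc hD
  have htp : 0 < t ^ p := by positivity
  have key : ∀ M > E.toReal, volume {x ∈ D | t ≤ |u x|} ≤ ENNReal.ofReal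
      (K * (1 + B) * (2 * K) ^ (δ * p / m) * (M / t ^ p) ^ ((n:ℝ) / m)) := by
    intro M hM
    have hM0 : 0 < M := lt_of_le_of_lt ENNReal.toReal_nonneg hM
    have hEM : E ≤ ENNReal.ofReal M := by
      rw [← ENNReal.ofReal_toReal hE]; exact ENNReal.ofReal_le_ofReal hM.le
    set R : ℝ := (2 * K * M / t ^ p) ^ (1 / m) with hR
    have hQ : 0 < 2 * K * M / t ^ p := by positivity
    have hR0 : 0 < R := by positivity
    have hRb : K * R ^ (δ * p - n) * M = t ^ p / 2 := by
      have : R ^ (δ * p - n) = (2 * K * M / t ^ p)⁻¹ := by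
        rw [hR, ← Real.rpow_mul hQ.le, show 1 / m * (δ * p - n) = -1 by rw [hmdef] at hm ⊢; field_simp; ring,
          Real.rpow_neg_one]
      rw [this]
      field_simp
    set A : ℝ := K * R ^ (δ * p) / t ^ p with hA
    have hA0 : 0 < A := by positivity
    have hAinv : ∀ X : ℝ≥0∞, ENNReal.ofReal (t ^ p) ≤ ENNReal.ofReal (K * R ^ (δ * p)) * X →
        1 ≤ ENNReal.ofReal A * X := by
      intro X hX
      calc (1:ℝ≥0∞) = ENNReal.ofReal (1 / t ^ p) * ENNReal.ofReal (t ^ p) := by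
            rw [← ENNReal.ofReal_mul (by positivity), one_div_mul_cancel htp.ne', ENNReal.ofReal_one]
        _ ≤ ENNReal.ofReal (1 / t ^ p) * (ENNReal.ofReal (K * R ^ (δ * p)) * X) := by gcongr
        _ = _ := by
            rw [← mul_assoc, ← ENNReal.ofReal_mul (by positivity), hA]
            congr 2
            ring
    have hsub : {x ∈ D | t ≤ |u x|} ⊆
        {x | x ∈ D ∧ 1 ≤ ENNReal.ofReal A * GG n δ τ p D u x} ∪
        {x | 1 ≤ ENNReal.ofReal A * HH n c δ τ p D u x} := by
      rintro x ⟨hxD, hxt⟩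
      rcases hpt D hD hub u hu hfin x hxD t ht R hR0 hxt with h | h | h
      · exact Or.inl ⟨hxD, hAinv _ h⟩
      · exfalso
        have h2 : ENNReal.ofReal (t ^ p) ≤ ENNReal.ofReal (t ^ p / 2) := by
          rw [← hRb, ENNReal.ofReal_mul (by positivity)]
          refine h.trans ?_
          gcongr
        rw [ENNReal.ofReal_le_ofReal_iff (by positivity)] at h2
        linarith
      · exact Or.inr (hAinv _ h)
    have hv1 : volume {x | x ∈ D ∧ 1 ≤ ENNReal.ofReal A * GG n δ τ p D u x} ≤
        ENNReal.ofReal A * E := by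
      have h := mul_meas_ge_le_lintegral (μ := volume.restrict D)
        ((measurable_GG (δ := δ) (τ := τ) (p := p) (D := D) hu).const_mul (ENNReal.ofReal A)) 1
      rw [one_mul, lintegral_const_mul' _ _ ENNReal.ofReal_ne_top,
        Measure.restrict_apply' hD.1.measurableSet] at h
      refine le_trans (measure_mono ?_) h
      rintro x ⟨h1, h2⟩
      exact ⟨h2, h1⟩
    have hv2 : volume {x | 1 ≤ ENNReal.ofReal A * HH n c δ τ p D u x} ≤
        ENNReal.ofReal A * (ENNReal.ofReal B * E) := by
      have h := mul_meas_ge_le_lintegral (μ := volume)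
        ((measurable_HH (c := c) (δ := δ) (τ := τ) (p := p) (D := D) hu).const_mul
          (ENNReal.ofReal A)) 1
      rwa [one_mul, lintegral_const_mul' _ _ ENNReal.ofReal_ne_top,
        lintegral_HH hn hc hD.1 hne hu] at h
    calc volume {x ∈ D | t ≤ |u x|} ≤ ENNReal.ofReal A * E +
          ENNReal.ofReal A * (ENNReal.ofReal B * E) :=
          (measure_mono hsub).trans ((measure_union_le _ _).trans (add_le_add hv1 hv2))
      _ ≤ ENNReal.ofReal A * ENNReal.ofReal M +
          ENNReal.ofReal A * (ENNReal.ofReal B * ENNReal.ofReal M) := by gcongr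
      _ = ENNReal.ofReal (A * M + A * (B * M)) := by
          rw [ENNReal.ofReal_add (by positivity) (by positivity), ENNReal.ofReal_mul hA0.le,
            ENNReal.ofReal_mul hA0.le, ENNReal.ofReal_mul hB0.le]
      _ = _ := by
          congr 1
          have e1 : R ^ (δ * p) = (2 * K) ^ (δ * p / m) * (M / t ^ p) ^ (δ * p / m) := by
            rw [hR, ← Real.rpow_mul hQ.le, ← Real.mul_rpow (by positivity) (by positivity)]
            congr 1 <;> ring
          have e2 : (M / t ^ p) ^ ((n:ℝ) / m) = (M / t ^ p) * (M / t ^ p) ^ (δ * p / m) := by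
            rw [← Real.rpow_one_add' (by positivity) (by
              have : 0 < δ := hδ.1
              positivity)]
            congr 1
            rw [hmdef] at hm ⊢
            field_simp
            ring
          rw [hA, e1, e2]
          ring
  have hcont : Filter.Tendsto (fun M : ℝ => ENNReal.ofReal
      (K * (1 + B) * (2 * K) ^ (δ * p / m) * (M / t ^ p) ^ ((n:ℝ) / m)))
      (nhdsWithin E.toReal (Ioi E.toReal)) (nhds (ENNReal.ofReal
      (K * (1 + B) * (2 * K) ^ (δ * p / m) * (E.toReal / t ^ p) ^ ((n:ℝ) / m)))) := by
    apply Filter.Tendsto.mono_left _ nhdsWithin_le_nhds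
    apply Continuous.tendsto
    refine ENNReal.continuous_ofReal.comp (continuous_const.mul ?_)
    exact (Real.continuous_rpow_const (by positivity)).comp (continuous_id.div_const _)
  exact ge_of_tendsto hcont (by filter_upwards [self_mem_nhdsWithin] with M hM using key M hM)

/-! ### Truncation -/

/-- Dyadic truncation. -/
noncomputable def trunc (k : ℤ) (s : ℝ) : ℝ := min s (2 ^ (k + 1)) - min s (2 ^ k)

lemma two_zpow_succ (k : ℤ) : (2:ℝ) ^ (k + 1) = 2 * 2 ^ k := by
  rw [zpow_add_one₀ (by norm_num), mul_comm]

lemma trunc_mono (k : ℤ) : Monotone (trunc k) := by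
  intro a b hab
  have h0 : (0:ℝ) < 2 ^ k := by positivity
  unfold trunc
  rw [two_zpow_succ]
  generalize (2:ℝ) ^ k = X at *
  rcases min_cases a (2 * X) with h1 | h1 <;> rcases min_cases b (2 * X) with h2 | h2 <;>
  rcases min_cases a X with h3 | h3 <;> rcases min_cases b X with h4 | h4 <;> linarith

lemma trunc_zero (k : ℤ) : trunc k 0 = 0 := by
  unfold trunc
  rw [min_eq_left (by positivity), min_eq_left (by positivity), sub_zero]

lemma trunc_nonneg (k : ℤ) {s : ℝ} (hs : 0 ≤ s) : 0 ≤ trunc k s := by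
  rw [← trunc_zero k]; exact trunc_mono k hs

lemma trunc_le (k : ℤ) (s : ℝ) : trunc k s ≤ 2 ^ k := by
  have h0 : (0:ℝ) < 2 ^ k := by positivity
  unfold trunc
  rw [two_zpow_succ]
  generalize (2:ℝ) ^ k = X at *
  rcases min_cases s (2 * X) with h1 | h1 <;> rcases min_cases s X with h3 | h3 <;> linarith

lemma trunc_ge (k : ℤ) {s : ℝ} (hs : 2 ^ (k + 1) ≤ s) : 2 ^ k ≤ trunc k s := by
  have h0 : (0:ℝ) < 2 ^ k := by positivity
  unfold trunc
  rw [two_zpow_succ] at *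
  rw [min_eq_right hs, min_eq_right (by linarith)]
  linarith

lemma trunc_sum_le (F : Finset ℤ) {a b : ℝ} (hab : b ≤ a) :
    ∑ k ∈ F, (trunc k a - trunc k b) ≤ a - b := by
  obtain ⟨N, hN⟩ : ∃ N : ℕ, ∀ k ∈ F, -(N:ℤ) ≤ k ∧ k < N := by
    refine ⟨∑ k ∈ F, (k.natAbs + 1), fun k hk => ?_⟩
    have := Finset.single_le_sum (f := fun k : ℤ => k.natAbs + 1) (fun _ _ => Nat.zero_le _) hk
    omega
  have hnn : ∀ k, 0 ≤ trunc k a - trunc k b := fun k => sub_nonneg.2 (trunc_mono k hab)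
  have hsub : F ⊆ (Finset.range (2 * N)).image (fun i : ℕ => (i:ℤ) - N) := by
    intro k hk
    obtain ⟨h1, h2⟩ := hN k hk
    rw [Finset.mem_image]
    exact ⟨(k + N).toNat, by rw [Finset.mem_range]; omega, by omega⟩
  calc _ ≤ ∑ k ∈ (Finset.range (2 * N)).image (fun i : ℕ => (i:ℤ) - N),
        (trunc k a - trunc k b) := Finset.sum_le_sum_of_subset_of_nonneg hsub fun k _ _ => hnn k
    _ = ∑ i ∈ Finset.range (2 * N), (trunc ((i:ℤ) - N) a - trunc ((i:ℤ) - N) b) :=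
        Finset.sum_image (by intro i _ j _ h; simpa using h)
    _ = ∑ i ∈ Finset.range (2 * N),
        ((fun i : ℕ => min a (2 ^ ((i:ℤ) - N)) - min b (2 ^ ((i:ℤ) - N))) (i + 1) -
        (fun i : ℕ => min a (2 ^ ((i:ℤ) - N)) - min b (2 ^ ((i:ℤ) - N))) i) := by
        refine Finset.sum_congr rfl fun i _ => ?_
        simp only [trunc]
        rw [show ((i + 1 : ℕ) : ℤ) - N = (i:ℤ) - N + 1 by push_cast; ring]
        ring
    _ ≤ a - b := by
        rw [Finset.sum_range_sub (fun i : ℕ => min a ((2:ℝ) ^ ((i:ℤ) - N)) - min b (2 ^ ((i:ℤ) - N)))]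
        generalize (2:ℝ) ^ (((2 * N : ℕ) : ℤ) - N) = X
        generalize (2:ℝ) ^ (((0 : ℕ) : ℤ) - N) = Y
        rcases min_cases a X with h1 | h1 <;> rcases min_cases b X with h2 | h2 <;>
        rcases min_cases a Y with h3 | h3 <;> rcases min_cases b Y with h4 | h4 <;> linarith

lemma trunc_sum_rpow_le (F : Finset ℤ) (a b : ℝ) {p : ℝ} (hp : 1 ≤ p) :
    ∑ k ∈ F, |trunc k a - trunc k b| ^ p ≤ |a - b| ^ p := by
  wlog hab : b ≤ a generalizing a b
  · have := this b a (le_of_not_ge hab)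
    simpa only [abs_sub_comm] using this
  have hnn : ∀ k, 0 ≤ trunc k a - trunc k b := fun k => sub_nonneg.2 (trunc_mono k hab)
  have hab0 : 0 ≤ a - b := sub_nonneg.2 hab
  have split : ∀ x : ℝ, 0 ≤ x → x ^ p = x * x ^ (p - 1) := fun x hx => by
    rw [← Real.rpow_one_add' hx (by linarith)]; congr 1; ring
  rw [abs_of_nonneg hab0, split _ hab0]
  calc ∑ k ∈ F, |trunc k a - trunc k b| ^ p
      ≤ ∑ k ∈ F, (trunc k a - trunc k b) * (a - b) ^ (p - 1) := by
        refine Finset.sum_le_sum fun k _ => ?_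
        rw [abs_of_nonneg (hnn k), split _ (hnn k)]
        refine mul_le_mul_of_nonneg_left ?_ (hnn k)
        refine Real.rpow_le_rpow (hnn k) ?_ (by linarith)
        simpa using trunc_sum_le {k} hab
    _ = (∑ k ∈ F, (trunc k a - trunc k b)) * (a - b) ^ (p - 1) := by rw [Finset.sum_mul]
    _ ≤ _ := by
        gcongr
        exact trunc_sum_le F hab

lemma trunc_measurable (k : ℤ) : Measurable (trunc k) := (trunc_mono k).measurable

lemma kernel_sum {n : ℕ} {δ p : ℝ} (hp : 1 ≤ p) (u : Eucl n → ℝ) (x y : Eucl n) :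
    ∑' k : ℤ, fracKernel n δ p (fun z => trunc k |u z|) x y ≤ fracKernel n δ p u x y := by
  rw [ENNReal.tsum_eq_iSup_sum]
  refine iSup_le fun F => ?_
  unfold fracKernel
  rw [← ENNReal.ofReal_sum_of_nonneg (fun k _ => by positivity), ← Finset.sum_div]
  apply ENNReal.ofReal_le_ofReal
  gcongr
  refine (trunc_sum_rpow_le F _ _ hp).trans ?_
  exact Real.rpow_le_rpow (abs_nonneg _) (abs_abs_sub_abs_le_abs_sub _ _) (by linarith)

lemma fracEnergyTau_eq {n : ℕ} {δ τ p : ℝ} {D : Set (Eucl n)} (v : Eucl n → ℝ) :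
    fracEnergyTau n δ τ p D v = ∫⁻ x in D, GG n δ τ p D v x := rfl

lemma GG_sum {n : ℕ} {δ τ p : ℝ} (hp : 1 ≤ p) {D : Set (Eucl n)} {u : Eucl n → ℝ}
    (huk : ∀ k, Measurable (fun z => trunc k |u z|)) (x : Eucl n) :
    ∑' k : ℤ, GG n δ τ p D (fun z => trunc k |u z|) x ≤ GG n δ τ p D u x := by
  unfold GG
  have hm : ∀ k, AEMeasurable (fun y => fracKernel n δ p (fun z => trunc k |u z|) x y)
      (volume.restrict (tauBall n τ D x)) := fun k =>
    ((measurable_kernel (huk k)).comp measurable_prodMk_left).aemeasurable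
  rw [← lintegral_tsum hm]
  exact lintegral_mono fun y => kernel_sum hp u x y

lemma energy_sum {n : ℕ} {δ τ p : ℝ} (hp : 1 ≤ p) {D : Set (Eucl n)} {u : Eucl n → ℝ}
    (hu : Measurable u) :
    ∑' k : ℤ, fracEnergyTau n δ τ p D (fun z => trunc k |u z|) ≤ fracEnergyTau n δ τ p D u := by
  have huk : ∀ k, Measurable (fun z => trunc k |u z|) := fun k =>
    (trunc_measurable k).comp (measurable_norm.comp hu)
  simp only [fracEnergyTau_eq]
  have hm : ∀ k, AEMeasurable (GG n δ τ p D (fun z => trunc k |u z|)) (volume.restrict D) :=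
    fun k => (measurable_GG (huk k)).aemeasurable
  rw [← lintegral_tsum hm]
  exact lintegral_mono fun x => GG_sum hp huk x

lemma tsum_rpow_le_rpow_tsum {ι : Type*} (f : ι → ℝ≥0∞) {θ : ℝ} (hθ : 1 ≤ θ) :
    ∑' i, f i ^ θ ≤ (∑' i, f i) ^ θ := by
  have split : ∀ x : ℝ≥0∞, x ^ θ = x * x ^ (θ - 1) := fun x => by
    conv_lhs => rw [show θ = 1 + (θ - 1) by ring]
    rw [ENNReal.rpow_add_of_nonneg _ _ (by norm_num) (by linarith), ENNReal.rpow_one]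
  rw [split, ← ENNReal.tsum_mul_right]
  refine ENNReal.tsum_le_tsum fun i => ?_
  rw [split]
  refine mul_le_mul' le_rfl ?_
  exact ENNReal.rpow_le_rpow (ENNReal.le_tsum i) (by linarith)

lemma abs_rpow_le_tsum {q : ℝ} (hq : 0 < q) (v : ℝ) :
    ENNReal.ofReal (|v| ^ q) ≤ ∑' k : ℤ, ENNReal.ofReal (((2:ℝ) ^ (k + 2)) ^ q) *
      {s : ℝ | (2:ℝ) ^ k ≤ |trunc k (|s|)|}.indicator 1 v := by
  by_cases hv : v = 0
  · subst hv; simp [Real.zero_rpow hq.ne']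
  obtain ⟨m, hm1, hm2⟩ := exists_mem_Ico_zpow (abs_pos.2 hv) (one_lt_two (α := ℝ))
  refine le_trans ?_ (ENNReal.le_tsum (m - 1))
  rw [indicator_of_mem]
  · simp only [Pi.one_apply, mul_one]
    apply ENNReal.ofReal_le_ofReal
    refine Real.rpow_le_rpow (abs_nonneg _) ?_ hq.le
    rw [show m - 1 + 2 = m + 1 by ring]
    exact hm2.le
  · refine (trunc_ge (m - 1) ?_).trans (le_abs_self _)
    rwa [sub_add_cancel]

/-- Fractional Sobolev inequality in unbounded John domains:
for an unbounded `c`-John domain `D ⊆ ℝⁿ`, `n ≥ 2`, `τ, δ ∈ (0,1)`, `1 ≤ p < n/δ`,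
there is `C = C(δ,τ,p,n,c) > 0` with
`∫_D |u|^{np/(n-δp)} ≤ C (|u|_{W^{δ,p}_τ(D)}^p)^{n/(n-δp)}` for each
`u ∈ Ẇ^{δ,p}_τ(D)` with compact support in `D`. -/
theorem statement2 (n : ℕ) (hn : 2 ≤ n) (c : ℝ) (hc : 1 ≤ c)
    (τ δ p : ℝ) (hτ : τ ∈ Ioo (0:ℝ) 1) (hδ : δ ∈ Ioo (0:ℝ) 1)
    (hp : 1 ≤ p) (hpn : p < n / δ) :
    ∃ C : ℝ, 0 < C ∧
      ∀ D : Set (Eucl n), IsJohnDomain n c D → ¬ Bornology.IsBounded D →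
        ∀ u : Eucl n → ℝ, Measurable u → fracEnergyTau n δ τ p D u < ⊤ →
          HasCompactSupport u → tsupport u ⊆ D →
          (∫⁻ x in D, ENNReal.ofReal
              (|u x| ^ ((n:ℝ) * p / ((n:ℝ) - δ * p))) ∂volume)
            ≤ ENNReal.ofReal C * fracEnergyTau n δ τ p D u ^ ((n:ℝ) / ((n:ℝ) - δ * p)) := by
  have hpn' : δ * p < n := by
    rw [lt_div_iff₀ hδ.1] at hpn
    linarith
  have hm : 0 < (n:ℝ) - δ * p := by linarith
  have hn0 : (0:ℝ) < n := by exact_mod_cast (by omega : 0 < n)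
  have hp0 : 0 < p := by linarith
  obtain ⟨C, hC, hweak⟩ := weak_type hn hc hτ hδ hp hpn'
  set θ := (n:ℝ) / ((n:ℝ) - δ * p) with hθ
  have hθ1 : 1 ≤ θ := by
    rw [hθ, one_le_div hm]
    have := hδ.1
    nlinarith
  have hθ0 : 0 < θ := by linarith
  set q := (n:ℝ) * p / ((n:ℝ) - δ * p) with hq
  have hqθ : q = p * θ := by rw [hq, hθ]; ring
  have hq0 : 0 < q := by positivity
  refine ⟨4 ^ q * C, by positivity, ?_⟩
  intro D hD hub u hu hE hcs _
  have huk : ∀ k, Measurable (fun z => trunc k |u z|) := fun k =>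
    (trunc_measurable k).comp (by fun_prop : Measurable fun z => |u z|)
  have hfin : ∀ k, ∫⁻ y, ENNReal.ofReal |trunc k (|u y|)| ≠ ⊤ := by
    intro k
    have hle : ∫⁻ y, ENNReal.ofReal |trunc k (|u y|)| ≤
        ∫⁻ y, (tsupport u).indicator (fun _ => ENNReal.ofReal (2 ^ k)) y := by
      refine lintegral_mono fun y => ?_
      by_cases hy : y ∈ tsupport u
      · simp only [indicator_of_mem hy]
        apply ENNReal.ofReal_le_ofReal
        rw [abs_of_nonneg (trunc_nonneg k (abs_nonneg _))]
        exact trunc_le k _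
      · simp [image_eq_zero_of_notMem_tsupport hy, trunc_zero]
    refine (hle.trans_lt ?_).ne
    rw [lintegral_indicator (isClosed_tsupport u).measurableSet, setLIntegral_const]
    exact ENNReal.mul_lt_top ENNReal.ofReal_lt_top hcs.isCompact.measure_lt_top
  have hsum := energy_sum (δ := δ) (τ := τ) hp (D := D) hu
  set Ek : ℤ → ℝ≥0∞ := fun k => fracEnergyTau n δ τ p D (fun z => trunc k |u z|) with hEk
  have hEkfin : ∀ k, Ek k ≠ ⊤ := fun k =>
    (((ENNReal.le_tsum k).trans hsum).trans_lt hE).ne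
  have hDm := hD.1.measurableSet
  have hSm : ∀ k : ℤ, MeasurableSet {x : Eucl n | (2:ℝ) ^ k ≤ |trunc k (|u x|)|} := fun k => by
    have : Measurable (fun x => |trunc k (|u x|)|) := by
      have := huk k
      fun_prop
    exact measurableSet_le measurable_const this
  have hterm : ∀ k : ℤ, ENNReal.ofReal (((2:ℝ) ^ (k + 2)) ^ q) *
      volume {x ∈ D | (2:ℝ) ^ k ≤ |trunc k (|u x|)|} ≤ ENNReal.ofReal (4 ^ q * C) * Ek k ^ θ := by
    intro k
    have h2k : (0:ℝ) < 2 ^ k := by positivity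
    have h := hweak D hD hub _ (huk k) (hfin k) (hEkfin k) (2 ^ k) h2k
    have hEr : 0 ≤ (Ek k).toReal := ENNReal.toReal_nonneg
    calc _ ≤ ENNReal.ofReal (((2:ℝ) ^ (k + 2)) ^ q) *
          ENNReal.ofReal (C * ((Ek k).toReal / ((2:ℝ) ^ k) ^ p) ^ θ) := by gcongr
      _ = ENNReal.ofReal (4 ^ q * C * (Ek k).toReal ^ θ) := by
          rw [← ENNReal.ofReal_mul (by positivity)]
          congr 1
          rw [zpow_add₀ (by norm_num), Real.mul_rpow h2k.le (by positivity),
            Real.div_rpow hEr (by positivity), ← Real.rpow_mul h2k.le, ← hqθ]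
          norm_num
          field_simp
      _ = _ := by
          rw [ENNReal.ofReal_mul (by positivity), ← ENNReal.ofReal_rpow_of_nonneg hEr hθ0.le,
            ENNReal.ofReal_toReal (hEkfin k)]
  calc ∫⁻ x in D, ENNReal.ofReal (|u x| ^ q)
      ≤ ∫⁻ x in D, ∑' k : ℤ, ENNReal.ofReal (((2:ℝ) ^ (k + 2)) ^ q) *
        {x : Eucl n | (2:ℝ) ^ k ≤ |trunc k (|u x|)|}.indicator 1 x :=
        lintegral_mono fun x => abs_rpow_le_tsum hq0 (u x)
    _ = ∑' k : ℤ, ENNReal.ofReal (((2:ℝ) ^ (k + 2)) ^ q) *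
        volume {x ∈ D | (2:ℝ) ^ k ≤ |trunc k (|u x|)|} := by
        rw [lintegral_tsum fun k => ((measurable_one.indicator (hSm k)).const_mul _).aemeasurable]
        refine tsum_congr fun k => ?_
        rw [lintegral_const_mul' _ _ ENNReal.ofReal_ne_top, lintegral_indicator_one (hSm k),
          Measure.restrict_apply (hSm k)]
        congr 2
        ext x
        exact and_comm
    _ ≤ ∑' k : ℤ, ENNReal.ofReal (4 ^ q * C) * Ek k ^ θ := ENNReal.tsum_le_tsum hterm
    _ = ENNReal.ofReal (4 ^ q * C) * ∑' k : ℤ, Ek k ^ θ := ENNReal.tsum_mul_left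
    _ ≤ ENNReal.ofReal (4 ^ q * C) * fracEnergyTau n δ τ p D u ^ θ := by
        gcongr
        exact (tsum_rpow_le_rpow_tsum Ek hθ1).trans (ENNReal.rpow_le_rpow hsum hθ0.le)
end

section
/- Suppose D is a bounded c-John domain in ℝⁿ, n ≥ 2, and let κ ≥ 1 be fixed. Let δ ∈ [0,1] and 1 ≤ p with δp < n be given, and set q = np/(n−δp). Then there exists a constant C = C(n, κ, p, δ, c) such that the inequality inf_{a∈ℝ} sup_{t>0} |{x ∈ D : |u(x) − a| > t}| · t^q ≤ C |u|_{A^{δ,p}_κ(D)}^q holds for every u ∈ L¹(D). -/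
open MeasureTheory Metric Set
open scoped ENNReal NNReal BigOperators

namespace JP
open Filter Topology

abbrev X (n : ℕ) : Type := Fin n → ℝ

/-- Indices of dyadic cubes: level and integer position. -/
abbrev I (n : ℕ) : Type := ℤ × (Fin n → ℤ)

variable {n : ℕ}

noncomputable def side (i : I n) : ℝ := (2:ℝ) ^ i.1

theorem side_pos (i : I n) : 0 < side i := by unfold side; positivity

noncomputable def idx (k : ℤ) (x : X n) : Fin n → ℤ := fun i => ⌊x i / (2:ℝ) ^ k⌋

/-- half-open dyadic cube -/
def Q (i : I n) : Set (X n) := {y | idx i.1 y = i.2}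

noncomputable def ctr (i : I n) : X n := fun l => ((i.2 l : ℝ) + 1/2) * side i

def par (i : I n) : I n := (i.1 + 1, fun l => i.2 l / 2)

theorem side_par (i : I n) : side (par i) = 2 * side i := by
  unfold side par
  rw [zpow_add₀ (by norm_num)]; ring

theorem mem_Q {i : I n} {y : X n} : y ∈ Q i ↔ ∀ l, (i.2 l : ℝ) * side i ≤ y l ∧ y l < (i.2 l + 1) * side i := by
  have h := side_pos i
  unfold Q idx
  simp only [mem_setOf_eq, funext_iff, Int.floor_eq_iff]
  refine forall_congr' fun l => ?_
  rw [le_div_iff₀ (by exact h), div_lt_iff₀ (by exact h)]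
  rfl

theorem mem_Q_self (k : ℤ) (x : X n) : x ∈ Q (k, idx k x) := rfl

theorem ctr_mem (i : I n) : ctr i ∈ Q i := by
  have h := side_pos i
  rw [mem_Q]; intro l; unfold ctr
  constructor <;> nlinarith

theorem idx_succ (k : ℤ) (x : X n) : idx (k+1) x = fun l => idx k x l / 2 := by
  funext l
  unfold idx
  have := Int.floor_div_natCast (x l / (2:ℝ)^k) 2
  rw [zpow_add₀ (by norm_num), zpow_one, ← div_div]
  exact_mod_cast this

theorem idx_mono {k k' : ℤ} (h : k ≤ k') {x y : X n} (hxy : idx k x = idx k y) :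
    idx k' x = idx k' y := by
  induction k', h using Int.le_induction with
  | base => exact hxy
  | succ m _ ih => rw [idx_succ, idx_succ, ih]

theorem Q_sub_par (i : I n) : Q i ⊆ Q (par i) := by
  intro y hy
  have : idx i.1 y = i.2 := hy
  change idx (i.1+1) y = _
  rw [idx_succ, this]; rfl

/-- nestedness -/
theorem Q_nested {i j : I n} (h : i.1 ≤ j.1) {x : X n} (hi : x ∈ Q i) (hj : x ∈ Q j) : Q i ⊆ Q j := by
  intro y hy
  have h1 : idx i.1 x = i.2 := hi
  have h2 : idx j.1 x = j.2 := hj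
  have h3 : idx i.1 y = i.2 := hy
  change idx j.1 y = j.2
  rw [← h2]; exact idx_mono h (h3.trans h1.symm)

theorem Q_eq_of_level {i j : I n} (h : i.1 = j.1) {x : X n} (hi : x ∈ Q i) (hj : x ∈ Q j) : i = j := by
  have h1 : idx i.1 x = i.2 := hi
  have h2 : idx j.1 x = j.2 := hj
  refine Prod.ext h ?_
  rw [← h1, ← h2, h]

theorem Q_sub_closedBall (i : I n) : Q i ⊆ closedBall (ctr i) (side i / 2) := by
  intro y hy
  have h := side_pos i
  rw [mem_closedBall, dist_pi_le_iff (by positivity)]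
  intro l
  have := mem_Q.1 hy l
  rw [Real.dist_eq, abs_le]; unfold ctr
  constructor <;> nlinarith

theorem ball_sub_Q (i : I n) : ball (ctr i) (side i / 2) ⊆ Q i := by
  intro y hy
  have h := side_pos i
  rw [mem_ball, dist_pi_lt_iff (by positivity)] at hy
  rw [mem_Q]
  intro l
  have := hy l
  rw [Real.dist_eq, abs_lt] at this; unfold ctr at this
  constructor <;> nlinarith

theorem dist_le_side {i : I n} {x y : X n} (hx : x ∈ Q i) (hy : y ∈ Q i) : dist x y ≤ side i := by
  have h1 := Q_sub_closedBall i hx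
  have h2 := Q_sub_closedBall i hy
  rw [mem_closedBall] at h1 h2
  linarith [dist_triangle_right x y (ctr i)]

theorem measurableSet_Q (i : I n) : MeasurableSet (Q i) := by
  have : Q i = Set.pi univ fun l => Ico ((i.2 l : ℝ) * side i) ((i.2 l + 1) * side i) := by
    ext y; rw [mem_Q]; simp
  rw [this]
  exact MeasurableSet.univ_pi fun l => measurableSet_Ico

theorem vol_cb (z : X n) {r : ℝ} (hr : 0 ≤ r) :
    volume (closedBall z r) = ENNReal.ofReal ((2*r)^n) := by
  rw [Real.volume_pi_closedBall z hr]; simp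

theorem vol_Q (i : I n) : volume (Q i) = ENNReal.ofReal (side i ^ n) := by
  have h := side_pos i
  have e : 2 * (side i / 2) = side i := by ring
  apply le_antisymm
  · refine (measure_mono (Q_sub_closedBall i)).trans ?_
    rw [vol_cb _ (by positivity), e]
  · refine le_trans ?_ (measure_mono (ball_sub_Q i))
    rw [Real.volume_pi_ball _ (by positivity), e]; simp

theorem Q_ae_eq (i : I n) : Q i =ᵐ[volume] closedBall (ctr i) (side i / 2) := by
  have h := side_pos i
  refine ae_eq_of_subset_of_measure_ge (Q_sub_closedBall i) ?_ (measurableSet_Q i).nullMeasurableSet ?_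
  · rw [vol_Q, vol_cb _ (by positivity)]; apply le_of_eq; congr 2; ring
  · rw [vol_cb _ (by positivity)]; exact ENNReal.ofReal_ne_top

theorem vol_Q_pos (i : I n) : volume (Q i) ≠ 0 := by
  rw [vol_Q]; have := side_pos i; simp; positivity

theorem vol_Q_top (i : I n) : volume (Q i) ≠ ∞ := by
  rw [vol_Q]; exact ENNReal.ofReal_ne_top

theorem vol_cb_Q (z : X n) (i : I n) {s : ℝ} (hs : 0 ≤ s) :
    volume (closedBall z (s * side i)) = ENNReal.ofReal ((2*s)^n) * volume (Q i) := by
  have h := side_pos i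
  rw [vol_cb _ (by positivity), vol_Q, ← ENNReal.ofReal_mul (by positivity), ← mul_pow]
  congr 2; ring

theorem vol_par (i : I n) : volume (Q (par i)) = ENNReal.ofReal (2^n) * volume (Q i) := by
  have h := side_pos i
  rw [vol_Q, vol_Q, side_par, mul_pow, ENNReal.ofReal_mul (by positivity)]

/-- maximal elements satisfying a predicate -/
def Mx (P : I n → Prop) : Set (I n) := {i | P i ∧ ∀ j, i.1 < j.1 → Q i ⊆ Q j → ¬ P j}

theorem Mx_disj (P : I n → Prop) : (Mx P).PairwiseDisjoint Q := by
  intro i hi j hj hij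
  rw [Function.onFun, Set.disjoint_left]
  intro x hxi hxj
  rcases lt_trichotomy i.1 j.1 with h | h | h
  · exact hi.2 j h (Q_nested h.le hxi hxj) hj.1
  · exact hij (Q_eq_of_level h hxi hxj)
  · exact hj.2 i h (Q_nested h.le hxj hxi) hi.1

theorem Mx_exists {P : I n → Prop} (B : ℤ) (hB : ∀ i, P i → i.1 ≤ B) {i : I n} (hi : P i) :
    ∃ j ∈ Mx P, Q i ⊆ Q j ∧ i.1 ≤ j.1 := by
  obtain ⟨k, ⟨⟨j, hj, hij, hk⟩, hle⟩, hmax⟩ := Int.exists_greatest_of_bdd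
    (P := fun k => (∃ j, P j ∧ Q i ⊆ Q j ∧ j.1 = k) ∧ i.1 ≤ k)
    ⟨B, fun k hk => by obtain ⟨⟨j, hj, _, rfl⟩, _⟩ := hk; exact hB j hj⟩ ⟨i.1, ⟨i, hi, subset_rfl, rfl⟩, le_rfl⟩
  refine ⟨j, ⟨hj, fun l hl hjl hPl => ?_⟩, hij, hk ▸ hle⟩
  have := hmax l.1 ⟨⟨l, hPl, hij.trans hjl, rfl⟩, by omega⟩
  omega

theorem Mx_par {P : I n → Prop} {i : I n} (hi : i ∈ Mx P) : ¬ P (par i) :=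
  hi.2 _ (by simp [par]) (Q_sub_par i)

theorem vol_iUnion_disj {J : Set (I n)} (hJ : J.PairwiseDisjoint Q) :
    volume (⋃ i ∈ J, Q i) = ∑' i : J, volume (Q (i : I n)) :=
  measure_biUnion J.to_countable hJ (fun i _ => measurableSet_Q i)

end JP

namespace JP
open Filter Topology
variable {n : ℕ}

noncomputable def osc (u : X n → ℝ) (z : X n) (r : ℝ) : ℝ≥0∞ :=
  ∫⁻ x in closedBall z r, ‖u x - ⨍ y in closedBall z r, u y‖ₑ

noncomputable def nu (δ : ℝ) (u : X n → ℝ) (z : X n) (r : ℝ) : ℝ≥0∞ :=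
  (volume (closedBall z r)) ^ (-1 - δ / n : ℝ) * osc u z r

def HS (κ δ p : ℝ) (D : Set (X n)) (u : X n → ℝ) (S : ℝ≥0∞) : Prop :=
  ∀ (T : Finset (I n)) (z : I n → X n) (r : I n → ℝ),
    (∀ i ∈ T, 0 < r i ∧ closedBall (z i) (κ * r i) ⊆ D) →
    ((T : Set (I n)).PairwiseDisjoint fun i => closedBall (z i) (r i)) →
    ∑ i ∈ T, (nu δ u (z i) (r i)) ^ p * volume (closedBall (z i) (r i)) ≤ S ^ p

theorem holder {δ p : ℝ} (hδ : 0 ≤ δ) (hp : 1 ≤ p) (J : Set (I n)) (o v : I n → ℝ≥0∞)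
    (hv : ∀ i, v i ≠ 0) (hv' : ∀ i, v i ≠ ∞) {A : ℝ≥0∞}
    (h : ∑' i : J, ((v i) ^ (-1 - δ / n : ℝ) * o i) ^ p * v i ≤ A) :
    ∑' i : J, o i ≤ A ^ (1 / p) * (∑' i : J, v i) ^ (1 - 1 / p + δ / n) := by
  set T := ∑' i : J, v i with hT
  have hdn : 0 ≤ δ / n := by positivity
  rw [ENNReal.tsum_eq_iSup_sum]
  refine iSup_le fun F => ?_
  set a : J → ℝ≥0∞ := fun i => (v i) ^ (-1 - δ / n : ℝ) * o i with ha
  have h1 : ∀ i : J, o i ≤ T ^ (δ / n) * (v i * a i) := by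
    intro i
    have e : (o i : ℝ≥0∞) = (v i) ^ (δ / n) * (v i * a i) := by
      have e1 : (v i : ℝ≥0∞) ^ (δ / n) * (v i * (v i ^ (-1 - δ / n : ℝ) * o i))
         = (v i ^ (δ / n) * v i ^ (1:ℝ) * v i ^ (-1 - δ / n : ℝ)) * o i := by
        rw [ENNReal.rpow_one]; ring
      rw [ha]; simp only
      rw [e1, ← ENNReal.rpow_add _ _ (hv i) (hv' i), ← ENNReal.rpow_add _ _ (hv i) (hv' i)]
      ring_nf; simp
    calc (o i : ℝ≥0∞) = _ := e
      _ ≤ _ := by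
        gcongr
        exact ENNReal.le_tsum (f := fun i : J => v i) i
  have hF1 : ∑ i ∈ F, (v (i:I n)) ≤ T := ENNReal.sum_le_tsum F
  have hF2 : ∑ i ∈ F, (v (i:I n)) * a i ^ p ≤ A := by
    refine le_trans ?_ h
    refine le_trans (le_of_eq ?_) (ENNReal.sum_le_tsum F)
    refine Finset.sum_congr rfl fun i _ => ?_
    rw [mul_comm]
  have hp1 : p⁻¹ ≤ 1 := inv_le_one_of_one_le₀ hp
  calc ∑ i ∈ F, o (i : I n) ≤ ∑ i ∈ F, T ^ (δ / n) * (v i * a i) := Finset.sum_le_sum fun i _ => h1 i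
    _ = T ^ (δ / n) * ∑ i ∈ F, (v i * a i) := by rw [Finset.mul_sum]
    _ ≤ T ^ (δ / n) * ((∑ i ∈ F, v (i : I n)) ^ (1 - p⁻¹) * (∑ i ∈ F, v (i : I n) * a i ^ p) ^ p⁻¹) := by
        gcongr
        exact ENNReal.inner_le_weight_mul_Lp_of_nonneg F hp (fun i : J => v i) a
    _ ≤ T ^ (δ / n) * (T ^ (1 - p⁻¹) * A ^ p⁻¹) := by
        gcongr
    _ = _ := by
        rw [one_div, ENNReal.rpow_add_of_nonneg _ _ (by linarith) hdn]; ring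

theorem osc_tendsto {u : X n → ℝ} (hu : Measurable u) (hn : 1 ≤ n) {z : X n} {r : ℝ} (hr : 0 < r)
    (hInt : IntegrableOn u (closedBall z r)) (s : ℕ → ℝ) (hs0 : ∀ m, 0 < s m) (hs1 : ∀ m, s m < 1)
    (hsm : Monotone s) (hs : Tendsto s atTop (𝓝 1)) :
    Tendsto (fun m => osc u z (s m * r)) atTop (𝓝 (osc u z r)) := by
  haveI : Nonempty (Fin n) := ⟨⟨0, hn⟩⟩
  set B : ℕ → Set (X n) := fun m => closedBall z (s m * r) with hB
  have hBm : ∀ m, MeasurableSet (B m) := fun m => measurableSet_closedBall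
  have hBmono : Monotone B := fun a b hab => closedBall_subset_closedBall (by gcongr; exact hsm hab)
  have hBr : ∀ m, B m ⊆ ball z r := fun m => closedBall_subset_ball (by nlinarith [hs1 m])
  have hsr : Tendsto (fun m => s m * r) atTop (𝓝 r) := by simpa using hs.mul_const r
  have hev : ∀ x ∈ ball z r, ∀ᶠ m in atTop, x ∈ B m := by
    intro x hx
    have := hsr.eventually (lt_mem_nhds (mem_ball.1 hx))
    filter_upwards [this] with m hm using mem_closedBall.2 hm.le
  have hU : (⋃ m, B m) = ball z r := by
    apply subset_antisymm (iUnion_subset hBr)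
    intro x hx
    obtain ⟨m, hm⟩ := (hev x hx).exists
    exact mem_iUnion.2 ⟨m, hm⟩
  have hae : (closedBall z r : Set (X n)) =ᵐ[volume] ball z r := by
    symm
    refine ae_eq_of_subset_of_measure_ge ball_subset_closedBall ?_ measurableSet_ball.nullMeasurableSet ?_
    · rw [Real.volume_pi_closedBall _ hr.le, Real.volume_pi_ball _ hr]
    · exact measure_closedBall_lt_top.ne
  set A := fun m => ⨍ y in B m, u y with hA
  set a := ⨍ y in closedBall z r, u y with ha
  have hAa : Tendsto A atTop (𝓝 a) := by
    have h1 : Tendsto (fun m => ∫ y in B m, u y) atTop (𝓝 (∫ y in closedBall z r, u y)) := by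
      rw [setIntegral_congr_set hae, ← hU]
      apply tendsto_setIntegral_of_monotone hBm hBmono
      rw [hU]; exact hInt.mono_set ball_subset_closedBall
    have h2 : Tendsto (fun m => volume.real (B m)) atTop (𝓝 (volume.real (closedBall z r))) := by
      have e : ∀ m, volume.real (B m) = (2 * (s m * r)) ^ n := by
        intro m
        have := hs0 m
        rw [measureReal_def, vol_cb _ (by positivity), ENNReal.toReal_ofReal (by positivity)]
      have e' : volume.real (closedBall z r) = (2 * r) ^ n := by
        rw [measureReal_def, vol_cb _ (by positivity), ENNReal.toReal_ofReal (by positivity)]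
      simp_rw [e, e']
      exact (hsr.const_mul 2).pow n
    have hne : volume.real (closedBall z r) ≠ 0 := by
      rw [measureReal_def, vol_cb _ (by positivity), ENNReal.toReal_ofReal (by positivity)]
      positivity
    simp only [hA, ha, setAverage_eq]
    exact (h2.inv₀ hne).smul h1
  obtain ⟨M, hM⟩ : ∃ M : ℝ, ∀ m, |A m| ≤ M := by
    obtain ⟨M, hM⟩ := hAa.abs.bddAbove_range
    exact ⟨M, fun m => hM ⟨m, rfl⟩⟩
  have hosc : ∀ m, osc u z (s m * r) = ∫⁻ x, (B m).indicator (fun x => ‖u x - A m‖ₑ) x := by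
    intro m; rw [lintegral_indicator (hBm m)]; rfl
  have hosc' : osc u z r = ∫⁻ x, (ball z r).indicator (fun x => ‖u x - a‖ₑ) x := by
    rw [lintegral_indicator measurableSet_ball]
    exact setLIntegral_congr hae
  rw [hosc']; simp_rw [hosc]
  refine tendsto_lintegral_of_dominated_convergence
    ((closedBall z r).indicator fun x => ‖u x‖ₑ + ENNReal.ofReal M) ?_ ?_ ?_ ?_
  · intro m
    exact Measurable.indicator (by fun_prop) (hBm m)
  · intro m
    refine Filter.Eventually.of_forall fun x => ?_
    refine indicator_le_indicator_of_subset ((hBr m).trans ball_subset_closedBall) (fun _ => zero_le) x |>.trans ?_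
    refine indicator_le_indicator ?_
    refine (enorm_sub_le).trans ?_
    gcongr
    rw [← ofReal_norm]
    exact ENNReal.ofReal_le_ofReal (hM m)
  · rw [lintegral_indicator measurableSet_closedBall, lintegral_add_right _ measurable_const]
    refine (ENNReal.add_lt_top.2 ⟨hInt.2, ?_⟩).ne
    simp only [lintegral_const, MeasurableSet.univ, Measure.restrict_apply, univ_inter]
    exact ENNReal.mul_lt_top ENNReal.ofReal_lt_top measure_closedBall_lt_top
  · refine Filter.Eventually.of_forall fun x => ?_
    by_cases hx : x ∈ ball z r
    · rw [indicator_of_mem hx]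
      have : Tendsto (fun m => ‖u x - A m‖ₑ) atTop (𝓝 ‖u x - a‖ₑ) := (hAa.const_sub (u x)).enorm
      refine this.congr' ?_
      filter_upwards [hev x hx] with m hm
      rw [indicator_of_mem hm]
    · rw [indicator_of_notMem hx]
      have : ∀ m, (B m).indicator (fun x => ‖u x - A m‖ₑ) x = 0 := fun m =>
        indicator_of_notMem (fun h => hx (hBr m h)) _
      simp_rw [this]; exact tendsto_const_nhds

theorem vol_cb_ne (z : X n) {r : ℝ} (hr : 0 < r) : volume (closedBall z r) ≠ 0 := by
  rw [vol_cb _ hr.le]; simp; positivity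

theorem vol_cb_top (z : X n) (r : ℝ) : volume (closedBall z r) ≠ ∞ := measure_closedBall_lt_top.ne

theorem osc_lt_top {u : X n → ℝ} {z : X n} {r : ℝ} 
    (hInt : IntegrableOn u (closedBall z r)) : osc u z r ≠ ∞ := by
  have : IntegrableOn (fun x => u x - ⨍ y in closedBall z r, u y) (closedBall z r) :=
    hInt.sub (integrableOn_const measure_closedBall_lt_top.ne)
  exact this.2.ne

theorem term_tendsto {δ p : ℝ} (hp : 1 ≤ p) {u : X n → ℝ} (hu : Measurable u) (hn : 1 ≤ n) {z : X n} {r : ℝ} (hr : 0 < r)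
    (hInt : IntegrableOn u (closedBall z r)) (s : ℕ → ℝ) (hs0 : ∀ m, 0 < s m) (hs1 : ∀ m, s m < 1)
    (hsm : Monotone s) (hs : Tendsto s atTop (𝓝 1)) :
    Tendsto (fun m => nu δ u z (s m * r) ^ p * volume (closedBall z (s m * r))) atTop
      (𝓝 (nu δ u z r ^ p * volume (closedBall z r))) := by
  have h1 := osc_tendsto hu hn hr hInt s hs0 hs1 hsm hs
  have hsr : Tendsto (fun m => s m * r) atTop (𝓝 r) := by simpa using hs.mul_const r
  have h2 : Tendsto (fun m => volume (closedBall z (s m * r))) atTop (𝓝 (volume (closedBall z r))) := by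
    rw [vol_cb _ hr.le]
    have : ∀ m, volume (closedBall z (s m * r)) = ENNReal.ofReal ((2 * (s m * r)) ^ n) := fun m =>
      vol_cb _ (by have := hs0 m; positivity)
    simp_rw [this]
    exact ENNReal.tendsto_ofReal ((hsr.const_mul 2).pow n)
  have h3 : Tendsto (fun m => nu δ u z (s m * r)) atTop (𝓝 (nu δ u z r)) := by
    unfold nu
    refine ENNReal.Tendsto.mul (h2.ennrpow_const _) (Or.inr (osc_lt_top hInt)) h1 (Or.inr ?_)
    exact ENNReal.rpow_ne_top_of_ne_zero (vol_cb_ne z hr) (vol_cb_top z r)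
  refine ENNReal.Tendsto.mul (h3.ennrpow_const _) (Or.inr (vol_cb_top z r)) h2 (Or.inr ?_)
  refine ENNReal.rpow_ne_top_of_nonneg (by linarith) ?_
  exact ENNReal.mul_ne_top (ENNReal.rpow_ne_top_of_ne_zero (vol_cb_ne z hr) (vol_cb_top z r)) (osc_lt_top hInt)

/-- the seminorm bound for disjoint dyadic cubes -/
theorem dyadic_sum {κ δ p : ℝ} (hκ : 1 ≤ κ) (hp : 1 ≤ p) {D : Set (X n)} {u : X n → ℝ} {S : ℝ≥0∞}
    (hu : Measurable u) (hn : 1 ≤ n) (hInt : IntegrableOn u D) (hS : HS κ δ p D u S)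
    {J : Set (I n)} (hJ : J.PairwiseDisjoint Q)
    (hJD : ∀ i ∈ J, closedBall (ctr i) (κ * (side i / 2)) ⊆ D) :
    ∑' i : J, nu δ u (ctr (i : I n)) (side (i : I n) / 2) ^ p * volume (closedBall (ctr (i : I n)) (side (i : I n) / 2)) ≤ S ^ p := by
  rw [ENNReal.tsum_eq_iSup_sum]
  refine iSup_le fun F => ?_
  set s : ℕ → ℝ := fun m => 1 - 1 / ((m:ℝ) + 2) with hsdef
  have hs0 : ∀ m, 0 < s m := by
    intro m; rw [hsdef]; simp only
    have : (1:ℝ) / (m + 2) < 1 := by rw [div_lt_one (by positivity)]; have : (0:ℝ) ≤ m := by positivity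
                                     linarith
    linarith
  have hs1 : ∀ m, s m < 1 := by
    intro m; rw [hsdef]; simp only
    have : (0:ℝ) < 1 / (m + 2) := by positivity
    linarith
  have hsm : Monotone s := by
    intro a b hab
    rw [hsdef]; simp only
    have : (a:ℝ) ≤ b := by exact_mod_cast hab
    gcongr
  have hs : Tendsto s atTop (𝓝 1) := by
    have h : Tendsto (fun m : ℕ => 1 / ((m:ℝ) + 2)) atTop (𝓝 0) := by
      have := (tendsto_one_div_add_atTop_nhds_zero_nat (𝕜 := ℝ)).comp (tendsto_add_atTop_nat 1)
      refine this.congr fun m => ?_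
      simp only [Function.comp_apply, Nat.cast_add, Nat.cast_one]; ring_nf
    simpa [hsdef] using h.const_sub 1
  have hlim : Tendsto (fun m => ∑ i ∈ F, nu δ u (ctr (i : I n)) (s m * (side (i : I n) / 2)) ^ p *
      volume (closedBall (ctr (i : I n)) (s m * (side (i : I n) / 2)))) atTop
      (𝓝 (∑ i ∈ F, nu δ u (ctr (i : I n)) (side (i : I n) / 2) ^ p * volume (closedBall (ctr (i : I n)) (side (i : I n) / 2)))) := by
    refine tendsto_finset_sum _ fun i _ => ?_
    have hsd := side_pos (i : I n)
    refine term_tendsto hp hu hn (by positivity) (hInt.mono_set ?_) s hs0 hs1 hsm hs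
    refine Subset.trans (closedBall_subset_closedBall ?_) (hJD i i.2)
    nlinarith
  refine le_of_tendsto hlim (Filter.Eventually.of_forall fun m => ?_)
  classical
  have := hS (F.image (fun i : J => (i : I n))) ctr (fun i => s m * (side i / 2)) ?_ ?_
  · rwa [Finset.sum_image (fun a _ b _ h => Subtype.ext h)] at this
  · intro i hi
    obtain ⟨j, -, rfl⟩ := Finset.mem_image.1 hi
    have hsd := side_pos (j : I n)
    refine ⟨by have := hs0 m; positivity, Subset.trans (closedBall_subset_closedBall ?_) (hJD j j.2)⟩
    have := (hs1 m).le
    have h2 : s m * (side (j : I n) / 2) ≤ side (j : I n) / 2 := by nlinarith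
    nlinarith
  · intro i hi j hj hij
    obtain ⟨i, -, rfl⟩ := Finset.mem_image.1 (Finset.mem_coe.1 hi)
    obtain ⟨j, -, rfl⟩ := Finset.mem_image.1 (Finset.mem_coe.1 hj)
    have key : ∀ k : I n, closedBall (ctr k) (s m * (side k / 2)) ⊆ Q k := fun k =>
      Subset.trans (closedBall_subset_ball (by have := side_pos k; nlinarith [hs1 m])) (ball_sub_Q k)
    exact (hJ i.2 j.2 hij).mono (key _) (key _)

end JP

namespace JP
open Filter Topology
variable {n : ℕ}

def good (K : ℝ) (D : Set (X n)) (i : I n) : Prop := ∀ y ∈ Q i, K * side i ≤ infDist y Dᶜ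

def Wh (K : ℝ) (D : Set (X n)) : Set (I n) := Mx (good K D)

theorem mem_of_infDist_pos {D : Set (X n)} {y : X n} (h : 0 < infDist y Dᶜ) : y ∈ D := by
  by_contra hy
  have := infDist_zero_of_mem (s := Dᶜ) hy
  linarith

theorem good_sub {K : ℝ} (hK : 0 < K) {D : Set (X n)} {i : I n} (hi : good K D i) : Q i ⊆ D := by
  intro y hy
  exact mem_of_infDist_pos (lt_of_lt_of_le (mul_pos hK (side_pos i)) (hi y hy))

theorem good_cb {K : ℝ} {D : Set (X n)} {i : I n} (hi : good K D i) {r : ℝ} (hr : r < K * side i) :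
    closedBall (ctr i) r ⊆ D := by
  intro y hy
  apply mem_of_infDist_pos
  have h1 := hi _ (ctr_mem i)
  have h2 : infDist (ctr i) Dᶜ ≤ infDist y Dᶜ + dist (ctr i) y := infDist_le_infDist_add_dist
  rw [mem_closedBall'] at hy
  linarith

theorem good_of_small {K : ℝ} {D : Set (X n)} {x : X n} {k : ℤ}
    (h : (K + 1) * (2:ℝ) ^ k ≤ infDist x Dᶜ) : good K D (k, idx k x) := by
  intro y hy
  have h1 := dist_le_side (mem_Q_self k x) hy
  have h2 : infDist x Dᶜ ≤ infDist y Dᶜ + dist x y := infDist_le_infDist_add_dist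
  have : side ((k, idx k x) : I n) = (2:ℝ)^k := rfl
  rw [this] at h1 ⊢
  linarith

theorem infDist_pos_of_mem {D : Set (X n)} (hD : IsOpen D) (hne : (Dᶜ).Nonempty) {x : X n} (hx : x ∈ D) :
    0 < infDist x Dᶜ := by
  rw [← hD.isClosed_compl.notMem_iff_infDist_pos hne]
  simpa using hx

theorem tendsto_zpow_neg : Tendsto (fun m : ℕ => (2:ℝ) ^ (-(m:ℤ))) atTop (𝓝 0) := by
  have : (fun m : ℕ => (2:ℝ) ^ (-(m:ℤ))) = fun m : ℕ => ((1:ℝ)/2) ^ m := by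
    funext m; rw [zpow_neg, zpow_natCast]; simp
  rw [this]
  exact tendsto_pow_atTop_nhds_zero_of_lt_one (by norm_num) (by norm_num)

theorem eventually_good {K : ℝ} {D : Set (X n)} (hD : IsOpen D) (hne : (Dᶜ).Nonempty) {x : X n} (hx : x ∈ D) :
    ∀ᶠ m : ℕ in atTop, good K D (-(m:ℤ), idx (-(m:ℤ)) x) := by
  have h0 := infDist_pos_of_mem hD hne hx
  have : Tendsto (fun m : ℕ => (K+1) * (2:ℝ) ^ (-(m:ℤ))) atTop (𝓝 0) := by
    simpa using tendsto_zpow_neg.const_mul (K+1)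
  filter_upwards [this.eventually (gt_mem_nhds h0)] with m hm using good_of_small hm.le

theorem good_mono {K : ℝ} (hK : 0 ≤ K) {D : Set (X n)} {i j : I n} (h : i.1 ≤ j.1) (hij : Q i ⊆ Q j)
    (hj : good K D j) : good K D i := by
  intro y hy
  refine le_trans ?_ (hj y (hij hy))
  unfold side
  gcongr
  norm_num

theorem level_bdd {K : ℝ} (hK : 1 ≤ K) {D : Set (X n)} (hb : Bornology.IsBounded D) (hne : (Dᶜ).Nonempty) :
    ∃ B : ℤ, ∀ i : I n, good K D i → i.1 ≤ B := by
  obtain ⟨w, hw⟩ := hne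
  obtain ⟨R, hR⟩ := hb.subset_closedBall w
  obtain ⟨b, hb⟩ := pow_unbounded_of_one_lt R (by norm_num : (1:ℝ) < 2)
  refine ⟨b, fun i hi => ?_⟩
  by_contra! hlt
  have h1 := hi _ (ctr_mem i)
  have h2 : infDist (ctr i) Dᶜ ≤ dist (ctr i) w := infDist_le_dist_of_mem hw
  have h3 := mem_closedBall.1 (hR (good_sub (by linarith) hi (ctr_mem i)))
  have h4 : (2:ℝ) ^ (b:ℤ) ≤ side i := zpow_le_zpow_right₀ (by norm_num) hlt.le
  rw [zpow_natCast] at h4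
  have h5 := le_mul_of_one_le_left (side_pos i).le hK
  linarith

structure Dom (K : ℝ) (D : Set (X n)) : Prop where
  hK : 100 ≤ K
  op : IsOpen D
  bd : Bornology.IsBounded D
  ne : (Dᶜ).Nonempty

theorem Wh_cover {K : ℝ} {D : Set (X n)} (h : Dom K D) {i : I n} (hi : good K D i) :
    ∃ j ∈ Wh K D, Q i ⊆ Q j ∧ i.1 ≤ j.1 := by
  obtain ⟨B, hB⟩ := level_bdd (by linarith [h.hK]) h.bd h.ne
  exact Mx_exists B hB hi

theorem Wh_cover_pt {K : ℝ} {D : Set (X n)} (h : Dom K D) {x : X n} (hx : x ∈ D) :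
    ∃ j ∈ Wh K D, x ∈ Q j := by
  obtain ⟨m, hm⟩ := (eventually_good (K := K) h.op h.ne hx).exists
  obtain ⟨j, hj, hj', _⟩ := Wh_cover h hm
  exact ⟨j, hj, hj' (mem_Q_self _ _)⟩

theorem Wh_upper {K : ℝ} {D : Set (X n)} {i : I n} (hi : i ∈ Wh K D) {x : X n} (hx : x ∈ Q i) :
    infDist x Dᶜ ≤ (2 * K + 2) * side i := by
  have := Mx_par hi
  unfold good at this
  push Not at this
  obtain ⟨y, hy, hlt⟩ := this
  rw [side_par] at hlt
  have h1 := dist_le_side (Q_sub_par i hx) hy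
  rw [side_par] at h1
  have h2 : infDist x Dᶜ ≤ infDist y Dᶜ + dist x y := infDist_le_infDist_add_dist
  linarith

noncomputable def av (u : X n → ℝ) (i : I n) : ℝ := ⨍ y in Q i, u y

open Classical in
noncomputable def uW (K : ℝ) (D : Set (X n)) (u : X n → ℝ) (x : X n) : ℝ :=
  if h : ∃ i ∈ Wh K D, x ∈ Q i then av u h.choose else 0

theorem uW_eq {K : ℝ} {D : Set (X n)} (u : X n → ℝ) {i : I n} (hi : i ∈ Wh K D) {x : X n} (hx : x ∈ Q i) :
    uW K D u x = av u i := by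
  have h : ∃ i ∈ Wh K D, x ∈ Q i := ⟨i, hi, hx⟩
  unfold uW
  rw [dif_pos h]
  congr 1
  by_contra hne
  exact Set.disjoint_left.1 (Mx_disj _ h.choose_spec.1 hi hne) h.choose_spec.2 hx

theorem osc_eq (u : X n → ℝ) (i : I n) : osc u (ctr i) (side i / 2) = ∫⁻ x in Q i, ‖u x - av u i‖ₑ := by
  unfold osc av
  rw [setLIntegral_congr (Q_ae_eq i), setAverage_congr (Q_ae_eq i)]

/-- `|Q| |u_Q - c| ≤ ∫_Q |u - c|` -/
theorem av_sub_le {u : X n → ℝ} {A : Set (X n)} (hA0 : volume A ≠ 0) (hAt : volume A ≠ ∞)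
    (hInt : IntegrableOn u A) (c : ℝ) :
    volume A * ‖(⨍ y in A, u y) - c‖ₑ ≤ ∫⁻ x in A, ‖u x - c‖ₑ := by
  have hpos : 0 < volume.real A := ENNReal.toReal_pos hA0 hAt
  have e : volume.real A * ((⨍ y in A, u y) - c) = ∫ x in A, (u x - c) := by
    rw [integral_sub hInt (integrableOn_const hAt), setAverage_eq]
    simp only [smul_eq_mul, integral_const, MeasurableSet.univ, measureReal_restrict_apply, univ_inter]
    field_simp
  calc volume A * ‖(⨍ y in A, u y) - c‖ₑ = ‖volume.real A * ((⨍ y in A, u y) - c)‖ₑ := by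
        rw [enorm_mul, Real.enorm_eq_ofReal hpos.le, ofReal_measureReal hAt]
    _ = ‖∫ x in A, (u x - c)‖ₑ := by rw [e]
    _ ≤ _ := enorm_integral_le_lintegral_enorm _

theorem lint_sub_le {u : X n → ℝ} (hu : Measurable u) {A : Set (X n)} (B : Set (X n)) (a c : ℝ) :
    ∫⁻ x in A ∩ B, ‖u x - c‖ₑ ≤ (∫⁻ x in B, ‖u x - a‖ₑ) + volume (A ∩ B) * ‖a - c‖ₑ := by
  calc ∫⁻ x in A ∩ B, ‖u x - c‖ₑ ≤ ∫⁻ x in A ∩ B, (‖u x - a‖ₑ + ‖a - c‖ₑ) := by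
        refine lintegral_mono fun x => ?_
        have : u x - c = (u x - a) + (a - c) := by ring
        rw [this]; exact enorm_add_le _ _
    _ = (∫⁻ x in A ∩ B, ‖u x - a‖ₑ) + volume (A ∩ B) * ‖a - c‖ₑ := by
        rw [lintegral_add_right _ measurable_const]
        simp [mul_comm]
    _ ≤ _ := by
        gcongr; exact inter_subset_right

def dense (E : Set (X n)) (th : ℝ≥0∞) (i : I n) : Prop := th * volume (Q i) < volume (E ∩ Q i)

theorem ae_dense {E D : Set (X n)} (hED : E ⊆ D) {K : ℝ} (h : Dom K D)
    {th : ℝ≥0∞} (hth : th < 1) :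
    ∀ᵐ x ∂(volume.restrict E), x ∈ E → ∃ i, good K D i ∧ dense E th i ∧ x ∈ Q i := by
  filter_upwards [IsUnifLocDoublingMeasure.ae_tendsto_measure_inter_div (volume : Measure (X n)) E 1] with x hx hxE
  have hlim : Tendsto (fun m : ℕ => (2:ℝ) ^ (-(m:ℤ)) / 2) atTop (𝓝[>] 0) := by
    refine tendsto_nhdsWithin_iff.2 ⟨by simpa using tendsto_zpow_neg.div_const 2, ?_⟩
    refine Filter.Eventually.of_forall fun m => ?_
    simp only [mem_Ioi]; positivity
  have := hx (fun m : ℕ => ctr ((-(m:ℤ), idx (-(m:ℤ)) x) : I n)) (fun m : ℕ => (2:ℝ) ^ (-(m:ℤ)) / 2) hlim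
    (Filter.Eventually.of_forall fun m => by
      rw [one_mul]; exact Q_sub_closedBall _ (mem_Q_self _ _))
  obtain ⟨m, h1, h2⟩ := ((this.eventually (lt_mem_nhds hth)).and (eventually_good (K := K) h.op h.ne (hED hxE))).exists
  refine ⟨_, h2, ?_, mem_Q_self _ _⟩
  set i : I n := (-(m:ℤ), idx (-(m:ℤ)) x)
  unfold dense
  have e1 : volume (Q i) = volume (closedBall (ctr i) ((2:ℝ) ^ (-(m:ℤ)) / 2)) := measure_congr (Q_ae_eq i)
  have e2 : volume (E ∩ Q i) = volume (E ∩ closedBall (ctr i) ((2:ℝ) ^ (-(m:ℤ)) / 2)) :=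
    measure_congr ((ae_eq_refl E).inter (Q_ae_eq i))
  rw [e1, e2]
  rwa [ENNReal.lt_div_iff_mul_lt] at h1
  · left; rw [← e1]; exact vol_Q_pos i
  · left; rw [← e1]; exact vol_Q_top i

theorem cz_step {E D : Set (X n)} (hE : MeasurableSet E) (hED : E ⊆ D) {K : ℝ} (h : Dom K D)
    {th : ℝ≥0∞} (hth : th < 1) (hth0 : th ≠ 0) {u : X n → ℝ} (hu : Measurable u) (hInt : IntegrableOn u D) :
    ∃ F : Set (I n), F.PairwiseDisjoint Q ∧ (∀ i ∈ F, good K D i) ∧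
      (∑' i : F, volume (Q (i : I n))) ≤ th⁻¹ * volume E ∧
      ∫⁻ x in E, ‖u x - uW K D u x‖ₑ ≤ (∑' i : F, osc u (ctr (i : I n)) (side (i : I n) / 2))
        + ENNReal.ofReal (2 ^ n) * th * ∫⁻ x in ⋃ i ∈ F, Q i, ‖u x - uW K D u x‖ₑ := by
  set P : I n → Prop := fun i => good K D i ∧ dense E th i with hP
  obtain ⟨B, hB⟩ := level_bdd (by linarith [h.hK]) h.bd h.ne
  have hK0 : 0 < K := by linarith [h.hK]
  set F := Mx P with hF
  have hFd : F.PairwiseDisjoint Q := Mx_disj P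
  have hthtop : th ≠ ∞ := (hth.trans ENNReal.one_lt_top).ne
  refine ⟨F, hFd, fun i hi => hi.1.1, ?_, ?_⟩
  · rw [mul_comm, ← div_eq_mul_inv, ENNReal.le_div_iff_mul_le (Or.inl hth0) (Or.inl hthtop), mul_comm,
      ← ENNReal.tsum_mul_left]
    calc ∑' i : F, th * volume (Q (i : I n)) ≤ ∑' i : F, volume (E ∩ Q (i : I n)) :=
          ENNReal.tsum_le_tsum fun i => (i.2.1.2).le
      _ = volume (⋃ i ∈ F, E ∩ Q i) := by
          rw [measure_biUnion F.to_countable]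
          · exact hFd.mono fun i => inter_subset_right
          · exact fun i _ => hE.inter (measurableSet_Q i)
      _ ≤ volume E := measure_mono (iUnion₂_subset fun i _ => inter_subset_left)
  · have hcov : E ≤ᵐ[volume] ⋃ i ∈ F, E ∩ Q i := by
      have := ae_dense hED h hth
      rw [ae_restrict_iff' hE] at this
      filter_upwards [this] with x hx hxE
      obtain ⟨i, h1, h2, h3⟩ := hx hxE hxE
      obtain ⟨j, hj, hj', _⟩ := Mx_exists (P := P) B (fun i hi => hB i hi.1) ⟨h1, h2⟩
      exact mem_iUnion₂.2 ⟨j, hj, hxE, hj' h3⟩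
    have hterm : ∀ i ∈ F, ∫⁻ x in E ∩ Q i, ‖u x - uW K D u x‖ₑ ≤ osc u (ctr i) (side i / 2)
        + ENNReal.ofReal (2 ^ n) * th * ∫⁻ x in Q i, ‖u x - uW K D u x‖ₑ := by
      intro i hi
      obtain ⟨j, hj, hij, _⟩ := Wh_cover h hi.1.1
      have e1 : ∀ A ⊆ Q i, MeasurableSet A → ∫⁻ x in A, ‖u x - uW K D u x‖ₑ = ∫⁻ x in A, ‖u x - av u j‖ₑ := by
        intro A hA hAm
        refine setLIntegral_congr_fun hAm fun x hx => ?_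
        rw [uW_eq u hj (hij (hA hx))]
      rw [e1 _ inter_subset_right (hE.inter (measurableSet_Q i)), e1 _ subset_rfl (measurableSet_Q i), osc_eq]
      refine (lint_sub_le hu (Q i) (av u i) (av u j)).trans ?_
      refine add_le_add le_rfl ?_
      by_cases hp : good K D (par i)
      · have hnd : ¬ dense E th (par i) := fun hd => Mx_par hi ⟨hp, hd⟩
        unfold dense at hnd
        rw [not_lt, vol_par] at hnd
        calc volume (E ∩ Q i) * ‖av u i - av u j‖ₑ 
            ≤ (th * (ENNReal.ofReal (2 ^ n) * volume (Q i))) * ‖av u i - av u j‖ₑ := by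
              gcongr
              exact (measure_mono (inter_subset_inter_right _ (Q_sub_par i))).trans hnd
          _ = ENNReal.ofReal (2 ^ n) * th * (volume (Q i) * ‖av u i - av u j‖ₑ) := by ring
          _ ≤ _ := by
              gcongr
              exact av_sub_le (vol_Q_pos i) (vol_Q_top i) (hInt.mono_set (good_sub hK0 hi.1.1)) _
      · have hiW : i ∈ Wh K D := by
          refine ⟨hi.1.1, fun l hl hil hg => hp ?_⟩
          refine good_mono hK0.le ?_ ?_ hg
          · simp only [par]; omega
          · exact Q_nested (by simp only [par]; omega) (Q_sub_par i (ctr_mem i)) (hil (ctr_mem i))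
        have : i = j := by
          by_contra hne
          exact Set.disjoint_left.1 (Mx_disj _ hiW hj hne) (ctr_mem i) (hij (ctr_mem i))
        subst this
        simp
    calc ∫⁻ x in E, ‖u x - uW K D u x‖ₑ ≤ ∫⁻ x in ⋃ i ∈ F, E ∩ Q i, ‖u x - uW K D u x‖ₑ :=
          lintegral_mono' (Measure.restrict_mono_ae hcov) le_rfl
      _ = ∑' i : F, ∫⁻ x in E ∩ Q (i : I n), ‖u x - uW K D u x‖ₑ := by
          rw [lintegral_biUnion F.to_countable (fun i _ => hE.inter (measurableSet_Q i))
            (hFd.mono fun i => inter_subset_right)]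
      _ ≤ ∑' i : F, (osc u (ctr (i : I n)) (side (i : I n) / 2)
        + ENNReal.ofReal (2 ^ n) * th * ∫⁻ x in Q (i : I n), ‖u x - uW K D u x‖ₑ) :=
          ENNReal.tsum_le_tsum fun i => hterm i i.2
      _ = _ := by
          rw [ENNReal.tsum_add, ENNReal.tsum_mul_left, lintegral_biUnion F.to_countable
            (fun i _ => measurableSet_Q i) hFd]

end JP

namespace JP
open Filter Topology
variable {n : ℕ}

theorem G_fin {D : Set (X n)} {K : ℝ} (h : Dom K D) {u : X n → ℝ} (hu : Measurable u) (hInt : IntegrableOn u D) :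
    ∫⁻ x in D, ‖u x - uW K D u x‖ₑ ≠ ∞ := by
  have hK0 : 0 < K := by linarith [h.hK]
  have hd : (Wh K D).PairwiseDisjoint Q := Mx_disj _
  have hD : D = ⋃ i ∈ Wh K D, Q i := by
    apply subset_antisymm
    · intro x hx
      obtain ⟨i, hi, hxi⟩ := Wh_cover_pt h hx
      exact mem_iUnion₂.2 ⟨i, hi, hxi⟩
    · exact iUnion₂_subset fun i hi => good_sub hK0 hi.1
  have hterm : ∀ i ∈ Wh K D, ∫⁻ x in Q i, ‖u x - uW K D u x‖ₑ ≤ 2 * ∫⁻ x in Q i, ‖u x‖ₑ := by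
    intro i hi
    have h1 : ∫⁻ x in Q i, ‖u x - uW K D u x‖ₑ = ∫⁻ x in Q i, ‖u x - av u i‖ₑ := by
      refine setLIntegral_congr_fun (measurableSet_Q i) fun x hx => ?_
      rw [uW_eq u hi hx]
    have h2 := av_sub_le (vol_Q_pos i) (vol_Q_top i) (hInt.mono_set (good_sub hK0 hi.1)) 0
    have h3 := lint_sub_le hu (A := univ) (Q i) 0 (av u i)
    simp only [univ_inter, sub_zero, zero_sub, enorm_neg] at h2 h3
    rw [h1, two_mul]
    exact h3.trans (add_le_add le_rfl h2)
  have : ∫⁻ x in D, ‖u x - uW K D u x‖ₑ ≤ 2 * ∫⁻ x in D, ‖u x‖ₑ := by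
    have hsum : ∀ f : X n → ℝ≥0∞, ∫⁻ x in D, f x = ∑' i : Wh K D, ∫⁻ x in Q (i : I n), f x := by
      intro f
      rw [← lintegral_biUnion (Wh K D).to_countable (fun i _ => measurableSet_Q i) hd, ← hD]
    rw [hsum, hsum, ← ENNReal.tsum_mul_left]
    exact ENNReal.tsum_le_tsum fun i => hterm i i.2
  exact (this.trans_lt (ENNReal.mul_lt_top (by norm_num) hInt.2)).ne

theorem local_main {κ δ p K : ℝ} (hn : 1 ≤ n) (hκ : 1 ≤ κ) (hδ : 0 ≤ δ) (hp : 1 ≤ p) (hKκ : 100 * κ ≤ K)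
    {D : Set (X n)} (h : Dom K D) {u : X n → ℝ} (hu : Measurable u) (hInt : IntegrableOn u D)
    {S : ℝ≥0∞} (hS : HS κ δ p D u S) {th : ℝ≥0∞} (hth : th < 1) (hth0 : th ≠ 0)
    (hth2 : 2 * (ENNReal.ofReal (2 ^ n) * th) * th⁻¹ ^ (1 - 1 / p + δ / n) ≤ 1)
    {E : Set (X n)} (hE : MeasurableSet E) (hED : E ⊆ D) :
    ∫⁻ x in E, ‖u x - uW K D u x‖ₑ ≤ 2 * S * (th⁻¹ * volume E) ^ (1 - 1 / p + δ / n) := by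
  have hK0 : 0 < K := by linarith [h.hK]
  set e := 1 - 1 / p + δ / n with he
  have he0 : 0 ≤ e := by
    have : 1 / p ≤ 1 := by rw [div_le_one (by linarith)]; exact hp
    have : 0 ≤ δ / n := by positivity
    linarith
  set ρ := ENNReal.ofReal (2 ^ n) * th with hρ
  have hρ1 : ρ ≤ 1 / 2 := by
    have h1 : (1:ℝ≥0∞) ≤ th⁻¹ ^ e := by
      have : (1:ℝ≥0∞) ≤ th⁻¹ := ENNReal.one_le_inv.2 hth.le
      simpa using ENNReal.rpow_le_rpow this he0
    have h2 : 2 * ρ ≤ 1 := le_trans (by simpa using mul_le_mul_right h1 (2 * ρ)) hth2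
    rw [ENNReal.le_div_iff_mul_le (by simp) (by simp), mul_comm]; exact h2
  set G := ∫⁻ x in D, ‖u x - uW K D u x‖ₑ with hG
  have hGf : G ≠ ∞ := G_fin h hu hInt
  have claim : ∀ m : ℕ, ∀ E : Set (X n), MeasurableSet E → E ⊆ D →
      ∫⁻ x in E, ‖u x - uW K D u x‖ₑ ≤ 2 * S * (th⁻¹ * volume E) ^ e + ρ ^ m * G := by
    intro m
    induction m with
    | zero =>
      intro E hE hED
      simp only [pow_zero, one_mul]
      exact le_add_left (lintegral_mono_set hED)
    | succ m ih =>
      intro E hE hED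
      obtain ⟨F, hFd, hFg, hFv, hle⟩ := cz_step hE hED h hth hth0 hu hInt
      set E' := ⋃ i ∈ F, Q i with hE'
      have hE'm : MeasurableSet E' := MeasurableSet.biUnion F.to_countable fun i _ => measurableSet_Q i
      have hE'D : E' ⊆ D := iUnion₂_subset fun i hi => good_sub hK0 (hFg i hi)
      have hvol : volume E' = ∑' i : F, volume (Q (i : I n)) := vol_iUnion_disj hFd
      have hosc : (∑' i : F, osc u (ctr (i : I n)) (side (i : I n) / 2)) ≤ S * (volume E') ^ e := by
        have h1 := dyadic_sum hκ hp hu hn hInt hS hFd (fun i hi => good_cb (hFg i hi) (by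
          have := side_pos i; nlinarith))
        have h2 := holder hδ hp F (fun i => osc u (ctr i) (side i / 2))
          (fun i => volume (closedBall (ctr i) (side i / 2)))
          (fun i => vol_cb_ne _ (by have := side_pos i; positivity)) (fun i => vol_cb_top _ _) h1
        have h3 : ∀ i : I n, volume (closedBall (ctr i) (side i / 2)) = volume (Q i) := fun i =>
          (measure_congr (Q_ae_eq i)).symm
        simp only [h3] at h2
        rw [← hvol, ← ENNReal.rpow_mul, mul_one_div_cancel (by linarith), ENNReal.rpow_one] at h2
        exact h2
      have hv' : volume E' ≤ th⁻¹ * volume E := hvol ▸ hFv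
      calc ∫⁻ x in E, ‖u x - uW K D u x‖ₑ 
          ≤ S * (volume E') ^ e + ρ * ∫⁻ x in E', ‖u x - uW K D u x‖ₑ := hle.trans (add_le_add hosc le_rfl)
        _ ≤ S * (th⁻¹ * volume E) ^ e + ρ * (2 * S * (th⁻¹ * (th⁻¹ * volume E)) ^ e + ρ ^ m * G) := by
            gcongr
            refine (ih E' hE'm hE'D).trans ?_
            gcongr
        _ = S * (th⁻¹ * volume E) ^ e + (2 * ρ * th⁻¹ ^ e) * (S * (th⁻¹ * volume E) ^ e) + ρ ^ (m+1) * G := by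
            rw [ENNReal.mul_rpow_of_nonneg th⁻¹ (th⁻¹ * volume E) he0]; ring
        _ ≤ S * (th⁻¹ * volume E) ^ e + 1 * (S * (th⁻¹ * volume E) ^ e) + ρ ^ (m+1) * G := by gcongr
        _ = _ := by ring
  have hlim : Tendsto (fun m : ℕ => 2 * S * (th⁻¹ * volume E) ^ e + ρ ^ m * G) atTop
      (𝓝 (2 * S * (th⁻¹ * volume E) ^ e + 0 * G)) := by
    refine Tendsto.const_add _ ?_
    refine ENNReal.Tendsto.mul_const ?_ (Or.inr hGf)
    exact ENNReal.tendsto_pow_atTop_nhds_zero_of_lt_one (hρ1.trans_lt (by norm_num))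
  rw [zero_mul, add_zero] at hlim
  exact ge_of_tendsto hlim (Filter.Eventually.of_forall fun m => claim m E hE hED)

end JP

namespace JP
open Filter Topology
variable {n : ℕ}

/-- the enlarged Whitney cube -/
def star (i : I n) : Set (X n) := closedBall (ctr i) (5 * side i)

theorem Wh_compare {K : ℝ} {D : Set (X n)} (hK : 100 ≤ K) {i j : I n} (hi : i ∈ Wh K D) (hj : j ∈ Wh K D)
    (hd : dist (ctr i) (ctr j) ≤ 5 * side i + 5 * side j) : side j ≤ 3 * side i := by
  have h1 := hj.1 _ (ctr_mem j)
  have h2 := Wh_upper hi (ctr_mem i)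
  have h3 := infDist_le_infDist_add_dist (s := Dᶜ) (x := ctr j) (y := ctr i)
  rw [dist_comm] at h3
  have := side_pos i
  have := side_pos j
  by_contra! hlt
  nlinarith

theorem star_inter {K : ℝ} {D : Set (X n)} (hK : 100 ≤ K) {i j : I n} (hi : i ∈ Wh K D) (hj : j ∈ Wh K D)
    (hne : (star i ∩ star j).Nonempty) : Q j ⊆ closedBall (ctr i) (23 * side i) := by
  have hd : dist (ctr i) (ctr j) ≤ 5 * side i + 5 * side j := dist_le_add_of_nonempty_closedBall_inter_closedBall hne
  have h3 := Wh_compare hK hi hj hd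
  intro y hy
  have := Q_sub_closedBall j hy
  rw [mem_closedBall] at this ⊢
  have := dist_triangle y (ctr j) (ctr i)
  rw [dist_comm (ctr j)] at this
  have := side_pos i
  linarith

theorem sum_vol_le {J : Set (I n)} (hJ : J.PairwiseDisjoint Q) (F : Finset (I n)) (hF : ∀ i ∈ F, i ∈ J)
    {A : Set (X n)} (hA : ∀ i ∈ F, Q i ⊆ A) : ∑ i ∈ F, volume (Q i) ≤ volume A := by
  rw [← measure_biUnion_finset (fun i hi j hj hij => hJ (hF i hi) (hF j hj) hij) (fun i _ => measurableSet_Q i)]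
  exact measure_mono (iUnion₂_subset hA)

theorem star_sum_fin {κ δ p K : ℝ} (hκ : 1 ≤ κ) (hp : 1 ≤ p) (hKκ : 100 * κ ≤ K)
    {D : Set (X n)} (h : Dom K D) {u : X n → ℝ} (hInt : IntegrableOn u D)
    {S : ℝ≥0∞} (hS : HS κ δ p D u S) (F : Finset (I n)) (hF : ∀ i ∈ F, i ∈ Wh K D) :
    ∑ i ∈ F, nu δ u (ctr i) (5 * side i) ^ p * volume (star i) ≤
      ENNReal.ofReal (10 ^ n) * (2 * ENNReal.ofReal (46 ^ n)) * S ^ p := by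
  classical
  have hsub : ∀ i ∈ F, closedBall (ctr i) (κ * (5 * side i)) ⊆ D := fun i hi =>
    good_cb (hF i hi).1 (by have := side_pos i; nlinarith)
  set w : I n → ℝ≥0∞ := fun i => nu δ u (ctr i) (5 * side i) ^ p with hw
  have hwt : ∀ i ∈ F, w i ≠ ∞ := by
    intro i hi
    have := side_pos i
    refine ENNReal.rpow_ne_top_of_nonneg (by linarith) ?_
    refine ENNReal.mul_ne_top ?_ (osc_lt_top (hInt.mono_set (subset_trans (closedBall_subset_closedBall ?_) (hsub i hi))))
    · exact ENNReal.rpow_ne_top_of_ne_zero (vol_cb_ne _ (by positivity)) (vol_cb_top _ _)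
    · nlinarith
  obtain ⟨R, hR⟩ := (F.image fun i => (w i).toReal).bddAbove
  obtain ⟨t, htF, htd, ht⟩ := Vitali.exists_disjoint_subfamily_covering_enlargement (fun i : I n => star i)
    (F : Set (I n)) (fun i => (w i).toReal) 2 (by norm_num) (fun _ _ => ENNReal.toReal_nonneg) R
    (fun a ha => hR (by simpa using ⟨a.1, a.2, ha, rfl⟩))
    (fun a _ => ⟨ctr a, mem_closedBall_self (by have := side_pos a; positivity)⟩)
  choose! φ hφ using ht
  have htfin : t.Finite := F.finite_toSet.subset htF
  set T := htfin.toFinset with hT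
  have hTt : ∀ i, i ∈ T ↔ i ∈ t := fun i => htfin.mem_toFinset
  have hvol : ∀ i : I n, volume (star i) = ENNReal.ofReal (10 ^ n) * volume (Q i) := by
    intro i
    have := vol_cb_Q (ctr i) i (s := 5) (by norm_num)
    unfold star; rw [this]; norm_num
  have hHS := hS T ctr (fun i => 5 * side i)
    (fun i hi => ⟨by have := side_pos i; positivity, hsub i (htF ((hTt i).1 hi))⟩)
    (fun i hi j hj hij => htd ((hTt i).1 hi) ((hTt j).1 hj) hij)
  have hw2 : ∀ a ∈ F, w a ≤ 2 * w (φ a) := by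
    intro a ha
    have h1 := (hφ a ha).2.2
    have hb := hwt _ (htF (hφ a ha).1)
    rw [← ENNReal.toReal_le_toReal (hwt a ha) (ENNReal.mul_ne_top (by simp) hb), ENNReal.toReal_mul]
    simpa using h1
  calc ∑ i ∈ F, w i * volume (star i) = ENNReal.ofReal (10 ^ n) * ∑ i ∈ F, w i * volume (Q i) := by
        rw [Finset.mul_sum]; refine Finset.sum_congr rfl fun i _ => ?_
        rw [hvol]; ring
    _ ≤ ENNReal.ofReal (10 ^ n) * ((2 * ENNReal.ofReal (46 ^ n)) * ∑ b ∈ T, w b * volume (star b)) := by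
        gcongr
        rw [← Finset.sum_fiberwise_of_maps_to (s := F) (t := T) (g := φ) (fun a ha => (hTt _).2 (hφ a ha).1), Finset.mul_sum]
        refine Finset.sum_le_sum fun b hb => ?_
        have hbW := hF b (htF ((hTt b).1 hb))
        calc ∑ a ∈ F with φ a = b, w a * volume (Q a) ≤ ∑ a ∈ F with φ a = b, 2 * w b * volume (Q a) := by
              refine Finset.sum_le_sum fun a ha => ?_
              rw [Finset.mem_filter] at ha
              have := hw2 a ha.1
              rw [ha.2] at this
              gcongr
          _ = 2 * w b * ∑ a ∈ F with φ a = b, volume (Q a) := by rw [Finset.mul_sum]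
          _ ≤ 2 * w b * volume (closedBall (ctr b) (23 * side b)) := by
              gcongr
              refine sum_vol_le (Mx_disj (good K D)) _ (fun i hi => hF i (Finset.mem_filter.1 hi).1) fun a ha => ?_
              rw [Finset.mem_filter] at ha
              have := (hφ a ha.1).2.1
              rw [ha.2, inter_comm] at this
              exact star_inter h.hK hbW (hF a ha.1) this
          _ = 2 * w b * (ENNReal.ofReal (46 ^ n) * volume (Q b)) := by
              rw [vol_cb_Q _ _ (by norm_num)]; norm_num
          _ ≤ 2 * w b * (ENNReal.ofReal (46 ^ n) * volume (star b)) := by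
              gcongr
              refine (Q_sub_closedBall b).trans (closedBall_subset_closedBall ?_)
              have := side_pos b; linarith
          _ = _ := by ring
    _ ≤ ENNReal.ofReal (10 ^ n) * ((2 * ENNReal.ofReal (46 ^ n)) * S ^ p) := by gcongr; exact hHS
    _ = _ := by ring

/-- oscillation sum over enlarged Whitney cubes -/
theorem star_osc {κ δ p K : ℝ} (hκ : 1 ≤ κ) (hδ : 0 ≤ δ) (hp : 1 ≤ p) (hKκ : 100 * κ ≤ K) :
    ∃ C : ℝ≥0∞, C ≠ ∞ ∧ ∀ {D : Set (X n)} (_ : Dom K D) {u : X n → ℝ} (_ : IntegrableOn u D)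
    {S : ℝ≥0∞} (_ : HS κ δ p D u S) (J : Set (I n)) (_ : J ⊆ Wh K D),
    ∑' i : J, osc u (ctr (i : I n)) (5 * side (i : I n)) ≤ 
      C * S * (∑' i : J, volume (Q (i : I n))) ^ (1 - 1 / p + δ / n) := by
  have he0 : 0 ≤ 1 - 1 / p + δ / n := by
    have : 1 / p ≤ 1 := by rw [div_le_one (by linarith)]; exact hp
    have : 0 ≤ δ / n := by positivity
    linarith
  have hp0 : 0 ≤ 1 / p := by positivity
  refine ⟨(ENNReal.ofReal (10 ^ n) * (2 * ENNReal.ofReal (46 ^ n))) ^ (1 / p) * (ENNReal.ofReal (10 ^ n)) ^ (1 - 1 / p + δ / n), ?_, ?_⟩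
  · refine ENNReal.mul_ne_top (ENNReal.rpow_ne_top_of_nonneg hp0 ?_) (ENNReal.rpow_ne_top_of_nonneg he0 ENNReal.ofReal_ne_top)
    exact ENNReal.mul_ne_top ENNReal.ofReal_ne_top (ENNReal.mul_ne_top (by simp) ENNReal.ofReal_ne_top)
  intro D h u hInt S hS J hJ
  have h1 : ∑' i : J, nu δ u (ctr (i : I n)) (5 * side (i : I n)) ^ p * volume (closedBall (ctr (i : I n)) (5 * side (i : I n))) ≤
      ENNReal.ofReal (10 ^ n) * (2 * ENNReal.ofReal (46 ^ n)) * S ^ p := by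
    rw [ENNReal.tsum_eq_iSup_sum]
    refine iSup_le fun F => ?_
    have := star_sum_fin hκ hp hKκ h hInt hS (F.map (Function.Embedding.subtype _)) (by
      intro i hi
      simp only [Finset.mem_map, Function.Embedding.subtype_apply] at hi
      obtain ⟨a, _, rfl⟩ := hi
      exact hJ a.2)
    rw [Finset.sum_map] at this
    exact this
  have h2 := holder hδ hp J (fun i => osc u (ctr i) (5 * side i))
          (fun i => volume (closedBall (ctr i) (5 * side i)))
          (fun i => vol_cb_ne _ (by have := side_pos i; positivity)) (fun i => vol_cb_top _ _) h1
  refine h2.trans (le_of_eq ?_)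
  have hvol : ∀ i : I n, volume (closedBall (ctr i) (5 * side i)) = ENNReal.ofReal (10 ^ n) * volume (Q i) := by
    intro i
    have := vol_cb_Q (ctr i) i (s := 5) (by norm_num)
    rw [this]; norm_num
  simp only [hvol]
  rw [ENNReal.tsum_mul_left, ENNReal.mul_rpow_of_nonneg _ _ he0, ENNReal.mul_rpow_of_nonneg _ _ hp0,
    ← ENNReal.rpow_mul, mul_one_div_cancel (by linarith), ENNReal.rpow_one]
  ring

end JP

namespace JP
open Filter Topology
variable {n : ℕ}

noncomputable def bc (u : X n → ℝ) (j : I n) : ℝ≥0∞ := osc u (ctr j) (5 * side j) / volume (Q j)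

theorem near_cells {K : ℝ} {D : Set (X n)} (h : Dom K D) {u : X n → ℝ} (hInt : IntegrableOn u D)
    {i j : I n} (hi : i ∈ Wh K D) (hj : j ∈ Wh K D) {y y' : X n} (hy' : y' ∈ Q i) (hy : y ∈ Q j)
    (hd : dist y y' ≤ side i) : ‖av u i - av u j‖ₑ ≤ ENNReal.ofReal (1 + 4 ^ n) * bc u i := by
  have hK := h.hK
  have hK0 : 0 < K := by linarith
  have hsi := side_pos i
  have hsj := side_pos j
  have h1 := hi.1 _ hy'
  have h2 := hj.1 _ hy
  have h3 := Wh_upper hi hy'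
  have h4 := Wh_upper hj hy
  have h5 := infDist_le_infDist_add_dist (s := Dᶜ) (x := y) (y := y')
  have h6 := infDist_le_infDist_add_dist (s := Dᶜ) (x := y') (y := y)
  rw [dist_comm] at h6
  have h7 : side i ≤ 4 * side j := by by_contra! hlt; nlinarith
  have h8 : side j ≤ 3 * side i := by by_contra! hlt; nlinarith
  have hsub : Q j ⊆ star i := by
    intro z hz
    have a1 := dist_le_side hz hy
    have a2 := Q_sub_closedBall i hy'
    unfold star
    rw [mem_closedBall] at a2 ⊢
    linarith [dist_triangle z y (ctr i), dist_triangle y y' (ctr i)]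
  have hsub' : Q i ⊆ star i := (Q_sub_closedBall i).trans (closedBall_subset_closedBall (by linarith))
  have hv : volume (Q i) ≤ ENNReal.ofReal (4 ^ n) * volume (Q j) := by
    rw [vol_Q, vol_Q, ← ENNReal.ofReal_mul (by positivity), ← mul_pow]
    gcongr
  set c := ⨍ y in star i, u y with hc
  have hoi : volume (Q i) * ‖av u i - c‖ₑ ≤ osc u (ctr i) (5 * side i) :=
    (av_sub_le (vol_Q_pos i) (vol_Q_top i) (hInt.mono_set (good_sub hK0 hi.1)) c).trans (lintegral_mono_set hsub')
  have hoj : volume (Q j) * ‖av u j - c‖ₑ ≤ osc u (ctr i) (5 * side i) :=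
    (av_sub_le (vol_Q_pos j) (vol_Q_top j) (hInt.mono_set (good_sub hK0 hj.1)) c).trans (lintegral_mono_set hsub)
  unfold bc
  rw [← mul_div_assoc, ENNReal.le_div_iff_mul_le (Or.inl (vol_Q_pos i)) (Or.inl (vol_Q_top i)),
    ENNReal.ofReal_add (by norm_num) (by positivity), add_mul, ENNReal.ofReal_one, one_mul]
  have : av u i - av u j = (av u i - c) - (av u j - c) := by ring
  calc ‖av u i - av u j‖ₑ * volume (Q i) ≤ (‖av u i - c‖ₑ + ‖av u j - c‖ₑ) * volume (Q i) := by
        gcongr; rw [this]; exact enorm_sub_le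
    _ = volume (Q i) * ‖av u i - c‖ₑ + volume (Q i) * ‖av u j - c‖ₑ := by ring
    _ ≤ volume (Q i) * ‖av u i - c‖ₑ + (ENNReal.ofReal (4 ^ n) * volume (Q j)) * ‖av u j - c‖ₑ := by gcongr
    _ = volume (Q i) * ‖av u i - c‖ₑ + ENNReal.ofReal (4 ^ n) * (volume (Q j) * ‖av u j - c‖ₑ) := by ring
    _ ≤ _ := by gcongr

def cg {α : Type*} (f : α → ℝ) (b : α → ℝ≥0∞) (V : Set α) : SimpleGraph α where
  Adj i j := i ≠ j ∧ i ∈ V ∧ j ∈ V ∧ ‖f i - f j‖ₑ ≤ b i + b j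
  symm := ⟨fun i j h => ⟨h.1.symm, h.2.2.1, h.2.1, by rw [← enorm_neg, neg_sub, add_comm (b j)]; exact h.2.2.2⟩⟩
  loopless := ⟨fun i h => h.1 rfl⟩

theorem cg_walk {α : Type*} {f : α → ℝ} {b : α → ℝ≥0∞} {V : Set α} {i j : α} (w : (cg f b V).Walk i j) :
    ‖f i - f j‖ₑ + b i ≤ 2 * (w.support.map b).sum := by
  induction w with
  | nil => simp [two_mul]
  | @cons i k j hik w ih =>
    simp only [SimpleGraph.Walk.support_cons, List.map_cons, List.sum_cons]
    have h1 : ‖f i - f j‖ₑ ≤ ‖f i - f k‖ₑ + ‖f k - f j‖ₑ := by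
      have : f i - f j = (f i - f k) + (f k - f j) := by ring
      rw [this]; exact enorm_add_le _ _
    calc ‖f i - f j‖ₑ + b i ≤ (b i + b k + ‖f k - f j‖ₑ) + b i := by
          gcongr; exact h1.trans (by gcongr; exact hik.2.2.2)
      _ = 2 * b i + (‖f k - f j‖ₑ + b k) := by ring
      _ ≤ 2 * b i + 2 * (w.support.map b).sum := by gcongr
      _ = _ := by ring

theorem cg_supp {α : Type*} {f : α → ℝ} {b : α → ℝ≥0∞} {V : Set α} {i j : α} (w : (cg f b V).Walk i j) (hi : i ∈ V) :
    ∀ k ∈ w.support, k ∈ V := by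
  induction w with
  | nil => simpa using hi
  | cons hik w ih =>
    intro k hk
    rw [SimpleGraph.Walk.support_cons, List.mem_cons] at hk
    rcases hk with rfl | hk
    · exact hi
    · exact ih hik.2.2.1 k hk

theorem cg_reach {α : Type*} {f : α → ℝ} {b : α → ℝ≥0∞} {V : Set α} {i j : α} (h : (cg f b V).Reachable i j) (hi : i ∈ V) :
    ‖f i - f j‖ₑ ≤ 2 * ∑' k : V, b k := by
  classical
  obtain ⟨w⟩ := h
  let p := w.toPath
  have h1 := cg_walk p.1
  have h2 := p.2.support_nodup
  have h3 := cg_supp p.1 hi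
  refine (le_self_add.trans h1).trans ?_
  gcongr
  rw [← List.sum_toFinset _ h2]
  calc ∑ k ∈ p.1.support.toFinset, b k = ∑ k ∈ p.1.support.toFinset, V.indicator b k := by
        refine Finset.sum_congr rfl fun k hk => ?_
        rw [indicator_of_mem (h3 k (by simpa using hk))]
    _ ≤ ∑' k, V.indicator b k := ENNReal.sum_le_tsum _
    _ = ∑' k : V, b k := (tsum_subtype V b).symm

theorem chain {K N : ℝ} {D : Set (X n)} (h : Dom K D) {u : X n → ℝ} (hInt : IntegrableOn u D)
    {l : ℝ} (hl : 0 ≤ l) {γ : ℝ → X n} (hγ : ContinuousOn γ (Icc 0 l)) (hD : ∀ t ∈ Icc 0 l, γ t ∈ D)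
    (hN0 : 0 ≤ N) (hN : ∀ t ∈ Icc 0 l, dist (γ 0) (γ t) ≤ N * infDist (γ t) Dᶜ) :
    ‖uW K D u (γ 0) - uW K D u (γ l)‖ₑ ≤ 2 * ENNReal.ofReal (1 + 4 ^ n) * 
      ∑' j : Wh K D, bc u j * (closedBall (ctr (j : I n)) ((N * (2 * K + 2) + 1) * side (j : I n))).indicator 1 (γ 0) := by
  have hex : ∀ t ∈ Icc 0 l, ∃ j ∈ Wh K D, γ t ∈ Q j := fun t ht => Wh_cover_pt h (hD t ht)
  choose! W hW hWQ using hex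
  set C := ENNReal.ofReal (1 + 4 ^ n) with hC
  set V := Set.image W (Icc 0 l) with hV
  have hadj : ∀ t ∈ Icc 0 l, ∀ s ∈ Icc 0 l, dist (γ s) (γ t) ≤ side (W t) →
      (cg (av u) (fun j => C * bc u j) V).Reachable (W t) (W s) := by
    intro t ht s hs hd
    by_cases heq : W t = W s
    · rw [heq]
    · refine SimpleGraph.Adj.reachable ⟨heq, mem_image_of_mem _ ht, mem_image_of_mem _ hs, ?_⟩
      exact (near_cells h hInt (hW t ht) (hW s hs) (hWQ t ht) (hWQ s hs) hd).trans le_self_add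
  have hreach : (cg (av u) (fun j => C * bc u j) V).Reachable (W 0) (W l) := by
    refine isPreconnected_Icc.induction₂ (fun t s => (cg (av u) (fun j => C * bc u j) V).Reachable (W t) (W s))
      (fun t ht => ?_) (fun a b c _ _ _ h1 h2 => h1.trans h2) (fun a b _ _ h1 => h1.symm) (left_mem_Icc.2 hl) (right_mem_Icc.2 hl)
    have hc := hγ t ht
    have := (Metric.tendsto_nhds.1 hc) (side (W t)) (side_pos _)
    filter_upwards [this, self_mem_nhdsWithin] with s hs hsI using hadj t ht s hsI hs.le
  have h0 : (0:ℝ) ∈ Icc 0 l := left_mem_Icc.2 hl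
  have hl' : l ∈ Icc 0 l := right_mem_Icc.2 hl
  have key := cg_reach hreach (mem_image_of_mem _ h0)
  rw [uW_eq u (hW 0 h0) (hWQ 0 h0), uW_eq u (hW l hl') (hWQ l hl')]
  refine key.trans ?_
  rw [ENNReal.tsum_mul_left, mul_assoc]
  gcongr
  rw [tsum_subtype V (bc u), tsum_subtype (Wh K D) (fun j => bc u j * (closedBall (ctr (j : I n)) ((N * (2 * K + 2) + 1) * side (j : I n))).indicator 1 (γ 0))]
  refine ENNReal.tsum_le_tsum fun j => ?_
  by_cases hj : j ∈ V
  · obtain ⟨t, ht, rfl⟩ := hj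
    rw [indicator_of_mem (mem_image_of_mem _ ht), indicator_of_mem (hW t ht), indicator_of_mem]
    · simp
    · have a1 := Q_sub_closedBall _ (hWQ t ht)
      have a2 := Wh_upper (hW t ht) (hWQ t ht)
      have a3 := hN t ht
      have := side_pos (W t)
      rw [mem_closedBall] at a1 ⊢
      have a4 := mul_le_mul_of_nonneg_left a2 hN0
      linarith [dist_triangle (γ 0) (γ t) (ctr (W t))]
  · rw [indicator_of_notMem hj]; exact zero_le

end JP

namespace JP
open Filter Topology
variable {n : ℕ}

/-- density classes -/
def Jk (K N : ℝ) (D E : Set (X n)) (k : ℕ) : Set (I n) :=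
  {j | j ∈ Wh K D ∧ (2:ℝ≥0∞)⁻¹ ^ (k + 1) * volume (closedBall (ctr j) (N * side j)) < volume (E ∩ closedBall (ctr j) (N * side j))}

theorem Jk_vol {K N : ℝ} (hN : 1 ≤ N) {D E : Set (X n)} (h : Dom K D) (hE : MeasurableSet E) (k : ℕ) :
    ∑' j : Jk K N D E k, volume (Q (j : I n)) ≤ ENNReal.ofReal (5 ^ n) * (2 ^ (k + 1) * volume E) := by
  obtain ⟨B, hB⟩ := level_bdd (K := K) (by linarith [h.hK]) h.bd h.ne
  have hJW : Jk K N D E k ⊆ Wh K D := fun j hj => hj.1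
  obtain ⟨t, htJ, htd, ht⟩ := Vitali.exists_disjoint_subfamily_covering_enlargement_closedBall (Jk K N D E k)
    (fun j : I n => ctr j) (fun j => N * side j) (N * 2 ^ B) (fun j hj => by
      have : side j ≤ 2 ^ B := by
        unfold side
        exact zpow_le_zpow_right₀ (by norm_num) (hB j (hJW hj).1)
      gcongr) 5 (by norm_num)
  rw [← vol_iUnion_disj ((Mx_disj (good K D)).subset hJW)]
  have hcov : (⋃ i ∈ Jk K N D E k, Q i) ⊆ ⋃ b ∈ t, closedBall (ctr b) (5 * (N * side b)) := by
    refine iUnion₂_subset fun a ha => ?_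
    obtain ⟨b, hb, hab⟩ := ht a ha
    refine subset_trans ?_ (subset_biUnion_of_mem (u := fun b => closedBall (ctr b) (5 * (N * side b))) hb)
    refine subset_trans ((Q_sub_closedBall a).trans (closedBall_subset_closedBall ?_)) hab
    have := side_pos a
    nlinarith
  have hvb : ∀ b : I n, volume (closedBall (ctr b) (5 * (N * side b))) = ENNReal.ofReal (5 ^ n) * volume (closedBall (ctr b) (N * side b)) := by
    intro b
    have := side_pos b
    rw [vol_cb _ (by positivity), vol_cb _ (by positivity), ← ENNReal.ofReal_mul (by positivity), ← mul_pow]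
    congr 2; ring
  have hb2 : ∀ b : t, volume (closedBall (ctr (b : I n)) (N * side (b : I n))) ≤ 2 ^ (k+1) * volume (E ∩ closedBall (ctr (b : I n)) (N * side (b : I n))) := by
    intro b
    have := (htJ b.2).2.le
    rw [← ENNReal.inv_pow, mul_comm, ← div_eq_mul_inv] at this
    rw [mul_comm (2 ^ (k+1))]
    exact (ENNReal.div_le_iff (by simp) (by simp)).1 this
  calc volume (⋃ i ∈ Jk K N D E k, Q i) ≤ volume (⋃ b ∈ t, closedBall (ctr b) (5 * (N * side b))) := measure_mono hcov
    _ ≤ ∑' b : t, volume (closedBall (ctr (b : I n)) (5 * (N * side (b : I n)))) := measure_biUnion_le _ t.to_countable _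
    _ ≤ ∑' b : t, ENNReal.ofReal (5 ^ n) * (2 ^ (k+1) * volume (E ∩ closedBall (ctr (b : I n)) (N * side (b : I n)))) := by
        refine ENNReal.tsum_le_tsum fun b => ?_
        rw [hvb]; gcongr; exact hb2 b
    _ = ENNReal.ofReal (5 ^ n) * (2 ^ (k+1) * ∑' b : t, volume (E ∩ closedBall (ctr (b : I n)) (N * side (b : I n)))) := by
        rw [ENNReal.tsum_mul_left, ENNReal.tsum_mul_left]
    _ = ENNReal.ofReal (5 ^ n) * (2 ^ (k+1) * volume (⋃ b ∈ t, E ∩ closedBall (ctr b) (N * side b))) := by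
        rw [measure_biUnion t.to_countable (fun i hi j hj hij => (htd hi hj hij).mono inter_subset_right inter_subset_right)
          (fun i _ => hE.inter measurableSet_closedBall)]
    _ ≤ _ := by
        gcongr
        exact iUnion₂_subset fun _ _ => inter_subset_left

theorem layer {ρ : ℝ≥0∞} (h : ρ ≤ 1) : ρ ≤ ∑' k : ℕ, (2:ℝ≥0∞)⁻¹ ^ k * (if (2:ℝ≥0∞)⁻¹ ^ (k+1) < ρ then 1 else 0) := by
  classical
  by_cases h0 : ρ = 0
  · rw [h0]; exact zero_le
  have hex : ∃ k : ℕ, (2:ℝ≥0∞)⁻¹ ^ (k+1) < ρ := by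
    have : Tendsto (fun k : ℕ => (2:ℝ≥0∞)⁻¹ ^ (k+1)) atTop (𝓝 0) :=
      (ENNReal.tendsto_pow_atTop_nhds_zero_of_lt_one (by norm_num)).comp (tendsto_add_atTop_nat 1)
    exact (this.eventually (gt_mem_nhds (pos_iff_ne_zero.2 h0))).exists
  refine le_trans ?_ (ENNReal.le_tsum (Nat.find hex))
  rw [if_pos (Nat.find_spec hex), mul_one]
  rcases hk : Nat.find hex with _ | m
  · simpa using h
  · have := Nat.find_min hex (m := m) (by omega)
    exact not_lt.1 this

theorem global_sum {κ δ p K N : ℝ} (hκ : 1 ≤ κ) (hδ : 0 ≤ δ) (hp : 1 ≤ p) (hKκ : 100 * κ ≤ K) (hN : 1 ≤ N)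
    (he1 : 1 - 1 / p + δ / n < 1) :
    ∃ C : ℝ≥0∞, C ≠ ∞ ∧ ∀ {D : Set (X n)} (_ : Dom K D) {u : X n → ℝ} (_ : IntegrableOn u D)
    {S : ℝ≥0∞} (_ : HS κ δ p D u S) {E : Set (X n)} (_ : MeasurableSet E),
    ∑' j : Wh K D, bc u j * volume (E ∩ closedBall (ctr (j : I n)) (N * side (j : I n))) ≤ 
      C * S * volume E ^ (1 - 1 / p + δ / n) := by
  have he0 : 0 ≤ 1 - 1 / p + δ / n := by
    have : 1 / p ≤ 1 := by rw [div_le_one (by linarith)]; exact hp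
    have : 0 ≤ δ / n := by positivity
    linarith
  obtain ⟨C1, hC1, hC⟩ := star_osc (n := n) hκ hδ hp hKκ
  set e := 1 - 1 / p + δ / n with he
  set L := ENNReal.ofReal ((2 * N) ^ n) with hL
  set r : ℝ≥0∞ := 2⁻¹ * 2 ^ e with hr
  have hr1 : r < 1 := by
    have h1 : (2:ℝ≥0∞) ^ e < 2 ^ (1:ℝ) := ENNReal.rpow_lt_rpow_of_exponent_lt (by norm_num) (by simp) he1
    rw [ENNReal.rpow_one] at h1
    calc r < 2⁻¹ * 2 := by
          rw [hr]; exact (ENNReal.mul_lt_mul_iff_right (by simp) (by simp)).2 h1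
      _ = 1 := ENNReal.inv_mul_cancel (by simp) (by simp)
  have hLt : L ≠ ∞ := ENNReal.ofReal_ne_top
  have hL0 : L ≠ 0 := by rw [hL]; simp; positivity
  refine ⟨L * C1 * (ENNReal.ofReal (5 ^ n) * 2) ^ e * (1 - r)⁻¹, ?_, ?_⟩
  · refine ENNReal.mul_ne_top (ENNReal.mul_ne_top (ENNReal.mul_ne_top hLt hC1) ?_) ?_
    · exact ENNReal.rpow_ne_top_of_nonneg he0 (ENNReal.mul_ne_top ENNReal.ofReal_ne_top (by simp))
    · rw [ENNReal.inv_ne_top]; exact (tsub_pos_of_lt hr1).ne'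
  intro D h u hInt S hS E hE
  classical
  set o : I n → ℝ≥0∞ := fun j => osc u (ctr j) (5 * side j) with ho
  have hvB : ∀ j : I n, volume (closedBall (ctr j) (N * side j)) = L * volume (Q j) := fun j =>
    vol_cb_Q _ _ (by linarith)
  have hpt : ∀ j : Wh K D, bc u j * volume (E ∩ closedBall (ctr (j : I n)) (N * side (j : I n))) ≤
      ∑' k : ℕ, L * ((2:ℝ≥0∞)⁻¹ ^ k * (if (j : I n) ∈ Jk K N D E k then o j else 0)) := by
    intro j
    set m := volume (E ∩ closedBall (ctr (j : I n)) (N * side (j : I n))) with hm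
    set v := volume (closedBall (ctr (j : I n)) (N * side (j : I n))) with hv
    have hsj := side_pos (j : I n)
    have hv0 : v ≠ 0 := vol_cb_ne _ (by positivity)
    have hvt : v ≠ ∞ := vol_cb_top _ _
    have hmv : m / v ≤ 1 := ENNReal.div_le_of_le_mul (by rw [one_mul]; exact measure_mono inter_subset_right)
    have hl := layer hmv
    have e1 : bc u j * m = L * o j * (m / v) := by
      unfold bc
      rw [hvB] at hv
      rw [hv, ENNReal.div_eq_inv_mul, ENNReal.div_eq_inv_mul, ENNReal.mul_inv (Or.inl hL0) (Or.inl hLt)]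
      calc _ = (1:ℝ≥0∞) * (o j * m * (volume (Q (j : I n)))⁻¹) := by rw [ho]; ring
        _ = (L * L⁻¹) * (o j * m * (volume (Q (j : I n)))⁻¹) := by rw [ENNReal.mul_inv_cancel hL0 hLt]
        _ = _ := by ring
    rw [e1]
    refine (mul_le_mul_right hl (L * o j)).trans (le_of_eq ?_)
    rw [← ENNReal.tsum_mul_left]
    refine tsum_congr fun k => ?_
    have : ((j : I n) ∈ Jk K N D E k) ↔ (2:ℝ≥0∞)⁻¹ ^ (k+1) < m / v := by
      rw [ENNReal.lt_div_iff_mul_lt (Or.inl hv0) (Or.inl hvt)]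
      exact ⟨fun h => h.2, fun h => ⟨j.2, h⟩⟩
    simp only [this]
    split_ifs <;> ring
  calc _ ≤ ∑' j : Wh K D, ∑' k : ℕ, L * ((2:ℝ≥0∞)⁻¹ ^ k * (if (j : I n) ∈ Jk K N D E k then o j else 0)) := 
        ENNReal.tsum_le_tsum hpt
    _ = ∑' k : ℕ, L * ((2:ℝ≥0∞)⁻¹ ^ k * ∑' j : Wh K D, (if (j : I n) ∈ Jk K N D E k then o j else 0)) := by
        rw [ENNReal.tsum_comm]
        refine tsum_congr fun k => ?_
        rw [ENNReal.tsum_mul_left, ENNReal.tsum_mul_left]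
    _ ≤ ∑' k : ℕ, L * ((2:ℝ≥0∞)⁻¹ ^ k * (C1 * S * (ENNReal.ofReal (5 ^ n) * (2 ^ (k + 1) * volume E)) ^ e)) := by
        refine ENNReal.tsum_le_tsum fun k => ?_
        gcongr
        have e2 : ∑' j : Wh K D, (if (j : I n) ∈ Jk K N D E k then o j else 0) = ∑' j : Jk K N D E k, o j := by
          rw [tsum_subtype (Wh K D) (fun j => if j ∈ Jk K N D E k then o j else 0), tsum_subtype (Jk K N D E k) o]
          refine tsum_congr fun j => ?_
          by_cases hj : j ∈ Jk K N D E k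
          · rw [indicator_of_mem hj, indicator_of_mem hj.1, if_pos hj]
          · rw [indicator_of_notMem hj, indicator_apply, if_neg hj, ite_self]
        rw [e2]
        refine (hC h hInt hS _ (fun j hj => hj.1)).trans ?_
        gcongr
        exact Jk_vol hN h hE k
    _ = ∑' k : ℕ, (L * C1 * (ENNReal.ofReal (5 ^ n) * 2) ^ e * S * volume E ^ e) * r ^ k := by
        refine tsum_congr fun k => ?_
        have : ENNReal.ofReal (5 ^ n) * (2 ^ (k + 1) * volume E) = (ENNReal.ofReal (5 ^ n) * 2) * (volume E * 2 ^ k) := by ring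
        have hk : ((2:ℝ≥0∞) ^ k) ^ e = (2 ^ e) ^ k := by
          rw [← ENNReal.rpow_natCast, ← ENNReal.rpow_natCast, ← ENNReal.rpow_mul, ← ENNReal.rpow_mul, mul_comm]
        rw [this, ENNReal.mul_rpow_of_nonneg _ (volume E * 2 ^ k) he0, ENNReal.mul_rpow_of_nonneg _ (2 ^ k) he0, hr, mul_pow, hk]
        ring
    _ = _ := by
        rw [ENNReal.tsum_mul_left, ENNReal.tsum_geometric]; ring

end JP

namespace JP
open Filter Topology
variable {n : ℕ}

theorem th_exists (n : ℕ) {e : ℝ} (he1 : e < 1) : ∃ th : ℝ≥0∞, th < 1 ∧ th ≠ 0 ∧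
    2 * (ENNReal.ofReal (2 ^ n) * th) * th⁻¹ ^ e ≤ 1 := by
  set A : ℝ≥0∞ := 2 * ENNReal.ofReal (2 ^ n) with hA
  have hA1 : 1 < A := by
    have : (1:ℝ≥0∞) ≤ ENNReal.ofReal (2 ^ n) := by
      rw [ENNReal.one_le_ofReal]; exact one_le_pow₀ (by norm_num)
    calc (1:ℝ≥0∞) < 2 * 1 := by norm_num
      _ ≤ A := by rw [hA]; gcongr
  have hAt : A ≠ ∞ := ENNReal.mul_ne_top (by simp) ENNReal.ofReal_ne_top
  have hA0 : A ≠ 0 := (zero_lt_one.trans hA1).ne'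
  have hpos : 0 < 1 / (1 - e) := by apply one_div_pos.2; linarith
  have h0 : A⁻¹ ^ (1 / (1 - e)) ≠ 0 := by
    rw [Ne, ENNReal.rpow_eq_zero_iff]
    simp [hAt, hA0]
  have h1 : A⁻¹ ^ (1 / (1 - e)) < 1 := ENNReal.rpow_lt_one (ENNReal.inv_lt_one.2 hA1) hpos
  refine ⟨A⁻¹ ^ (1 / (1 - e)), h1, h0, ?_⟩
  set th := A⁻¹ ^ (1 / (1 - e)) with hth
  have h2 : th * th⁻¹ ^ e = th ^ (1 - e) := by
    rw [ENNReal.inv_rpow, ← ENNReal.rpow_neg, sub_eq_add_neg, ENNReal.rpow_add _ _ h0 h1.ne_top, ENNReal.rpow_one]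
  have h3 : th ^ (1 - e) = A⁻¹ := by
    rw [hth, ← ENNReal.rpow_mul, one_div_mul_cancel (by linarith), ENNReal.rpow_one]
  calc 2 * (ENNReal.ofReal (2 ^ n) * th) * th⁻¹ ^ e = A * (th * th⁻¹ ^ e) := by rw [hA]; ring
    _ = 1 := by rw [h2, h3, ENNReal.mul_inv_cancel hA0 hAt]
    _ ≤ 1 := le_rfl

/-- chain condition with centre `x0` -/
def Chn (N : ℝ) (D : Set (X n)) (x0 : X n) : Prop :=
  ∀ x ∈ D, ∃ l : ℝ, 0 ≤ l ∧ ∃ γ : ℝ → X n, ContinuousOn γ (Icc 0 l) ∧ (∀ t ∈ Icc 0 l, γ t ∈ D) ∧ γ 0 = x ∧ γ l = x0 ∧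
    ∀ t ∈ Icc 0 l, dist (γ 0) (γ t) ≤ N * infDist (γ t) Dᶜ

theorem X_int {κ δ p K N : ℝ} (hn : 1 ≤ n) (hκ : 1 ≤ κ) (hδ : 0 ≤ δ) (hp : 1 ≤ p) (hKκ : 100 * κ ≤ K) (hN : 0 ≤ N)
    (he1 : 1 - 1 / p + δ / n < 1) :
    ∃ C : ℝ≥0∞, C ≠ ∞ ∧ ∀ {D : Set (X n)} (_ : Dom K D) {u : X n → ℝ} (_ : Measurable u) (_ : IntegrableOn u D)
    {S : ℝ≥0∞} (_ : HS κ δ p D u S) {x0 : X n} (_ : Chn N D x0), ∃ a : ℝ, ∀ {E : Set (X n)} (_ : MeasurableSet E) (_ : E ⊆ D),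
      ∫⁻ x in E, ‖u x - a‖ₑ ≤ C * S * volume E ^ (1 - 1 / p + δ / n) := by
  have he0 : 0 ≤ 1 - 1 / p + δ / n := by
    have : 1 / p ≤ 1 := by rw [div_le_one (by linarith)]; exact hp
    have : 0 ≤ δ / n := by positivity
    linarith
  have hK1 : 100 ≤ K := by linarith
  set N' := N * (2 * K + 2) + 1 with hN'
  have hN1 : 1 ≤ N' := by
    have : 0 ≤ N * (2 * K + 2) := by positivity
    linarith
  obtain ⟨C1, hC1, hC⟩ := global_sum (n := n) hκ hδ hp hKκ hN1 he1
  obtain ⟨th, hth1, hth0, hth2⟩ := th_exists n he1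
  set e := 1 - 1 / p + δ / n with he
  set C2 := 2 * ENNReal.ofReal (1 + 4 ^ n) with hC2
  refine ⟨2 * th⁻¹ ^ e + C2 * C1, ?_, ?_⟩
  · refine ENNReal.add_ne_top.2 ⟨ENNReal.mul_ne_top (by simp) (ENNReal.rpow_ne_top_of_nonneg he0 (by simpa using hth0)), ?_⟩
    exact ENNReal.mul_ne_top (ENNReal.mul_ne_top (by simp) ENNReal.ofReal_ne_top) hC1
  intro D h u hu hInt S hS x0 hx0
  refine ⟨uW K D u x0, fun {E} hE hED => ?_⟩
  set B : I n → Set (X n) := fun j => closedBall (ctr j) (N' * side j) with hB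
  set F : X n → ℝ≥0∞ := fun x => ∑' j : Wh K D, bc u j * (B j).indicator 1 x with hF
  have hind : ∀ j : Wh K D, Measurable fun x => (B j).indicator (1 : X n → ℝ≥0∞) x := fun j =>
    measurable_one.indicator measurableSet_closedBall
  have hFm : Measurable F := Measurable.tsum fun j => (hind j).const_mul _
  have hpt : ∀ x ∈ E, ‖u x - uW K D u x0‖ₑ ≤ ‖u x - uW K D u x‖ₑ + C2 * F x := by
    intro x hx
    obtain ⟨l, hl, γ, hγ, hγD, h0, h1, hd⟩ := hx0 x (hED hx)
    have := chain h hInt hl hγ hγD hN hd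
    rw [h0, h1] at this
    have e1 : u x - uW K D u x0 = (u x - uW K D u x) + (uW K D u x - uW K D u x0) := by ring
    rw [e1]
    exact (enorm_add_le _ _).trans (add_le_add le_rfl this)
  calc ∫⁻ x in E, ‖u x - uW K D u x0‖ₑ ≤ ∫⁻ x in E, (‖u x - uW K D u x‖ₑ + C2 * F x) :=
        setLIntegral_mono' hE hpt
    _ = (∫⁻ x in E, ‖u x - uW K D u x‖ₑ) + C2 * ∑' j : Wh K D, bc u j * volume (E ∩ B j) := by
        rw [lintegral_add_right _ (hFm.const_mul _), lintegral_const_mul _ hFm, hF,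
          lintegral_tsum fun j => ((hind j).const_mul _).aemeasurable]
        congr 2
        refine tsum_congr fun j => ?_
        rw [lintegral_const_mul _ (hind j), lintegral_indicator_one measurableSet_closedBall,
          Measure.restrict_apply measurableSet_closedBall, inter_comm]
    _ ≤ 2 * S * (th⁻¹ * volume E) ^ e + C2 * (C1 * S * volume E ^ e) := by
        gcongr
        · exact local_main hn hκ hδ hp hKκ h hu hInt hS hth1 hth0 hth2 hE hED
        · exact hC h hInt hS hE
    _ = _ := by rw [ENNReal.mul_rpow_of_nonneg _ _ he0]; ring

theorem X_main {κ δ p K N : ℝ} (hn : 1 ≤ n) (hκ : 1 ≤ κ) (hδ : 0 ≤ δ) (hp : 1 ≤ p) (hKκ : 100 * κ ≤ K) (hN : 0 ≤ N)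
    (hpn : δ * p < n) :
    ∃ C : ℝ, 0 < C ∧ ∀ {D : Set (X n)} (_ : Dom K D) {u : X n → ℝ} (_ : Measurable u) (_ : IntegrableOn u D)
    {S : ℝ≥0∞} (_ : HS κ δ p D u S) {x0 : X n} (_ : Chn N D x0), ∃ a : ℝ, ∀ t : ℝ, 0 < t →
      volume {x ∈ D | t < |u x - a|} * ENNReal.ofReal (t ^ ((n:ℝ) * p / ((n:ℝ) - δ * p))) ≤
        ENNReal.ofReal C * S ^ ((n:ℝ) * p / ((n:ℝ) - δ * p)) := by
  have hn0 : (0:ℝ) < n := by exact_mod_cast hn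
  have hp0 : 0 < p := by linarith
  set q := (n:ℝ) * p / ((n:ℝ) - δ * p) with hq
  have hq0 : 0 < q := div_pos (by positivity) (by linarith)
  have heq : (1 - (1 - 1 / p + δ / n)) * q = 1 := by
    have : (n:ℝ) - δ * p > 0 := by linarith
    have e1 : 1 - (1 - 1 / p + δ / n) = (n - δ * p) / (n * p) := by field_simp; ring
    rw [hq, e1, div_mul_div_comm, mul_comm, div_self (by positivity)]
  have he1 : 1 - 1 / p + δ / n < 1 := by
    by_contra! hlt
    nlinarith
  obtain ⟨C1, hC1, hC⟩ := X_int hn hκ hδ hp hKκ hN he1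
  set e := 1 - 1 / p + δ / n with he
  have hCt : C1 ^ q ≠ ∞ := ENNReal.rpow_ne_top_of_nonneg hq0.le hC1
  refine ⟨(C1 ^ q).toReal + 1, by positivity, ?_⟩
  intro D h u hu hInt S hS x0 hx0
  obtain ⟨a, ha⟩ := hC h hu hInt hS hx0
  refine ⟨a, fun t ht => ?_⟩
  set E := {x ∈ D | t < |u x - a|} with hE
  have hm : Measurable fun x => |u x - a| := by
    simpa [Real.norm_eq_abs] using (hu.sub_const a).norm
  have hEm : MeasurableSet E := h.op.measurableSet.inter (measurableSet_lt measurable_const hm)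
  have hED : E ⊆ D := fun x hx => hx.1
  have h1 := ha hEm hED
  have hVt : volume E ≠ ∞ := ((measure_mono hED).trans_lt h.bd.measure_lt_top).ne
  by_cases hV0 : volume E = 0
  · rw [hV0, zero_mul]; exact zero_le
  have h2 : ENNReal.ofReal t * volume E ≤ ∫⁻ x in E, ‖u x - a‖ₑ := by
    rw [← setLIntegral_const]
    refine setLIntegral_mono' hEm fun x hx => ?_
    rw [Real.enorm_eq_ofReal_abs]
    exact ENNReal.ofReal_le_ofReal hx.2.le
  have h3 := h2.trans h1
  have hVe : volume E ^ e * volume E ^ (-e) = 1 := by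
    rw [← ENNReal.rpow_add _ _ hV0 hVt]; simp
  have h4 : ENNReal.ofReal t * volume E ^ (1 - e) ≤ C1 * S := by
    calc ENNReal.ofReal t * volume E ^ (1 - e) = (ENNReal.ofReal t * volume E) * volume E ^ (-e) := by
          rw [sub_eq_add_neg, ENNReal.rpow_add _ _ hV0 hVt, ENNReal.rpow_one, mul_assoc]
      _ ≤ (C1 * S * volume E ^ e) * volume E ^ (-e) := by gcongr
      _ = C1 * S := by rw [mul_assoc, hVe, mul_one]
  have h5 := ENNReal.rpow_le_rpow h4 hq0.le
  rw [ENNReal.mul_rpow_of_nonneg _ _ hq0.le, ENNReal.mul_rpow_of_nonneg _ _ hq0.le, ← ENNReal.rpow_mul, heq, ENNReal.rpow_one,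
    ENNReal.ofReal_rpow_of_pos ht] at h5
  rw [mul_comm]
  refine h5.trans ?_
  gcongr
  rw [ENNReal.le_ofReal_iff_toReal_le hCt (by positivity)]
  linarith

end JP

namespace JP
open Filter Topology
variable {n : ℕ}

/-- John centre -/
theorem john_center {c : ℝ} (hc : 1 ≤ c) {D : Set (Eucl n)} (hJ : IsJohnDomain n c D) (hb : Bornology.IsBounded D)
    (hd0 : 0 < diam D) :
    ∃ x0 : Eucl n, ∀ x ∈ D, ∃ l : ℝ, 0 ≤ l ∧ ∃ γ : ℝ → Eucl n, ContinuousOn γ (Icc 0 l) ∧ (∀ t ∈ Icc 0 l, γ t ∈ D) ∧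
      γ 0 = x ∧ γ l = x0 ∧ ∀ t ∈ Icc 0 l, dist (γ 0) (γ t) ≤ (4 * c * (1 + c)) * infDist (γ t) (frontier D) := by
  obtain ⟨hop, hcon, hcur⟩ := hJ
  have hc0 : 0 < c := by linarith
  set d := diam D with hd
  obtain ⟨a, ha, b, hb', hab⟩ : ∃ a ∈ D, ∃ b ∈ D, d / 2 < dist a b := by
    by_contra! hlt
    have := diam_le_of_forall_dist_le (by positivity) hlt
    linarith
  obtain ⟨l0, hl0, γ0, h0, h1, hin, hlip, hdist⟩ := hcur a ha b hb'
  have hl0d : d / 2 ≤ l0 := by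
    have := hlip.dist_le_mul 0 (left_mem_Icc.2 hl0) l0 (right_mem_Icc.2 hl0)
    rw [h0, h1, Real.dist_eq, zero_sub, abs_neg, abs_of_nonneg hl0] at this
    simp at this
    linarith
  have hmid : l0 / 2 ∈ Icc 0 l0 := ⟨by linarith, by linarith⟩
  have hx0D := hin _ hmid
  have hx0 : d / (4 * c) ≤ infDist (γ0 (l0 / 2)) (frontier D) := by
    refine le_trans ?_ (hdist _ hmid)
    have : l0 - l0 / 2 = l0 / 2 := by ring
    rw [this, min_self, div_le_div_iff₀ (by positivity) hc0]
    nlinarith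
  refine ⟨γ0 (l0 / 2), fun x hx => ?_⟩
  set x0 := γ0 (l0 / 2) with hx0'
  obtain ⟨l, hl, γ, g0, g1, gin, glip, gdist⟩ := hcur x hx x0 hx0D
  refine ⟨l, hl, γ, glip.continuousOn, gin, g0, g1, fun t ht => ?_⟩
  have hI := gdist t ht
  set J := infDist (γ t) (frontier D) with hJ
  have hJ0 : 0 ≤ J := infDist_nonneg
  have e1 : dist (γ 0) (γ t) ≤ t := by
    have := glip.dist_le_mul 0 (left_mem_Icc.2 hl) t ht
    rw [Real.dist_eq, zero_sub, abs_neg, abs_of_nonneg ht.1] at this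
    simpa using this
  have e2 : dist x0 (γ t) ≤ l - t := by
    have := glip.dist_le_mul l (right_mem_Icc.2 hl) t ht
    rw [Real.dist_eq, abs_of_nonneg (by linarith [ht.2]), g1] at this
    simpa using this
  have e3 : dist (γ 0) (γ t) ≤ d := dist_le_diam_of_mem hb (gin 0 (left_mem_Icc.2 hl)) (gin t ht)
  rw [div_le_iff₀ hc0] at hI
  rcases le_total t (l - t) with h | h
  · rw [min_eq_left h] at hI
    nlinarith [mul_nonneg hc0.le hJ0, mul_nonneg (mul_nonneg hc0.le hc0.le) hJ0]
  · rw [min_eq_right h] at hI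
    have e4 := infDist_le_infDist_add_dist (s := frontier D) (x := x0) (y := γ t)
    have e5 : d / (4 * c) ≤ (1 + c) * J := by linarith
    rw [div_le_iff₀ (by positivity)] at e5
    linarith

theorem dist_toLp_le (x y : X n) : dist (WithLp.toLp 2 x : Eucl n) (WithLp.toLp 2 y) ≤ Real.sqrt n * dist x y := by
  rw [EuclideanSpace.dist_eq]
  have : ∑ i, dist ((WithLp.toLp 2 x : Eucl n) i) ((WithLp.toLp 2 y : Eucl n) i) ^ 2 ≤ n * dist x y ^ 2 := by
    calc _ ≤ ∑ i : Fin n, dist x y ^ 2 := by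
          refine Finset.sum_le_sum fun i _ => ?_
          have := dist_le_pi_dist x y i
          gcongr
      _ = _ := by simp
  calc _ ≤ Real.sqrt (n * dist x y ^ 2) := Real.sqrt_le_sqrt this
    _ = _ := by rw [Real.sqrt_mul (by positivity), Real.sqrt_sq dist_nonneg]

theorem dist_le_toLp (x y : X n) : dist x y ≤ dist (WithLp.toLp 2 x : Eucl n) (WithLp.toLp 2 y) := by
  rw [dist_pi_le_iff dist_nonneg]
  intro i
  have := PiLp.dist_apply_le (p := 2) (WithLp.toLp 2 x : Eucl n) (WithLp.toLp 2 y) i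
  exact this

/-- the transferred domain -/
def tD (D : Set (Eucl n)) : Set (X n) := (WithLp.toLp 2) ⁻¹' D

theorem chn_of_john {c : ℝ} (hc : 1 ≤ c) {D : Set (Eucl n)} (hJ : IsJohnDomain n c D) (hb : Bornology.IsBounded D)
    (hd0 : 0 < diam D) (hne : (tD D)ᶜ.Nonempty) : ∃ x0 : X n, Chn (Real.sqrt n * (4 * c * (1 + c))) (tD D) x0 := by
  obtain ⟨x0, hx0⟩ := john_center hc hJ hb hd0
  refine ⟨WithLp.ofLp x0, fun x hx => ?_⟩
  obtain ⟨l, hl, γ, hγ, hin, h0, h1, hdist⟩ := hx0 (WithLp.toLp 2 x) hx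
  refine ⟨l, hl, fun t => WithLp.ofLp (γ t), (PiLp.continuous_ofLp 2 _).comp_continuousOn hγ, fun t ht => hin t ht, ?_, ?_, fun t ht => ?_⟩
  · simp only [h0]
  · simp only [h1]
  · have h2 := dist_le_toLp (WithLp.ofLp (γ 0)) (WithLp.ofLp (γ t))
    simp only [WithLp.toLp_ofLp] at h2
    refine h2.trans ((hdist t ht).trans ?_)
    have hDu : D ≠ univ := by
      rintro rfl
      obtain ⟨w, hw⟩ := hne
      exact hw (mem_univ (WithLp.toLp 2 w : Eucl n))
    have h3 : infDist (γ t) (frontier D) ≤ Real.sqrt n * infDist (WithLp.ofLp (γ t)) (tD D)ᶜ := by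
      obtain ⟨y, hy, hyd⟩ := exists_mem_frontier_infDist_compl_eq_dist (hin t ht) hDu
      refine (infDist_le_dist_of_mem hy).trans ?_
      rw [← hyd]
      obtain ⟨w, hw, hwd⟩ := exists_mem_closure_infDist_eq_dist hne (WithLp.ofLp (γ t))
      have hcl : IsClosed (tD D)ᶜ := (hJ.1.preimage (PiLp.continuous_toLp 2 _)).isClosed_compl
      rw [hcl.closure_eq] at hw
      rw [hwd]
      have := dist_toLp_le (WithLp.ofLp (γ t)) w
      refine le_trans ?_ this
      exact infDist_le_dist_of_mem hw
    have : 0 ≤ 4 * c * (1 + c) := by positivity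
    calc _ ≤ 4 * c * (1 + c) * (Real.sqrt n * infDist (WithLp.ofLp (γ t)) (tD D)ᶜ) := by gcongr
      _ = _ := by ring

end JP

namespace JP
open Filter Topology
variable {n : ℕ}

theorem mpLp : MeasurePreserving (WithLp.toLp 2 : X n → Eucl n) volume volume := PiLp.volume_preserving_toLp (Fin n)

theorem meLp : MeasurableEmbedding (WithLp.toLp 2 : X n → Eucl n) := (MeasurableEquiv.toLp 2 (X n)).measurableEmbedding

theorem cube_pre (z : X n) {r : ℝ} (hr : 0 ≤ r) : (WithLp.toLp 2) ⁻¹' (cube n (WithLp.toLp 2 z) r) = closedBall z r := by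
  ext y
  rw [mem_closedBall, dist_pi_le_iff hr]
  rfl

theorem cube_vol (z : X n) {r : ℝ} (hr : 0 ≤ r) : volume (cube n (WithLp.toLp 2 z) r) = volume (closedBall z r) := by
  rw [← cube_pre z hr]
  exact (mpLp.measure_preimage_emb meLp _).symm

theorem cube_meas (z : X n) {r : ℝ} (hr : 0 ≤ r) : MeasurableSet (cube n (WithLp.toLp 2 z) r) := by
  have := cube_pre z hr
  rw [← (MeasurableEquiv.toLp 2 (X n)).measurableSet_preimage]
  have h2 : (MeasurableEquiv.toLp 2 (X n)) ⁻¹' (cube n (WithLp.toLp 2 z) r) = closedBall z r := this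
  rw [h2]; exact measurableSet_closedBall

theorem aTerm_eq {δ : ℝ} {u : Eucl n → ℝ} {v : X n → ℝ} {D : Set (Eucl n)} 
    (hv : v =ᵐ[volume.restrict (tD D)] (u ∘ WithLp.toLp 2)) (hInt : IntegrableOn v (tD D))
    {z : X n} {r : ℝ} (hr : 0 < r) (hsub : closedBall z r ⊆ tD D) :
    ENNReal.ofReal (aTerm n δ u (WithLp.toLp 2 z) r) = nu δ v z r := by
  have hv' : v =ᵐ[volume.restrict (closedBall z r)] (u ∘ WithLp.toLp 2) := ae_restrict_of_ae_restrict_of_subset hsub hv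
  have hInt' := hInt.mono_set hsub
  have hI : ∀ g : Eucl n → ℝ, ∫ x in cube n (WithLp.toLp 2 z) r, g x = ∫ y in closedBall z r, g (WithLp.toLp 2 y) := by
    intro g
    rw [← cube_pre z hr.le]
    exact (mpLp.setIntegral_preimage_emb meLp g _).symm
  have hav : ⨍ y in cube n (WithLp.toLp 2 z) r, u y = ⨍ y in closedBall z r, v y := by
    rw [setAverage_eq, setAverage_eq, hI, Measure.real, Measure.real, cube_vol z hr.le]
    congr 1
    exact (integral_congr_ae hv').symm
  have hosc : ENNReal.ofReal (∫ x in cube n (WithLp.toLp 2 z) r, |u x - ⨍ y in cube n (WithLp.toLp 2 z) r, u y|) = osc v z r := by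
    rw [hI, hav]
    have : ∫ y in closedBall z r, |u (WithLp.toLp 2 y) - ⨍ y in closedBall z r, v y| =
        ∫ y in closedBall z r, ‖v y - ⨍ y in closedBall z r, v y‖ := by
      refine integral_congr_ae ?_
      filter_upwards [hv'] with y hy
      rw [hy, Real.norm_eq_abs]; rfl
    rw [this, ofReal_integral_norm_eq_lintegral_enorm]
    · rfl
    · exact hInt'.sub (integrableOn_const (vol_cb_top _ _))
  have hp : 0 < (volume (closedBall z r)).toReal := ENNReal.toReal_pos (vol_cb_ne z hr) (vol_cb_top z r)
  unfold aTerm nu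
  rw [ENNReal.ofReal_mul (by positivity), hosc, cube_vol z hr.le, ← ENNReal.ofReal_rpow_of_pos hp, ENNReal.ofReal_toReal (vol_cb_top z r)]

theorem HS_of {κ δ p : ℝ} (hκ : 1 ≤ κ) (hp : 1 ≤ p) {u : Eucl n → ℝ} {v : X n → ℝ} {D : Set (Eucl n)} 
    (hv : v =ᵐ[volume.restrict (tD D)] (u ∘ WithLp.toLp 2)) (hInt : IntegrableOn v (tD D)) :
    HS κ δ p (tD D) v (ASeminorm n κ δ p D u) := by
  intro T z r hT hd
  have hp0 : 0 < p := by linarith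
  set S := ASeminorm n κ δ p D u with hS
  set g : I n → Eucl n × ℝ := fun i => (WithLp.toLp 2 (z i), r i) with hg
  set 𝒬 : Set (Eucl n × ℝ) := Set.image g (T : Set _) with hQ
  have hsurj : ∀ c : Eucl n, WithLp.toLp 2 (WithLp.ofLp c) = c := fun c => rfl
  have hcsub : ∀ i ∈ T, cube n (WithLp.toLp 2 (z i)) (κ * r i) ⊆ D := by
    intro i hi x hx
    have h1 := (hT i hi).1
    have : WithLp.ofLp x ∈ (WithLp.toLp 2) ⁻¹' (cube n (WithLp.toLp 2 (z i)) (κ * r i)) := hx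
    rw [cube_pre _ (by positivity)] at this
    exact (hT i hi).2 this
  have hsub1 : ∀ i ∈ T, closedBall (z i) (r i) ⊆ tD D := fun i hi =>
    (closedBall_subset_closedBall (by have := (hT i hi).1; nlinarith)).trans (hT i hi).2
  have hcsub1 : ∀ i ∈ T, cube n (WithLp.toLp 2 (z i)) (r i) ⊆ D := by
    intro i hi x hx
    refine hcsub i hi fun l => (hx l).trans ?_
    have := (hT i hi).1; nlinarith
  have hcd : ∀ i ∈ T, ∀ j ∈ T, i ≠ j → cube n (WithLp.toLp 2 (z i)) (r i) ∩ cube n (WithLp.toLp 2 (z j)) (r j) = ∅ := by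
    intro i hi j hj hij
    have := hd hi hj hij
    rw [Function.onFun, ← cube_pre _ (hT i hi).1.le, ← cube_pre _ (hT j hj).1.le] at this
    by_contra hne
    obtain ⟨x, hx1, hx2⟩ := nonempty_iff_ne_empty.2 hne
    exact Set.disjoint_left.1 this (show WithLp.ofLp x ∈ _ from hx1) hx2
  set F : Eucl n → ℝ≥0∞ := fun x => (∑' c : 𝒬, (cube n (c : Eucl n × ℝ).1 (c : Eucl n × ℝ).2).indicator
          (fun _ => ENNReal.ofReal (aTerm n δ u (c : Eucl n × ℝ).1 (c : Eucl n × ℝ).2)) x) ^ p with hF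
  have h1 : (∫⁻ x in D, F x) ^ (1 / p) ≤ S := by
    rw [hS]; unfold ASeminorm
    refine le_iSup_of_le 𝒬 (le_iSup_of_le ?_ (le_iSup_of_le ?_ le_rfl))
    · rintro _ ⟨i, hi, rfl⟩
      exact ⟨(hT i hi).1, hcsub i hi⟩
    · rintro _ ⟨i, hi, rfl⟩ _ ⟨j, hj, rfl⟩ hne
      exact hcd i hi j hj (fun h => hne (by rw [h]))
  have h2 : ∫⁻ x in D, F x ≤ S ^ p := by
    have := ENNReal.rpow_le_rpow h1 hp0.le
    rwa [← ENNReal.rpow_mul, one_div_mul_cancel hp0.ne', ENNReal.rpow_one] at this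
  refine le_trans ?_ h2
  calc ∑ i ∈ T, nu δ v (z i) (r i) ^ p * volume (closedBall (z i) (r i)) 
      ≤ ∑ i ∈ T, ∫⁻ x in cube n (WithLp.toLp 2 (z i)) (r i), F x := by
        refine Finset.sum_le_sum fun i hi => ?_
        rw [← aTerm_eq hv hInt (hT i hi).1 (hsub1 i hi), ← cube_vol _ (hT i hi).1.le, ← setLIntegral_const]
        refine setLIntegral_mono' (cube_meas _ (hT i hi).1.le) fun x hx => ?_
        refine ENNReal.rpow_le_rpow ?_ hp0.le
        refine le_trans ?_ (ENNReal.le_tsum (⟨g i, mem_image_of_mem _ hi⟩ : 𝒬))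
        rw [indicator_of_mem hx]
    _ = ∫⁻ x in ⋃ i ∈ T, cube n (WithLp.toLp 2 (z i)) (r i), F x := by
        rw [lintegral_biUnion_finset (fun i hi j hj hij => Set.disjoint_iff_inter_eq_empty.2 (hcd i hi j hj hij))
          (fun i hi => cube_meas _ (hT i hi).1.le)]
    _ ≤ ∫⁻ x in D, F x := lintegral_mono_set (iUnion₂_subset hcsub1)

theorem final (n : ℕ) (hn : 2 ≤ n) (c : ℝ) (hc : 1 ≤ c) (κ : ℝ) (hκ : 1 ≤ κ)
    (δ p : ℝ) (hδ : δ ∈ Icc (0:ℝ) 1) (hp : 1 ≤ p) (hpn : δ * p < n) :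
    ∃ C : ℝ, 0 < C ∧
      ∀ D : Set (Eucl n), IsJohnDomain n c D → Bornology.IsBounded D →
        ∀ u : Eucl n → ℝ, IntegrableOn u D volume →
          (⨅ a : ℝ, ⨆ (t : ℝ) (_ : 0 < t),
              volume {x ∈ D | t < |u x - a|} *
                ENNReal.ofReal (t ^ ((n:ℝ) * p / ((n:ℝ) - δ * p))))
            ≤ ENNReal.ofReal C * ASeminorm n κ δ p D u ^ ((n:ℝ) * p / ((n:ℝ) - δ * p)) := by
  obtain ⟨C, hC0, hC⟩ := X_main (n := n) (κ := κ) (δ := δ) (p := p) (K := 100 * κ) (N := Real.sqrt n * (4 * c * (1 + c)))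
    (by omega) hκ hδ.1 hp le_rfl (by positivity) hpn
  refine ⟨C, hC0, fun D hJ hb u hu => ?_⟩
  have : Nonempty (Fin n) := ⟨⟨0, by omega⟩⟩
  have hopen : IsOpen (tD D) := hJ.1.preimage (PiLp.continuous_toLp 2 _)
  have hbd : Bornology.IsBounded (tD D) := by
    rw [Metric.isBounded_iff] at hb ⊢
    obtain ⟨R, hR⟩ := hb
    exact ⟨R, fun x hx y hy => (dist_le_toLp x y).trans (hR hx hy)⟩
  have hne : (tD D)ᶜ.Nonempty := by
    rw [nonempty_compl]
    intro h
    rw [h] at hbd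
    exact NormedSpace.unbounded_univ ℝ (X n) hbd
  have hd0 : 0 < diam D := by
    obtain ⟨x, hx⟩ := hJ.2.1.nonempty
    obtain ⟨ε, hε, hball⟩ := isOpen_iff.1 hJ.1 x hx
    have : (ball x ε).Nontrivial := by
      refine (infinite_of_mem_nhds x (ball_mem_nhds x hε)).nontrivial
    exact diam_pos (this.mono hball) hb
  have hDom : Dom (100 * κ) (tD D) := ⟨by linarith, hopen, hbd, hne⟩
  obtain ⟨x0, hx0⟩ := chn_of_john hc hJ hb hd0 hne
  have hui : IntegrableOn (u ∘ WithLp.toLp 2) (tD D) := (mpLp.integrableOn_comp_preimage meLp).2 hu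
  have hum := hui.1
  set v := hum.mk _ with hv
  have hvm : Measurable v := hum.stronglyMeasurable_mk.measurable
  have hvae : v =ᵐ[volume.restrict (tD D)] (u ∘ WithLp.toLp 2) := hum.ae_eq_mk.symm
  have hvi : IntegrableOn v (tD D) := hui.congr hvae.symm
  obtain ⟨a, ha⟩ := hC hDom hvm hvi (HS_of (κ := κ) (δ := δ) hκ hp hvae hvi) hx0
  refine iInf_le_of_le a (iSup₂_le fun t ht => ?_)
  refine le_trans (le_of_eq ?_) (ha t ht)
  congr 1
  rw [← mpLp.measure_preimage_emb meLp]
  refine measure_congr ?_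
  have h3 := (ae_restrict_iff' hopen.measurableSet).1 hvae
  filter_upwards [h3] with y hy
  apply propext
  change (y ∈ tD D ∧ t < |u (WithLp.toLp 2 y) - a|) ↔ (y ∈ tD D ∧ t < |v y - a|)
  refine and_congr_right fun hyD => ?_
  rw [hy hyD]; rfl

end JP

/-- For a bounded `c`-John domain `D ⊆ ℝⁿ`, `n ≥ 2`, `κ ≥ 1`,
`δ ∈ [0,1]`, `1 ≤ p` with `δp < n` and `q = np/(n-δp)`, there is
`C = C(n,κ,p,δ,c)` such that
`inf_a sup_{t>0} |{x ∈ D : |u x - a| > t}| t^q ≤ C |u|_{A^{δ,p}_κ(D)}^q`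
for every `u ∈ L¹(D)`. -/
theorem statement5 (n : ℕ) (hn : 2 ≤ n) (c : ℝ) (hc : 1 ≤ c) (κ : ℝ) (hκ : 1 ≤ κ)
    (δ p : ℝ) (hδ : δ ∈ Icc (0:ℝ) 1) (hp : 1 ≤ p) (hpn : δ * p < n) :
    ∃ C : ℝ, 0 < C ∧
      ∀ D : Set (Eucl n), IsJohnDomain n c D → Bornology.IsBounded D →
        ∀ u : Eucl n → ℝ, IntegrableOn u D volume →
          (⨅ a : ℝ, ⨆ (t : ℝ) (_ : 0 < t),
              volume {x ∈ D | t < |u x - a|} *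
                ENNReal.ofReal (t ^ ((n:ℝ) * p / ((n:ℝ) - δ * p))))
            ≤ ENNReal.ofReal C * ASeminorm n κ δ p D u ^ ((n:ℝ) * p / ((n:ℝ) - δ * p)) := by
  exact JP.final n hn c hc κ hκ δ p hδ hp hpn
end
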